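/- Let G be a connected vertex-transitive non-bipartite simple graph of even order at least 6, and let k be its common vertex degree. Then G is 4-factor-critical if and only if k ≥ 5. -/

import Mathlib

open SimpleGraph

section Defs

variable {V : Type*}

/-- A simple graph is vertex-transitive if any vertex can be mapped to any other
by a graph automorphism. -/
def VertexTransitive (G : SimpleGraph V) : Prop :=
  ∀ x y : V, ∃ φ : G ≃g G, φ x = y

/-- A graph is `p`-factor-critical if the removal of any set of `p` vertices
results in a graph with a perfect matching. -/
def PFactorCritical (G : SimpleGraph V) (p : ℕ) : Prop :=
  ∀ X : Set V, X.ncard = p → ∃ M : (G.induce Xᶜ).Subgraph, M.IsPerfectMatching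

/-- A graph is factor-critical if the removal of any single vertex results in a
graph with a perfect matching. -/
def IsFactorCritical {W : Type*} (H : SimpleGraph W) : Prop :=
  ∀ v : W, ∃ M : (H.induce ({v}ᶜ : Set W)).Subgraph, M.IsPerfectMatching

/-- `∇(X)`: the set of edges of `G` with exactly one end in `X`. -/
def edgeBoundary (G : SimpleGraph V) (X : Set V) : Set (Sym2 V) :=
  {e | e ∈ G.edgeSet ∧ ∃ x ∈ X, ∃ y ∈ Xᶜ, e = s(x, y)}

/-- The set of edges of `G` with both ends in `X`. -/
def edgesWithin (G : SimpleGraph V) (X : Set V) : Set (Sym2 V) :=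
  {e | e ∈ G.edgeSet ∧ ∀ v ∈ e, v ∈ X}

/-- The set of edges of `G` with one end in `A` and the other end in `S \ A`
(i.e. the edge boundary of `A` inside the induced subgraph `G[S]` when `A ⊆ S`). -/
def inducedEdgeBoundary (G : SimpleGraph V) (S A : Set V) : Set (Sym2 V) :=
  {e | e ∈ G.edgeSet ∧ ∃ x ∈ A, ∃ y ∈ S \ A, e = s(x, y)}

/-- `F` is an `s`-restricted edge-cut of `G` if deleting `F` disconnects `G` and
every component of `G − F` has at least `s` vertices. -/
def IsRestrictedEdgeCut (G : SimpleGraph V) (s : ℕ) (F : Set (Sym2 V)) : Prop :=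
  F ⊆ G.edgeSet ∧ ¬ (G.deleteEdges F).Connected ∧
    ∀ c : (G.deleteEdges F).ConnectedComponent, s ≤ c.supp.ncard

/-- `λ_s(G)`: the minimum cardinality of an `s`-restricted edge-cut of `G`. -/
noncomputable def lambdaS (G : SimpleGraph V) (s : ℕ) : ℕ :=
  sInf (Set.ncard '' {F | IsRestrictedEdgeCut G s F})

/-- A `λ_s`-fragment: a vertex set whose edge boundary is an `s`-restricted
edge-cut of minimum cardinality `λ_s(G)`. -/
def IsLambdaFragment (G : SimpleGraph V) (s : ℕ) (X : Set V) : Prop :=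
  IsRestrictedEdgeCut G s (edgeBoundary G X) ∧ (edgeBoundary G X).ncard = lambdaS G s

/-- A `λ_s`-atom: a `λ_s`-fragment of minimum cardinality. -/
def IsLambdaAtom (G : SimpleGraph V) (s : ℕ) (X : Set V) : Prop :=
  IsLambdaFragment G s X ∧ ∀ Y : Set V, IsLambdaFragment G s Y → X.ncard ≤ Y.ncard

/-- The odd girth of `G`: the length of a shortest odd cycle of `G`. -/
noncomputable def oddGirth (G : SimpleGraph V) : ℕ :=
  sInf {n | Odd n ∧ ∃ (v : V) (c : G.Walk v v), c.IsCycle ∧ c.length = n}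

/-- `X` is an independent set of `G`. -/
def IsIndependentSet (G : SimpleGraph V) (X : Set V) : Prop :=
  ∀ x ∈ X, ∀ y ∈ X, ¬ G.Adj x y

/-- The independence number `α(G)`. -/
noncomputable def indepNum (G : SimpleGraph V) : ℕ :=
  sSup {n | ∃ X : Set V, IsIndependentSet G X ∧ X.ncard = n}

/-- The number of trivial (single-vertex) components of `G − X`. -/
noncomputable def trivialComponentCount (G : SimpleGraph V) (X : Set V) : ℕ :=
  {c : (G.induce Xᶜ).ConnectedComponent | c.supp.ncard = 1}.ncard

/-- The number of odd components of `G − X`. -/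
noncomputable def oddComponentCount (G : SimpleGraph V) (X : Set V) : ℕ :=
  {c : (G.induce Xᶜ).ConnectedComponent | Odd c.supp.ncard}.ncard

/-- The number of nontrivial components of `G − X`. -/
noncomputable def nontrivialComponentCount (G : SimpleGraph V) (X : Set V) : ℕ :=
  {c : (G.induce Xᶜ).ConnectedComponent | 2 ≤ c.supp.ncard}.ncard

/-- An imprimitive block of `G`: a proper non-empty vertex set that every
automorphism either fixes setwise or maps to a disjoint set. -/
def IsImprimitiveBlock (G : SimpleGraph V) (X : Set V) : Prop :=
  X.Nonempty ∧ X ≠ Set.univ ∧ ∀ φ : G ≃g G, (⇑φ) '' X = X ∨ ((⇑φ) '' X) ∩ X = ∅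

/-- A connected graph is `q`-extendable if it has a perfect matching and every
matching of size `q` is contained in a perfect matching. -/
def Extendable (G : SimpleGraph V) (q : ℕ) : Prop :=
  (∃ M : G.Subgraph, M.IsPerfectMatching) ∧
    ∀ M : G.Subgraph, M.IsMatching → M.edgeSet.ncard = q →
      ∃ P : G.Subgraph, P.IsPerfectMatching ∧ M ≤ P

end Defs

/-!
If removing four vertices leaves no perfect matching, then by Tutte's theorem and parity there is
a near barrier with at least four vertices: a set `S` such that `G - S` has `#S - 2` odd components.
Edge cuts of size less than `2k - 2` separating two nontrivial sides occur only when `G` consists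
of highly connected blocks joined by a perfect matching, so counting the edges leaving `S` shows
that `G - S` has exactly `#S - 2` components, at most three of them nontrivial; the bound
`3|S| ≥ 2(k + 1)` on separators provides isolated vertices.

Now choose `S` maximal under inclusion; its images under automorphisms are again maximal near
barriers, and uncrossing shows that two distinct ones share at most two vertices. As `2 < k`, an
isolated vertex determines its near barrier, so the isolated vertices of the images partition `V`
into blocks `A x`, whose neighbourhood is the image `S x`. If a block has `b` vertices and `G - S x`
has `q` nontrivial components, then `#(S x) = b + q + 2`, and double counting gives `b ∣ q + 2`,
leaving `b ∈ {1, 2, q + 2}`. If `b ≤ 2`, the near barriers of the vertices of a smallest nontrivial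
component contradict the connectivity of `G`. If `b = q + 2 = 3`, two distinct near barriers share
the three vertices of a block. If `b = q + 2 ≥ 4`, the blocks are completely joined in pairs, and a
pair has too few outgoing edges for two nontrivial components.
-/

namespace FactorCritical

open Finset
open scoped Pointwise

section EdgeCuts

variable {V : Type*} {G : SimpleGraph V} {k : ℕ}

theorem eq_univ_of_forall_adj [Fintype V] (hconn : G.Connected) {X : Finset V} (hX : X.Nonempty)
    (hclosed : ∀ x ∈ X, ∀ y, G.Adj x y → y ∈ X) : X = univ := by
  obtain ⟨x, hx⟩ := hX
  refine eq_univ_of_forall fun y => ?_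
  obtain ⟨w⟩ := hconn.preconnected x y
  induction w with
  | nil => exact hx
  | cons hadj _ ih => exact ih (hclosed _ hx _ hadj)

variable [DecidableRel G.Adj]

theorem card_interedges_comm (X Y : Finset V) : #(G.interedges X Y) = #(G.interedges Y X) :=
  haveI := G.symm
  Rel.card_interedges_comm X Y

theorem card_interedges_mono {X X' Y Y' : Finset V} (hX : X ⊆ X') (hY : Y ⊆ Y') :
    #(G.interedges X Y) ≤ #(G.interedges X' Y') :=
  card_le_card (G.interedges_mono hX hY)

theorem card_interedges_eq_zero_iff {X Y : Finset V} :
    #(G.interedges X Y) = 0 ↔ ∀ x ∈ X, ∀ y ∈ Y, ¬ G.Adj x y := by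
  simp only [card_eq_zero, eq_empty_iff_forall_notMem, Prod.forall, mk_mem_interedges_iff]
  exact ⟨fun h x hx y hy hxy => h x y ⟨hx, hy, hxy⟩, fun h x y hxy => h x hxy.1 y hxy.2.1 hxy.2.2⟩

theorem card_interedges_pos {X Y : Finset V} {x y : V} (hx : x ∈ X) (hy : y ∈ Y)
    (h : G.Adj x y) : 0 < #(G.interedges X Y) :=
  card_pos.2 ⟨(x, y), G.mk_mem_interedges_iff.2 ⟨hx, hy, h⟩⟩

theorem card_interedges_self_add_card_le (X : Finset V) :
    #(G.interedges X X) + #X ≤ #X * #X := by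
  classical
  have hoff : #(G.interedges X X) ≤ #X.offDiag := card_le_card fun e he => by
    rw [mem_interedges_iff] at he
    exact mem_offDiag.2 ⟨he.1, he.2.1, he.2.2.ne⟩
  have := Nat.le_mul_self #X
  rw [offDiag_card] at hoff
  omega

theorem card_interedges_union_right [DecidableEq V] {Y Z : Finset V} (h : Disjoint Y Z)
    (X : Finset V) :
    #(G.interedges X (Y ∪ Z)) = #(G.interedges X Y) + #(G.interedges X Z) := by
  rw [← card_union_of_disjoint (G.interedges_disjoint_right X h)]
  congr 1
  ext e
  simp only [mem_interedges_iff, mem_union]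
  tauto

theorem card_interedges_union_left [DecidableEq V] {Y Z : Finset V} (h : Disjoint Y Z)
    (X : Finset V) :
    #(G.interedges (Y ∪ Z) X) = #(G.interedges Y X) + #(G.interedges Z X) := by
  simp only [card_interedges_comm _ X, card_interedges_union_right h]

theorem card_interedges_biUnion_right [DecidableEq V] {ι : Type*} {I : Finset ι}
    {f : ι → Finset V} (h : (I : Set ι).PairwiseDisjoint f) (X : Finset V) :
    #(G.interedges X (I.biUnion f)) = ∑ i ∈ I, #(G.interedges X (f i)) := by
  rw [interedges_biUnion_right, card_biUnion]
  exact fun i hi j hj hij => G.interedges_disjoint_right X (h hi hj hij)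

theorem even_card_interedges_self (X : Finset V) : Even #(G.interedges X X) := by
  classical
  induction X using Finset.induction_on with
  | empty => simp
  | insert a s ha ih =>
    have hdisj : Disjoint {a} s := disjoint_singleton_left.2 ha
    have hloop : #(G.interedges {a} {a}) = 0 := card_interedges_eq_zero_iff.2 (by simp)
    rw [insert_eq, card_interedges_union_left hdisj, card_interedges_union_right hdisj,
      card_interedges_union_right hdisj, card_interedges_comm s {a}, hloop, zero_add, ← add_assoc]
    exact (Even.add_self _).add ih

variable [Fintype V]

theorem card_interedges_eq_sum [DecidableEq V] (X Y : Finset V) :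
    #(G.interedges X Y) = ∑ x ∈ X, #(G.neighborFinset x ∩ Y) := by
  rw [interedges_def, card_filter, sum_product]
  refine sum_congr rfl fun x _ => ?_
  rw [← card_filter, filter_congr (q := (· ∈ G.neighborFinset x)) (by simp), filter_mem_eq_inter,
    inter_comm]

theorem card_interedges_univ (hreg : G.IsRegularOfDegree k) (X : Finset V) :
    #(G.interedges X univ) = k * #X := by
  classical
  simp [card_interedges_eq_sum, hreg.degree_eq, mul_comm]

variable [DecidableEq V]

theorem card_compl_add_card (X : Finset V) : #Xᶜ + #X = Fintype.card V := by
  rw [add_comm, card_add_card_compl]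

theorem card_interedges_add_compl (X Y : Finset V) :
    #(G.interedges X Y) + #(G.interedges X Yᶜ) = #(G.interedges X univ) := by
  rw [← card_interedges_union_right disjoint_compl_right, union_compl]

variable (G) in
/-- The number `|∇(X)|` of edges with exactly one end in `X`. -/
def cutSize (X : Finset V) : ℕ := #(G.interedges X Xᶜ)

theorem cutSize_add_card_interedges_self (hreg : G.IsRegularOfDegree k) (X : Finset V) :
    cutSize G X + #(G.interedges X X) = k * #X := by
  rw [← card_interedges_univ hreg, ← card_interedges_add_compl X X, add_comm, cutSize]

theorem cutSize_compl (X : Finset V) : cutSize G Xᶜ = cutSize G X := by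
  rw [cutSize, cutSize, compl_compl, card_interedges_comm]

theorem mul_card_add_card_le_cutSize (hreg : G.IsRegularOfDegree k) (X : Finset V) :
    k * #X + #X ≤ cutSize G X + #X * #X := by
  have := cutSize_add_card_interedges_self hreg X
  have := card_interedges_self_add_card_le (G := G) X
  omega

theorem cutSize_inter_add_cutSize_union_le (X Y : Finset V) :
    cutSize G (X ∩ Y) + cutSize G (X ∪ Y) ≤ cutSize G X + cutSize G Y := by
  have cutSize_eq (Z : Finset V) :
      cutSize G Z = ∑ e : V × V, if e.1 ∈ Z ∧ e.2 ∉ Z ∧ G.Adj e.1 e.2 then 1 else 0 := by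
    rw [← card_filter, cutSize]
    congr 1
    ext
    simp [mem_interedges_iff]
  simp only [cutSize_eq, ← sum_add_distrib]
  refine sum_le_sum fun e _ => ?_
  by_cases e.1 ∈ X <;> by_cases e.1 ∈ Y <;> by_cases e.2 ∈ X <;> by_cases e.2 ∈ Y <;>
    by_cases G.Adj e.1 e.2 <;> simp [*]

theorem cutSize_sdiff_add_cutSize_sdiff_le (X Y : Finset V) :
    cutSize G (X \ Y) + cutSize G (Y \ X) ≤ cutSize G X + cutSize G Y := by
  have h := cutSize_inter_add_cutSize_union_le (G := G) X Yᶜ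
  rwa [cutSize_compl Y, ← sdiff_eq_inter_compl, show X ∪ Yᶜ = (Y \ X)ᶜ by ext; simp; tauto,
    cutSize_compl] at h

theorem cutSize_pos (hconn : G.Connected) {X : Finset V} (hX : X.Nonempty) (hX' : X ≠ univ) :
    0 < cutSize G X := by
  contrapose! hX'
  refine eq_univ_of_forall_adj hconn hX fun x hx y hxy => ?_
  by_contra hy
  exact (card_interedges_pos hx (mem_compl.2 hy) hxy).not_ge hX'

end EdgeCuts

section Blocks

variable {M V : Type*} [Group M] [MulAction M V] [DecidableEq V]

variable (M) in
/-- An `M`-invariant partition of `V` into finite blocks, encoded by the function `A` that sends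
each point to the block containing it. -/
structure IsBlockMap (A : V → Finset V) : Prop where
  mem_self : ∀ x, x ∈ A x
  eq_of_mem : ∀ {x y}, y ∈ A x → A y = A x
  smul : ∀ (g : M) x, A (g • x) = g • A x

theorem IsBlockMap.mem_comm {A : V → Finset V} (hA : IsBlockMap M A) {x y : V} :
    y ∈ A x ↔ x ∈ A y :=
  ⟨fun h => hA.eq_of_mem h ▸ hA.mem_self x, fun h => hA.eq_of_mem h ▸ hA.mem_self y⟩

theorem IsBlockMap.disjoint_of_notMem {A : V → Finset V} (hA : IsBlockMap M A) {x y : V}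
    (h : y ∉ A x) : Disjoint (A x) (A y) :=
  disjoint_left.2 fun _ hx hy => h <| hA.eq_of_mem hx ▸ hA.mem_comm.1 hy

theorem IsBlockMap.sum_card_inter_image {A : V → Finset V} (hA : IsBlockMap M A) (Z : Finset V) :
    ∑ B ∈ Z.image A, #(B ∩ Z) = #Z := by
  rw [card_eq_sum_card_image A Z]
  refine sum_congr rfl fun B hB => ?_
  obtain ⟨y, -, rfl⟩ := mem_image.1 hB
  congr 1
  ext z
  rw [mem_inter, mem_filter]
  exact ⟨fun hz => ⟨hz.2, hA.eq_of_mem hz.1⟩, fun hz => ⟨hz.2 ▸ hA.mem_self z, hz.1⟩⟩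

theorem IsBlockMap.card_image_mul {A : V → Finset V} (hA : IsBlockMap M A) {b : ℕ} {Z : Finset V}
    (hZ : ∀ z ∈ Z, A z ⊆ Z) (hb : ∀ z, #(A z) = b) : #(Z.image A) * b = #Z := by
  rw [← hA.sum_card_inter_image Z, sum_const_nat fun B hB => ?_]
  obtain ⟨y, hy, rfl⟩ := mem_image.1 hB
  rw [inter_eq_left.2 (hZ y hy), hb]

theorem IsBlockMap.dvd_card {A : V → Finset V} (hA : IsBlockMap M A) {b : ℕ} {Z : Finset V}
    (hZ : ∀ z ∈ Z, A z ⊆ Z) (hb : ∀ z, #(A z) = b) : b ∣ #Z :=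
  Dvd.intro_left _ (hA.card_image_mul hZ hb)

theorem exists_isBlockMap [MulAction.IsPretransitive M V] {X : Finset V} (hX : X.Nonempty)
    (hblock : ∀ g : M, (X ∩ g • X).Nonempty → g • X = X) :
    ∃ A : V → Finset V, IsBlockMap M A ∧ (∀ x, ∃ g : M, A x = g • X) ∧ ∀ x ∈ X, A x = X := by
  obtain ⟨x₀, hx₀⟩ := hX
  choose g hg using fun x : V => MulAction.exists_smul_eq M x₀ x
  have smul_eq_of_mem {a b : M} {z : V} (ha : z ∈ a • X) (hb : z ∈ b • X) : a • X = b • X := by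
    have := hblock (a⁻¹ * b) ⟨a⁻¹ • z, mem_inter.2 ⟨?_, ?_⟩⟩
    · rwa [mul_smul, inv_smul_eq_iff, eq_comm] at this
    · exact inv_smul_mem_iff.2 ha
    · simpa [mul_smul] using hb
  have mem_block (x : V) : x ∈ g x • X := by
    simpa [hg] using smul_mem_smul_finset (a := g x) hx₀
  refine ⟨fun x => g x • X, ⟨mem_block, fun h => smul_eq_of_mem (mem_block _) h, fun a x => ?_⟩,
    fun x => ⟨g x, rfl⟩, fun x hx => ?_⟩
  · rw [smul_smul]
    exact smul_eq_of_mem (mem_block _) (mul_smul a _ X ▸ smul_mem_smul_finset (mem_block x))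
  · exact (smul_eq_of_mem (b := 1) (mem_block x) (by simpa using hx)).trans (one_smul M X)

theorem card_filter_mem_eq_card [Fintype V] [MulAction.IsPretransitive M V] {F : V → Finset V}
    (hF : ∀ (g : M) x, F (g • x) = g • F x) (v w : V) : #{x | w ∈ F x} = #(F v) := by
  have card_F_eq (x : V) : #(F x) = #(F v) := by
    obtain ⟨g, rfl⟩ := MulAction.exists_smul_eq M v x
    rw [hF, card_smul_finset]
  have card_filter_eq (z : V) : #{x | z ∈ F x} = #{x | w ∈ F x} := by
    obtain ⟨g, rfl⟩ := MulAction.exists_smul_eq M z w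
    refine card_equiv (MulAction.toPerm g) fun x => ?_
    simp [hF]
  have := sum_card_bipartiteAbove_eq_sum_card_bipartiteBelow (fun x z : V => z ∈ F x)
    (s := univ) (t := univ)
  simp only [bipartiteAbove, bipartiteBelow, filter_mem_eq_inter, univ_inter, card_F_eq,
    card_filter_eq, sum_const, smul_eq_mul] at this
  exact (Nat.eq_of_mul_eq_mul_left (card_pos.2 ⟨v, mem_univ v⟩) this).symm

theorem IsBlockMap.dvd_card_of_equivariant [Finite V] [MulAction.IsPretransitive M V]
    {A F : V → Finset V} (hA : IsBlockMap M A) (hF : ∀ (g : M) x, F (g • x) = g • F x)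
    (hconst : ∀ x, ∀ y ∈ A x, F y = F x) {b : ℕ} (hb : ∀ x, #(A x) = b) (v : V) : b ∣ #(F v) := by
  have := Fintype.ofFinite V
  rw [← card_filter_mem_eq_card hF v v]
  refine hA.dvd_card (fun x hx y hy => mem_filter.2 ⟨mem_univ y, ?_⟩) hb
  rw [hconst x y hy]
  exact (mem_filter.1 hx).2

end Blocks

theorem smul_finset_compl {M V : Type*} [Group M] [MulAction M V] [Fintype V] [DecidableEq V]
    (g : M) (X : Finset V) : g • Xᶜ = (g • X)ᶜ := by
  rw [compl_eq_univ_sdiff, smul_finset_sdiff, smul_finset_univ, compl_eq_univ_sdiff]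

theorem smul_adj_smul_iff {V : Type*} {G : SimpleGraph V} (φ : G ≃g G) {v w : V} :
    G.Adj (φ • v) (φ • w) ↔ G.Adj v w :=
  φ.map_adj_iff

section Automorphisms

variable {V : Type*} [DecidableEq V] {G : SimpleGraph V} [DecidableRel G.Adj]

theorem card_interedges_smul (φ : G ≃g G) (X Y : Finset V) :
    #(G.interedges (φ • X) (φ • Y)) = #(G.interedges X Y) := by
  rw [← card_smul_finset φ (G.interedges X Y)]
  congr 1
  ext e
  rw [← inv_smul_mem_iff, mem_interedges_iff, mem_interedges_iff, ← smul_adj_smul_iff φ⁻¹,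
    ← inv_smul_mem_iff, ← inv_smul_mem_iff, Prod.smul_fst, Prod.smul_snd]

variable [Fintype V]

theorem neighborFinset_smul (φ : G ≃g G) (v : V) :
    G.neighborFinset (φ • v) = φ • G.neighborFinset v := by
  ext w
  rw [← inv_smul_mem_iff, mem_neighborFinset, mem_neighborFinset,
    ← smul_adj_smul_iff φ (w := φ⁻¹ • w), smul_inv_smul]

theorem biUnion_neighborFinset_smul (φ : G ≃g G) (X : Finset V) :
    (φ • X).biUnion (G.neighborFinset ·) = φ • X.biUnion (G.neighborFinset ·) := by
  rw [smul_finset_def, image_biUnion, smul_finset_def, biUnion_image]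
  exact biUnion_congr rfl fun x _ => neighborFinset_smul φ x

theorem cutSize_smul (φ : G ≃g G) (X : Finset V) : cutSize G (φ • X) = cutSize G X := by
  rw [cutSize, ← smul_finset_compl, card_interedges_smul, cutSize]

end Automorphisms

section EdgeAtoms

variable {V : Type*}

theorem exists_lex_minimal {P : Finset V → Prop} (f : Finset V → ℕ) {X₀ : Finset V} (h : P X₀) :
    ∃ X, P X ∧ (∀ Y, P Y → f X ≤ f Y) ∧ ∀ Y, P Y → f Y ≤ f X → #X ≤ #Y := by
  obtain ⟨X, hX, hmin⟩ := exists_minimalFor_of_wellFoundedLT P (fun X => toLex (f X, #X)) ⟨X₀, h⟩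
  replace hmin {Y} (hY : P Y) := (le_total _ _).elim (hmin hY) id
  simp only [Prod.Lex.toLex_le_toLex] at hmin
  exact ⟨X, hX, fun Y hY => (hmin hY).elim le_of_lt fun h => h.1.le,
    fun Y hY hle => (hmin hY).elim (fun h => absurd h hle.not_gt) And.right⟩

variable [Fintype V] [DecidableEq V] {G : SimpleGraph V} [DecidableRel G.Adj] {k : ℕ}

variable (G) in
/-- A `λ₂`-atom: among the sets with at least two vertices on either side, one of minimum cut size
and, subject to that, of minimum cardinality. -/
structure IsEdgeAtom (X : Finset V) : Prop where
  two_le_card : 2 ≤ #X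
  two_le_card_compl : 2 ≤ #Xᶜ
  cutSize_le : ∀ Y : Finset V, 2 ≤ #Y → 2 ≤ #Yᶜ → cutSize G X ≤ cutSize G Y
  card_le : ∀ Y : Finset V, 2 ≤ #Y → 2 ≤ #Yᶜ → cutSize G Y ≤ cutSize G X → #X ≤ #Y

theorem exists_isEdgeAtom {X : Finset V} (hX : 2 ≤ #X) (hX' : 2 ≤ #Xᶜ) :
    ∃ A, IsEdgeAtom G A :=
  let ⟨A, ⟨hA, hA'⟩, hle, hcard⟩ :=
    exists_lex_minimal (P := fun X => 2 ≤ #X ∧ 2 ≤ #Xᶜ) (cutSize G) ⟨hX, hX'⟩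
  ⟨A, hA, hA', fun Y h h' => hle Y ⟨h, h'⟩, fun Y h h' => hcard Y ⟨h, h'⟩⟩

namespace IsEdgeAtom

variable {X : Finset V}

theorem two_mul_card_le (hX : IsEdgeAtom G X) : 2 * #X ≤ Fintype.card V := by
  have := hX.card_le Xᶜ hX.two_le_card_compl (by simpa using hX.two_le_card) (cutSize_compl X).le
  have := card_compl_add_card X
  omega

theorem cutSize_lt (hX : IsEdgeAtom G X) {Y : Finset V} (hY : 2 ≤ #Y) (hlt : #Y < #X) :
    cutSize G X < cutSize G Y := by
  have := card_compl_add_card X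
  have := card_compl_add_card Y
  have := hX.two_mul_card_le
  exact lt_of_not_ge fun h => (hX.card_le Y hY (by omega) h).not_gt hlt

theorem smul_eq (hX : IsEdgeAtom G X) (h3 : 3 ≤ #X) (φ : G ≃g G) (hne : (X ∩ φ • X).Nonempty) :
    φ • X = X := by
  set Y := φ • X
  have hcard : #Y = #X := card_smul_finset φ X
  have hcut : cutSize G Y = cutSize G X := cutSize_smul φ X
  have hpos := hne.card_pos
  have hn := hX.two_mul_card_le
  by_contra hXY
  have hlt : #(X ∩ Y) < #X := card_lt_card <| inter_subset_left.ssubset_of_ne fun h =>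
    hXY (eq_of_subset_of_card_le (inter_eq_left.1 h) hcard.le).symm
  have hunion := card_union_add_card_inter X Y
  by_cases hinter : 2 ≤ #(X ∩ Y)
  · have hcompl := card_compl_add_card (X ∪ Y)
    have := hX.cutSize_le (X ∪ Y) (by omega) (by omega)
    have := hX.cutSize_lt hinter hlt
    have := cutSize_inter_add_cutSize_union_le (G := G) X Y
    omega
  · have hXdiff := card_sdiff_add_card_inter X Y
    have hYdiff := card_sdiff_add_card_inter Y X
    rw [inter_comm] at hYdiff
    have := hX.cutSize_lt (Y := X \ Y) (by omega) (by omega)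
    have := hX.cutSize_lt (Y := Y \ X) (by omega) (by omega)
    have := cutSize_sdiff_add_cutSize_sdiff_le (G := G) X Y
    omega

theorem three_le_card (hX : IsEdgeAtom G X) (hreg : G.IsRegularOfDegree k)
    (hlt : cutSize G X < 2 * k - 2) : 3 ≤ #X := by
  have hcut := mul_card_add_card_le_cutSize hreg X
  have := hX.two_le_card
  by_contra h
  rw [show #X = 2 by omega] at hcut
  omega

end IsEdgeAtom

theorem card_neighborFinset_inter_block {A : V → Finset V} (hvt : VertexTransitive G)
    (hA : IsBlockMap (G ≃g G) A) (x y : V) :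
    #(G.neighborFinset x ∩ A x) = #(G.neighborFinset y ∩ A y) := by
  obtain ⟨φ, rfl⟩ : ∃ φ : G ≃g G, φ • y = x := hvt y x
  rw [neighborFinset_smul, hA.smul, ← smul_finset_inter, card_smul_finset]

theorem card_neighborFinset_inter_lt {X : Finset V} {x : V} (hx : x ∈ X) :
    #(G.neighborFinset x ∩ X) < #X :=
  card_lt_card <| inter_subset_right.ssubset_of_ne fun h =>
    G.notMem_neighborFinset_self x (inter_eq_right.1 h hx)

theorem card_interedges_self_eq {X : Finset V} {t : ℕ}
    (h : ∀ x ∈ X, #(G.neighborFinset x ∩ X) = t) : #(G.interedges X X) = #X * t := by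
  rw [card_interedges_eq_sum, sum_congr rfl h, sum_const, smul_eq_mul]

theorem add_one_eq_of_card_mul_sub_lt {s t k : ℕ} (hs : 3 ≤ s) (hts : t < s) (htk : t < k)
    (h : s * (k - t) < 2 * k - 2) : t + 1 = k := by
  obtain ⟨e, rfl⟩ := Nat.exists_eq_add_of_lt htk
  rcases e with _ | e
  · rfl
  · rw [show t + (e + 1) + 1 - t = e + 2 by omega] at h
    rcases t with _ | t
    · have := Nat.mul_le_mul_right (e + 2) hs
      omega
    · have : (t + 2) * (e + 2) ≤ s * (e + 2) := Nat.mul_le_mul_right _ hts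
      have : (t + 2) * (e + 2) = t * e + 2 * t + 2 * e + 4 := by ring
      omega

variable (G k) in
/-- The vertices split into blocks `A x` of `a` vertices, where `k ≤ a ≤ 2k - 3`, such that a
block has cut size `a`, no set with at least two vertices on either side has a smaller cut, and
each vertex `x` has exactly one neighbour `m x` outside its block. -/
structure MatchedBlocks (a : ℕ) (A : V → Finset V) (m : V → V) : Prop where
  isBlockMap : IsBlockMap (G ≃g G) A
  card_block : ∀ x, #(A x) = a
  le_block : k ≤ a
  block_le : a + 3 ≤ 2 * k
  two_mul_block_le : 2 * a ≤ Fintype.card V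
  card_neighborFinset_inter : ∀ x, #(G.neighborFinset x ∩ A x) + 1 = k
  le_cutSize : ∀ X : Finset V, 2 ≤ #X → 2 ≤ #Xᶜ → a ≤ cutSize G X
  neighborFinset_sdiff : ∀ x, G.neighborFinset x \ A x = {m x}

theorem IsEdgeAtom.exists_matchedBlocks {X : Finset V} (hX : IsEdgeAtom G X)
    (hconn : G.Connected) (hvt : VertexTransitive G) (hreg : G.IsRegularOfDegree k)
    (hlt : cutSize G X < 2 * k - 2) : ∃ a A m, MatchedBlocks G k a A m := by
  have h3 := hX.three_le_card hreg hlt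
  have : MulAction.IsPretransitive (G ≃g G) V := ⟨hvt⟩
  obtain ⟨x₀, hx₀⟩ : X.Nonempty := card_pos.1 (by omega)
  obtain ⟨A, hA, hsmul, hAX⟩ := exists_isBlockMap ⟨x₀, hx₀⟩ (hX.smul_eq h3)
  have hcard (x : V) : #(A x) = #X := by
    obtain ⟨φ, hφ⟩ := hsmul x
    rw [hφ, card_smul_finset]
  set t := #(G.neighborFinset x₀ ∩ A x₀)
  have hinner (x : V) : #(G.neighborFinset x ∩ A x) = t :=
    card_neighborFinset_inter_block hvt hA x x₀
  have hcut : cutSize G X + #X * t = k * #X := by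
    rw [← cutSize_add_card_interedges_self hreg, card_interedges_self_eq fun x hx => ?_]
    rw [← hinner x, hAX x hx]
  have htX : t < #X := hcard x₀ ▸ card_neighborFinset_inter_lt (hA.mem_self x₀)
  have hcut_pos : 0 < cutSize G X := cutSize_pos hconn ⟨x₀, hx₀⟩ fun h => by
    simpa [h] using hX.two_le_card_compl
  have htk : t < k := by
    by_contra! h
    nlinarith [Nat.mul_le_mul_left #X h]
  have ht1 : t + 1 = k := add_one_eq_of_card_mul_sub_lt h3 htX htk <| by
    rwa [Nat.mul_sub, mul_comm #X k, ← hcut, Nat.add_sub_cancel]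
  have hcutX : cutSize G X = #X := by
    rw [← ht1] at hcut
    linarith
  have houter (x : V) : #(G.neighborFinset x \ A x) = 1 := by
    have := card_sdiff_add_card_inter (G.neighborFinset x) (A x)
    rw [card_neighborFinset_eq_degree, hreg.degree_eq, hinner] at this
    omega
  choose m hm using fun x => card_eq_one.1 (houter x)
  exact ⟨#X, A, m, hA, hcard, by omega, by omega, hX.two_mul_card_le, fun x => by rw [hinner, ht1],
    hcutX ▸ hX.cutSize_le, hm⟩

/-- An edge atom with a cut below `2k - 2` is a block of imprimitivity, and then each of its
vertices has all but one of its neighbours inside it. -/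
theorem forall_le_cutSize_or_exists_matchedBlocks (hconn : G.Connected) (hvt : VertexTransitive G)
    (hreg : G.IsRegularOfDegree k) :
    (∀ X : Finset V, 2 ≤ #X → 2 ≤ #Xᶜ → 2 * k - 2 ≤ cutSize G X) ∨
      ∃ a A m, MatchedBlocks G k a A m := by
  refine or_iff_not_imp_left.2 fun h => ?_
  push Not at h
  obtain ⟨Y, hY, hY', hlt⟩ := h
  obtain ⟨X, hX⟩ := exists_isEdgeAtom (G := G) hY hY'
  exact hX.exists_matchedBlocks hconn hvt hreg ((hX.cutSize_le Y hY hY').trans_lt hlt)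

end EdgeAtoms

section EdgeConnectivity

variable {V : Type*} [Fintype V] [DecidableEq V] {G : SimpleGraph V} [DecidableRel G.Adj] {k : ℕ}

namespace MatchedBlocks

variable {a : ℕ} {A : V → Finset V} {m : V → V}

theorem card_interedges_block_add_card (h : MatchedBlocks G k a A m) {x : V} {Z : Finset V}
    (hZ : Z ⊆ A x) : #(G.interedges Z (A x)) + #Z = #Z * k := by
  have hdeg : ∀ z ∈ Z, #(G.neighborFinset z ∩ A x) + 1 = k := fun z hz => by
    rw [← h.isBlockMap.eq_of_mem (hZ hz), h.card_neighborFinset_inter]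
  rw [card_interedges_eq_sum, card_eq_sum_ones, ← sum_add_distrib, sum_congr rfl hdeg, sum_const,
    ← card_eq_sum_ones, smul_eq_mul]

theorem cutSize_of_subset_block (h : MatchedBlocks G k a A m) (hreg : G.IsRegularOfDegree k)
    {x : V} {Z : Finset V} (hZ : Z ⊆ A x) : cutSize G Z = #Z + #(G.interedges Z (A x \ Z)) := by
  have hcut := cutSize_add_card_interedges_self hreg Z
  have hin := h.card_interedges_block_add_card hZ
  rw [← union_sdiff_of_subset hZ, card_interedges_union_right disjoint_sdiff] at hin
  rw [mul_comm] at hcut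
  omega

theorem cutSize_block (h : MatchedBlocks G k a A m) (hreg : G.IsRegularOfDegree k) (x : V) :
    cutSize G (A x) = a := by
  simp [h.cutSize_of_subset_block hreg (Subset.refl (A x)), h.card_block, card_interedges_eq_sum]

theorem le_card_interedges_sdiff (h : MatchedBlocks G k a A m) {x : V} {Z : Finset V}
    (hZ : Z ⊆ A x) (hne : Z ≠ A x) (hkZ : k ≤ #Z) : k ≤ #(G.interedges Z (A x \ Z)) + 1 := by
  set W := A x \ Z with hW
  have hWA := h.card_interedges_block_add_card (Z := W) sdiff_subset
  have hWW := card_interedges_self_add_card_le (G := G) W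
  rw [← union_sdiff_of_subset hZ, ← hW, card_interedges_union_right disjoint_sdiff,
    card_interedges_comm W Z] at hWA
  have hcard : #W + #Z = a := by rw [card_sdiff_add_card_eq_card hZ, h.card_block]
  have hpos : 0 < #W := card_pos.2 (sdiff_nonempty.2 fun hsub => hne (hZ.antisymm hsub))
  have := h.block_le
  obtain ⟨w, hw⟩ : ∃ w, #W = w + 1 := ⟨#W - 1, by omega⟩
  obtain ⟨j, rfl⟩ : ∃ j, k = w + 1 + j + 1 := ⟨k - (w + 2), by omega⟩
  rw [hw] at hWA hWW
  nlinarith [Nat.zero_le (w * j)]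

theorem two_mul_sub_two_le_cutSize_of_subset_block (h : MatchedBlocks G k a A m)
    (hreg : G.IsRegularOfDegree k) {x : V} {Z : Finset V} (hZ : Z ⊆ A x) (hne : Z ≠ A x)
    (h2 : 2 ≤ #Z) : 2 * k - 2 ≤ cutSize G Z := by
  rcases Nat.lt_or_ge #Z k with hZk | hkZ
  · have hcut := mul_card_add_card_le_cutSize hreg Z
    obtain ⟨z, hz⟩ : ∃ z, #Z = z + 2 := ⟨#Z - 2, by omega⟩
    obtain ⟨j, rfl⟩ : ∃ j, k = z + 2 + 1 + j := ⟨k - (z + 3), by omega⟩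
    rw [hz] at hcut
    have : 2 * (z + 2 + 1 + j) ≤ cutSize G Z + 2 := by nlinarith [Nat.zero_le (z * j)]
    omega
  · have := h.le_card_interedges_sdiff hZ hne hkZ
    have := h.cutSize_of_subset_block hreg hZ
    omega

/-- Uncross `X` with the block of `x`: one of the two uncrossings splits that block into a proper
part with at least two vertices. -/
theorem two_mul_sub_two_le_cutSize_of_not_block_subset (h : MatchedBlocks G k a A m)
    (hreg : G.IsRegularOfDegree k) (hk : 5 ≤ k) {X : Finset V} (hX : 3 ≤ #X) (hX' : 3 ≤ #Xᶜ)
    {x : V} (hx : x ∈ X) (hAX : ¬ A x ⊆ X) : 2 * k - 2 ≤ cutSize G X := by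
  have hcut := h.cutSize_block hreg x
  have := h.le_block
  have := h.two_mul_block_le
  have := h.card_block x
  have hXA := card_inter_add_card_sdiff X (A x)
  have hAX' := card_inter_add_card_sdiff (A x) X
  rw [inter_comm] at hAX'
  have := card_union_add_card_inter X (A x)
  have := card_compl_add_card X
  have := card_compl_add_card (X ∪ A x)
  have : 0 < #(X ∩ A x) := card_pos.2 ⟨x, mem_inter.2 ⟨hx, h.isBlockMap.mem_self x⟩⟩
  have : 0 < #(A x \ X) := card_pos.2 (sdiff_nonempty.2 hAX)
  by_cases hcross : 2 ≤ #(X ∪ A x)ᶜ ∧ 2 ≤ #(X ∩ A x)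
  · have := cutSize_inter_add_cutSize_union_le (G := G) X (A x)
    have := h.le_cutSize (X ∪ A x) (by omega) hcross.1
    have := h.two_mul_sub_two_le_cutSize_of_subset_block hreg inter_subset_right
      (fun heq => by rw [heq] at hAX'; omega) hcross.2
    omega
  · have := cutSize_sdiff_add_cutSize_sdiff_le (G := G) X (A x)
    have := card_compl_add_card (X \ A x)
    have := h.le_cutSize (X \ A x) (by omega) (by omega)
    have := h.two_mul_sub_two_le_cutSize_of_subset_block hreg (Z := A x \ X) sdiff_subset
      (fun heq => by rw [heq] at hAX'; omega) (by omega)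
    omega

theorem two_mul_sub_two_le_cutSize (h : MatchedBlocks G k a A m)
    (hreg : G.IsRegularOfDegree k) (hk : 5 ≤ k) {X : Finset V} (hX : 2 ≤ #X) (hX' : 2 ≤ #Xᶜ)
    {x : V} (hx : x ∈ X) (hAX : ¬ A x ⊆ X) : 2 * k - 2 ≤ cutSize G X := by
  have two_mul_le_of_card_eq (Y : Finset V) (hY : #Y = 2) : 2 * k - 2 ≤ cutSize G Y := by
    have := mul_card_add_card_le_cutSize hreg Y
    rw [hY] at this
    omega
  by_cases hX2 : #X = 2
  · exact two_mul_le_of_card_eq X hX2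
  by_cases hX'2 : #Xᶜ = 2
  · exact cutSize_compl (G := G) X ▸ two_mul_le_of_card_eq Xᶜ hX'2
  exact h.two_mul_sub_two_le_cutSize_of_not_block_subset hreg hk (by omega) (by omega) hx hAX

end MatchedBlocks

theorem le_cutSize_of_connected (hconn : G.Connected) (hvt : VertexTransitive G)
    (hreg : G.IsRegularOfDegree k) (hk : 2 ≤ k) {X : Finset V} (hX : X.Nonempty)
    (hX' : X ≠ univ) : k ≤ cutSize G X := by
  have le_of_card_eq_one (Y : Finset V) (hY : #Y = 1) : k ≤ cutSize G Y := by
    have := mul_card_add_card_le_cutSize hreg Y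
    rw [hY] at this
    omega
  have := hX.card_pos
  have : 0 < #Xᶜ := card_pos.2 (nonempty_iff_ne_empty.2 (by simpa using hX'))
  by_cases hX1 : #X = 1
  · exact le_of_card_eq_one X hX1
  by_cases hX'1 : #Xᶜ = 1
  · exact cutSize_compl (G := G) X ▸ le_of_card_eq_one Xᶜ hX'1
  rcases forall_le_cutSize_or_exists_matchedBlocks hconn hvt hreg with h | ⟨a, A, m, h⟩
  · have := h X (by omega) (by omega)
    omega
  · exact h.le_block.trans (h.le_cutSize X (by omega) (by omega))

end EdgeConnectivity

section VertexAtoms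

variable {V : Type*} [DecidableEq V] {N : V → Finset V} {μ : ℕ} {X Y : Finset V}

theorem card_biUnion_inter_add_card_biUnion_union_le (N : V → Finset V) (X Y : Finset V) :
    #((X ∩ Y).biUnion N) + #((X ∪ Y).biUnion N) ≤ #(X.biUnion N) + #(Y.biUnion N) := by
  rw [union_biUnion, add_comm, ← card_union_add_card_inter (X.biUnion N)]
  gcongr
  exact subset_inter (biUnion_subset_biUnion_of_subset_left N inter_subset_left)
    (biUnion_subset_biUnion_of_subset_left N inter_subset_right)

variable [Fintype V]

theorem biUnion_compl_biUnion_subset (hsymm : ∀ v w, w ∈ N v → v ∈ N w) (X : Finset V) :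
    (X.biUnion N)ᶜ.biUnion N ⊆ Xᶜ := by
  intro w hw
  obtain ⟨v, hv, hwv⟩ := mem_biUnion.1 hw
  exact mem_compl.2 fun hwX => mem_compl.1 hv (mem_biUnion.2 ⟨w, hwX, hsymm v w hwv⟩)

variable (N μ) in
/-- A vertex atom for the neighbourhood function `N`: among the nonempty sets `X` whose
neighbourhood `X.biUnion N` is not everything, one of minimum excess `μ = |N(X)| - |X|` and,
subject to that, of minimum cardinality. -/
structure IsVertexAtom (X : Finset V) : Prop where
  nonempty : X.Nonempty
  biUnion_ne_univ : X.biUnion N ≠ univ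
  card_biUnion : #(X.biUnion N) = #X + μ
  add_le : ∀ Y : Finset V, Y.Nonempty → Y.biUnion N ≠ univ → #Y + μ ≤ #(Y.biUnion N)
  card_le : ∀ Y : Finset V, Y.Nonempty → Y.biUnion N ≠ univ → #(Y.biUnion N) ≤ #Y + μ → #X ≤ #Y

theorem exists_isVertexAtom
    (hle : ∀ X : Finset V, X.Nonempty → X.biUnion N ≠ univ → #X ≤ #(X.biUnion N))
    (hX : X.Nonempty) (hX' : X.biUnion N ≠ univ) : ∃ μ Y, IsVertexAtom N μ Y := by
  obtain ⟨Y, ⟨hY, hY'⟩, hmin, hcard⟩ := exists_lex_minimal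
    (P := fun X => X.Nonempty ∧ X.biUnion N ≠ univ) (fun X => #(X.biUnion N) - #X) ⟨hX, hX'⟩
  have hYle := hle Y hY hY'
  refine ⟨#(Y.biUnion N) - #Y, Y, hY, hY', by omega, fun Z hZ hZ' => ?_, fun Z hZ hZ' h => ?_⟩
  · have := hmin Z ⟨hZ, hZ'⟩
    have := hle Z hZ hZ'
    omega
  · exact hcard Z ⟨hZ, hZ'⟩ (by omega)

namespace IsVertexAtom

theorem card_eq (hX : IsVertexAtom N μ X) (hY : IsVertexAtom N μ Y) : #X = #Y :=
  (hX.card_le Y hY.nonempty hY.biUnion_ne_univ hY.card_biUnion.le).antisymm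
    (hY.card_le X hX.nonempty hX.biUnion_ne_univ hX.card_biUnion.le)

theorem biUnion_inter_ne_univ (hX : IsVertexAtom N μ X) (Y : Finset V) :
    (X ∩ Y).biUnion N ≠ univ := fun h =>
  hX.biUnion_ne_univ <| univ_subset_iff.1 <|
    h ▸ biUnion_subset_biUnion_of_subset_left N inter_subset_left

theorem smul {M : Type*} [Group M] [MulAction M V] (hN : ∀ (g : M) v, N (g • v) = g • N v)
    (hX : IsVertexAtom N μ X) (g : M) : IsVertexAtom N μ (g • X) := by
  have hsmul : (g • X).biUnion N = g • X.biUnion N := by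
    simp only [smul_finset_def, image_biUnion, biUnion_image, hN]
  refine ⟨hX.nonempty.smul_finset, fun h => hX.biUnion_ne_univ ?_, ?_, hX.add_le, ?_⟩
  · rwa [hsmul, smul_eq_iff_eq_inv_smul, smul_finset_univ] at h
  · rw [hsmul, card_smul_finset, card_smul_finset, hX.card_biUnion]
  · simpa only [card_smul_finset] using hX.card_le

section Symmetric

variable (hsymm : ∀ v w, w ∈ N v → v ∈ N w)
include hsymm

theorem two_mul_card_add_le (hX : IsVertexAtom N μ X) : 2 * #X + μ ≤ Fintype.card V := by
  have hsub := biUnion_compl_biUnion_subset hsymm X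
  have hle := card_le_card hsub
  have hcX := card_compl_add_card X
  have hcN := card_compl_add_card (X.biUnion N)
  have := hX.card_biUnion
  have := hX.card_le (X.biUnion N)ᶜ
    (nonempty_iff_ne_empty.2 ((compl_eq_empty_iff _).not.2 hX.biUnion_ne_univ))
    (fun h => hX.nonempty.ne_empty ((compl_eq_univ_iff X).1 (univ_subset_iff.1 (h ▸ hsub))))
    (by omega)
  omega

theorem eq_of_inter_nonempty (hX : IsVertexAtom N μ X) (hY : IsVertexAtom N μ Y)
    (hne : (X ∩ Y).Nonempty) : X = Y := by
  have hcard := hX.card_eq hY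
  have := hX.two_mul_card_add_le hsymm
  have := hX.card_biUnion
  have := hY.card_biUnion
  have := card_union_add_card_inter X Y
  have hsubmod := card_biUnion_inter_add_card_biUnion_union_le N X Y
  have := hne.card_pos
  have := hX.add_le (X ∩ Y) hne (hX.biUnion_inter_ne_univ Y)
  have := hX.add_le (X ∪ Y) (hX.nonempty.mono subset_union_left) fun h => by
    rw [h, card_univ] at hsubmod
    omega
  have hle := hX.card_le (X ∩ Y) hne (hX.biUnion_inter_ne_univ Y) (by omega)
  exact eq_of_subset_of_card_le (inter_eq_left.1 (eq_of_subset_of_card_le inter_subset_left hle))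
    hcard.ge

/-- Uncross `X` with the complement of the neighbourhood of `Y`, whose excess is at most `μ`. -/
theorem subset_biUnion_of_inter_nonempty (hX : IsVertexAtom N μ X) (hY : IsVertexAtom N μ Y)
    (hne : (X ∩ Y.biUnion N).Nonempty) : X ⊆ Y.biUnion N := by
  set U := (Y.biUnion N)ᶜ with hU
  by_contra hsub
  have hZ : (X ∩ U).Nonempty := by rwa [hU, ← sdiff_eq_inter_compl, sdiff_nonempty]
  have hZ' := hX.biUnion_inter_ne_univ U
  have hcard := hX.card_eq hY
  have := hX.card_biUnion
  have := hY.card_biUnion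
  have := card_compl_add_card Y
  have : #U + #(Y.biUnion N) = Fintype.card V := card_compl_add_card _
  have : #(U.biUnion N) ≤ #Yᶜ := card_le_card (biUnion_compl_biUnion_subset hsymm Y)
  have := card_union_add_card_inter X U
  have hsubmod := card_biUnion_inter_add_card_biUnion_union_le N X U
  have := hX.add_le _ hZ hZ'
  have := hZ.card_pos
  have := hX.add_le (X ∪ U) (hX.nonempty.mono subset_union_left) fun h => by
    rw [h, card_univ] at hsubmod
    omega
  have hle := hX.card_le _ hZ hZ' (by omega)
  obtain ⟨x, hx⟩ := hne
  rw [mem_inter] at hx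
  have hxU := inter_eq_left.1 (eq_of_subset_of_card_le inter_subset_left hle) hx.1
  exact mem_compl.1 hxU hx.2

theorem exists_isBlockMap {M : Type*} [Group M] [MulAction M V] [MulAction.IsPretransitive M V]
    (hN : ∀ (g : M) v, N (g • v) = g • N v) (hX : IsVertexAtom N μ X) :
    ∃ A, IsBlockMap M A ∧ ∀ x, IsVertexAtom N μ (A x) := by
  obtain ⟨A, hA, hsmul, -⟩ := FactorCritical.exists_isBlockMap (M := M) hX.nonempty
    fun g hg => (hX.eq_of_inter_nonempty hsymm (hX.smul hN g) hg).symm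
  refine ⟨A, hA, fun x => ?_⟩
  obtain ⟨g, hg⟩ := hsmul x
  exact hg ▸ hX.smul hN g

theorem block_subset_biUnion {M : Type*} [Group M] [MulAction M V] {A : V → Finset V}
    (hA : IsBlockMap M A) (hatom : ∀ x, IsVertexAtom N μ (A x)) {x y : V}
    (hy : y ∈ (A x).biUnion N) : A y ⊆ (A x).biUnion N :=
  (hatom y).subset_biUnion_of_inter_nonempty hsymm (hatom x)
    ⟨y, mem_inter.2 ⟨hA.mem_self y, hy⟩⟩

theorem card_dvd_excess {M : Type*} [Group M] [MulAction M V] {A : V → Finset V}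
    (hA : IsBlockMap M A) (hatom : ∀ x, IsVertexAtom N μ (A x)) (x : V) : #(A x) ∣ μ := by
  have hdvd : #(A x) ∣ #((A x).biUnion N) :=
    hA.dvd_card (fun _ => block_subset_biUnion hsymm hA hatom) fun y => (hatom y).card_eq (hatom x)
  rwa [(hatom x).card_biUnion, Nat.dvd_add_right dvd_rfl] at hdvd

end Symmetric

end IsVertexAtom

end VertexAtoms

section Expansion

theorem colorable_two_of_forall_adj {V : Type*} {G : SimpleGraph V} (X : Finset V)
    (h : ∀ x y, G.Adj x y → (x ∈ X ↔ y ∉ X)) : G.Colorable 2 := by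
  classical
  exact ⟨Coloring.mk (fun v => if v ∈ X then (0 : Fin 2) else 1) fun {x y} hxy => by
    by_cases hy : y ∈ X <;> simp [hy, h x y hxy]⟩

variable {V : Type*} [Fintype V] [DecidableEq V] {G : SimpleGraph V} [DecidableRel G.Adj] {k : ℕ}

theorem mul_card_add_card_interedges_biUnion (hreg : G.IsRegularOfDegree k) (X : Finset V) :
    k * #X + #(G.interedges (X.biUnion (G.neighborFinset ·)) Xᶜ) =
      k * #(X.biUnion (G.neighborFinset ·)) := by
  have hzero : #(G.interedges X (X.biUnion (G.neighborFinset ·))ᶜ) = 0 :=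
    card_interedges_eq_zero_iff.2 fun x hx y hy hxy =>
      mem_compl.1 hy (mem_biUnion.2 ⟨x, hx, (G.mem_neighborFinset x y).2 hxy⟩)
  rw [← card_interedges_univ hreg, ← card_interedges_univ hreg,
    ← card_interedges_add_compl X (X.biUnion (G.neighborFinset ·)), hzero, add_zero,
    card_interedges_comm X, card_interedges_add_compl]

theorem card_lt_card_biUnion_neighborFinset (hconn : G.Connected) (hreg : G.IsRegularOfDegree k)
    (hnb : ¬ G.Colorable 2) {X : Finset V} (hX : X.Nonempty)
    (hX' : X.biUnion (G.neighborFinset ·) ≠ univ) : #X < #(X.biUnion (G.neighborFinset ·)) := by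
  set Y := X.biUnion (G.neighborFinset ·)
  have hXY {x y : V} (hx : x ∈ X) (hxy : G.Adj x y) : y ∈ Y :=
    mem_biUnion.2 ⟨x, hx, (G.mem_neighborFinset x y).2 hxy⟩
  by_contra! hle
  have hzero : #(G.interedges Y Xᶜ) = 0 := by
    have : k * #X + #(G.interedges Y Xᶜ) = k * #Y := mul_card_add_card_interedges_biUnion hreg X
    have := Nat.mul_le_mul_left k hle
    omega
  have hYX {y x : V} (hy : y ∈ Y) (hyx : G.Adj y x) : x ∈ X := by
    by_contra hx
    exact card_interedges_eq_zero_iff.1 hzero y hy x (mem_compl.2 hx) hyx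
  rcases (X ∩ Y).eq_empty_or_nonempty with hdisj | hne
  · have huniv : X ∪ Y = univ := eq_univ_of_forall_adj hconn (hX.mono subset_union_left)
      fun x hx y hxy => (mem_union.1 hx).elim (fun hx => mem_union_right _ (hXY hx hxy))
        fun hx => mem_union_left _ (hYX hx hxy)
    refine hnb (colorable_two_of_forall_adj X fun x y hxy => ⟨fun hx hy => ?_, fun hy => ?_⟩)
    · exact notMem_empty y (hdisj ▸ mem_inter.2 ⟨hy, hXY hx hxy⟩)
    · exact hYX ((mem_union.1 (huniv ▸ mem_univ y)).resolve_left hy) hxy.symm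
  · have huniv : X ∩ Y = univ := eq_univ_of_forall_adj hconn hne fun x hx y hxy =>
      mem_inter.2 ⟨hYX (mem_inter.1 hx).2 hxy, hXY (mem_inter.1 hx).1 hxy⟩
    exact hX' (univ_subset_iff.1 (huniv ▸ inter_subset_right))

/-- The excess `μ` of a vertex atom is a positive multiple of its cardinality `b`, and
`k ≤ b + μ`. -/
theorem card_add_three_le_card_biUnion_neighborFinset (hconn : G.Connected)
    (hvt : VertexTransitive G) (hreg : G.IsRegularOfDegree k) (hk : 5 ≤ k)
    (hnb : ¬ G.Colorable 2) {X : Finset V} (hX : X.Nonempty)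
    (hX' : X.biUnion (G.neighborFinset ·) ≠ univ) : #X + 3 ≤ #(X.biUnion (G.neighborFinset ·)) := by
  have : MulAction.IsPretransitive (G ≃g G) V := ⟨hvt⟩
  have hsymm : ∀ v w, w ∈ G.neighborFinset v → v ∈ G.neighborFinset w := fun v w => by
    simp only [mem_neighborFinset, G.adj_comm, imp_self]
  obtain ⟨μ, Y, hY⟩ := exists_isVertexAtom
    (fun X h h' => (card_lt_card_biUnion_neighborFinset hconn hreg hnb h h').le) hX hX'
  obtain ⟨A, hA, hatom⟩ := hY.exists_isBlockMap hsymm (neighborFinset_smul (G := G))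
  obtain ⟨x, hx⟩ := hX
  have hdvd : #(A x) ∣ μ := IsVertexAtom.card_dvd_excess hsymm hA hatom x
  have hcard := (hatom x).card_biUnion
  have := card_lt_card_biUnion_neighborFinset hconn hreg hnb (hatom x).nonempty
    (hatom x).biUnion_ne_univ
  have := Nat.le_of_dvd (by omega) hdvd
  have hdeg := card_le_card (subset_biUnion_of_mem (G.neighborFinset ·) (hA.mem_self x))
  rw [card_neighborFinset_eq_degree, hreg.degree_eq] at hdeg
  have := hY.add_le X ⟨x, hx⟩ hX'
  omega

end Expansion

section VertexConnectivity

variable {V : Type*} [Fintype V] [DecidableEq V] {G : SimpleGraph V} [DecidableRel G.Adj] {k : ℕ}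

variable (G) in
/-- The closed neighbourhood of a vertex. -/
def closedNbhd (v : V) : Finset V := insert v (G.neighborFinset v)

theorem mem_closedNbhd {v w : V} : w ∈ closedNbhd G v ↔ w = v ∨ G.Adj v w := by
  simp [closedNbhd]

theorem mem_closedNbhd_symm (v w : V) (h : w ∈ closedNbhd G v) : v ∈ closedNbhd G w := by
  rwa [mem_closedNbhd, eq_comm, G.adj_comm, ← mem_closedNbhd]

theorem card_closedNbhd (hreg : G.IsRegularOfDegree k) (v : V) : #(closedNbhd G v) = k + 1 := by
  rw [closedNbhd, card_insert_of_notMem (G.notMem_neighborFinset_self v),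
    card_neighborFinset_eq_degree, hreg.degree_eq]

theorem closedNbhd_smul (φ : G ≃g G) (v : V) : closedNbhd G (φ • v) = φ • closedNbhd G v := by
  rw [closedNbhd, neighborFinset_smul, closedNbhd, smul_finset_insert]

theorem subset_biUnion_closedNbhd (X : Finset V) : X ⊆ X.biUnion (closedNbhd G) :=
  fun x hx => mem_biUnion.2 ⟨x, hx, mem_insert_self x _⟩

theorem biUnion_closedNbhd_ne (hconn : G.Connected) {X : Finset V} (hX : X.Nonempty)
    (hX' : X ≠ univ) : X.biUnion (closedNbhd G) ≠ X := fun h =>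
  hX' <| eq_univ_of_forall_adj hconn hX fun x hx _ hxy =>
    h ▸ mem_biUnion.2 ⟨x, hx, mem_closedNbhd.2 (.inr hxy)⟩

theorem IsVertexAtom.add_one_le_card_add_excess {μ : ℕ} {X : Finset V}
    (hX : IsVertexAtom (closedNbhd G) μ X) (hreg : G.IsRegularOfDegree k) : k + 1 ≤ #X + μ := by
  obtain ⟨x, hx⟩ := hX.nonempty
  rw [← hX.card_biUnion, ← card_closedNbhd hreg x]
  exact card_le_card (subset_biUnion_of_mem _ hx)

/-- The boundary of a block is a union of blocks; a single block `P` would have the original block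
as its own boundary, and then the two blocks would form a connected component. -/
theorem two_mul_card_block_le_excess (hconn : G.Connected) {μ : ℕ} {A : V → Finset V}
    (hA : IsBlockMap (G ≃g G) A) (hatom : ∀ x, IsVertexAtom (closedNbhd G) μ (A x)) (x : V) :
    2 * #(A x) ≤ μ := by
  have hsub : A x ⊆ (A x).biUnion (closedNbhd G) := subset_biUnion_closedNbhd (A x)
  have hcardN (y : V) : #((A y).biUnion (closedNbhd G)) = #(A x) + μ := by
    rw [(hatom y).card_biUnion, (hatom y).card_eq (hatom x)]
  have hne : A x ≠ univ := fun h =>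
    (hatom x).biUnion_ne_univ (univ_subset_iff.1 (h.symm.subset.trans hsub))
  obtain ⟨p, hp, hpA⟩ := not_subset.1 fun h =>
    biUnion_closedNbhd_ne hconn (hatom x).nonempty hne (h.antisymm hsub)
  have hμ : μ ≠ 0 := fun h => biUnion_closedNbhd_ne hconn (hatom x).nonempty hne
    (eq_of_subset_of_card_le hsub (by simp [hcardN, h])).symm
  obtain ⟨r, hr⟩ := IsVertexAtom.card_dvd_excess mem_closedNbhd_symm hA hatom x
  obtain rfl | rfl | hr2 : r = 0 ∨ r = 1 ∨ 2 ≤ r := by omega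
  · exact absurd hr (by simpa using hμ)
  · have hpx : x ∈ (A p).biUnion (closedNbhd G) := by
      obtain ⟨y, hy, hyp⟩ := mem_biUnion.1 hp
      have hsubset := IsVertexAtom.block_subset_biUnion mem_closedNbhd_symm hA hatom
        (mem_biUnion.2 ⟨p, hA.mem_self p, mem_closedNbhd_symm y p hyp⟩)
      exact hsubset (hA.mem_comm.1 hy)
    have hcard : #(A x ∪ A p) = #(A x) + μ := by
      rw [card_union_of_disjoint (hA.disjoint_of_notMem hpA), (hatom p).card_eq (hatom x), hr,
        mul_one]
    have hx_eq : A x ∪ A p = (A x).biUnion (closedNbhd G) := eq_of_subset_of_card_le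
      (union_subset hsub (IsVertexAtom.block_subset_biUnion mem_closedNbhd_symm hA hatom hp))
      (by rw [hcard, hcardN])
    have hp_eq : A x ∪ A p = (A p).biUnion (closedNbhd G) := eq_of_subset_of_card_le
      (union_subset (IsVertexAtom.block_subset_biUnion mem_closedNbhd_symm hA hatom hpx)
        (subset_biUnion_closedNbhd _)) (by rw [hcard, hcardN])
    refine absurd ?_ (biUnion_closedNbhd_ne hconn ((hatom x).nonempty.mono subset_union_left)
      (hx_eq.trans_ne (hatom x).biUnion_ne_univ))
    rw [union_biUnion, ← hx_eq, ← hp_eq, union_self]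
  · rw [hr, mul_comm]
    exact Nat.mul_le_mul_left _ hr2

theorem exists_vertexAtom_blocks_of_separator (hvt : VertexTransitive G) {X S : Finset V}
    (hX : X.Nonempty) (hS : ∀ x ∈ X, ∀ y, G.Adj x y → y ∈ X ∪ S) (hXS : X ∪ S ≠ univ) :
    ∃ μ A, μ ≤ #S ∧ IsBlockMap (G ≃g G) A ∧ ∀ x, IsVertexAtom (closedNbhd G) μ (A x) := by
  have : MulAction.IsPretransitive (G ≃g G) V := ⟨hvt⟩
  have hsub : X.biUnion (closedNbhd G) ⊆ X ∪ S := biUnion_subset.2 fun x hx y hy => by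
    obtain rfl | hxy := mem_closedNbhd.1 hy
    · exact mem_union_left _ hx
    · exact hS x hx y hxy
  have hX' : X.biUnion (closedNbhd G) ≠ univ := fun h => hXS (univ_subset_iff.1 (h ▸ hsub))
  obtain ⟨μ, Y, hY⟩ := exists_isVertexAtom
    (fun Z _ _ => card_le_card (subset_biUnion_closedNbhd (G := G) Z)) hX hX'
  obtain ⟨A, hA, hatom⟩ := hY.exists_isBlockMap mem_closedNbhd_symm closedNbhd_smul
  have := hY.add_le X hX hX'
  have := card_le_card hsub
  have := card_union_le X S
  exact ⟨μ, A, by omega, hA, hatom⟩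

theorem two_mul_add_two_le_three_mul_card_separator (hconn : G.Connected)
    (hvt : VertexTransitive G) (hreg : G.IsRegularOfDegree k) {X S : Finset V} (hX : X.Nonempty)
    (hS : ∀ x ∈ X, ∀ y, G.Adj x y → y ∈ X ∪ S) (hXS : X ∪ S ≠ univ) :
    2 * k + 2 ≤ 3 * #S := by
  obtain ⟨μ, A, hμ, hA, hatom⟩ := exists_vertexAtom_blocks_of_separator hvt hX hS hXS
  obtain ⟨x, -⟩ := hX
  have := two_mul_card_block_le_excess hconn hA hatom x
  have := (hatom x).add_one_le_card_add_excess hreg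
  omega

theorem six_le_card_separator (hconn : G.Connected) (hvt : VertexTransitive G)
    (hreg : G.IsRegularOfDegree k) (hk : 6 ≤ k) {X S : Finset V} (hX : X.Nonempty)
    (hS : ∀ x ∈ X, ∀ y, G.Adj x y → y ∈ X ∪ S) (hXS : X ∪ S ≠ univ) : 6 ≤ #S := by
  obtain ⟨μ, A, hμ, hA, hatom⟩ := exists_vertexAtom_blocks_of_separator hvt hX hS hXS
  obtain ⟨x, -⟩ := hX
  have := two_mul_card_block_le_excess hconn hA hatom x
  have := (hatom x).add_one_le_card_add_excess hreg
  have hdvd := IsVertexAtom.card_dvd_excess mem_closedNbhd_symm hA hatom x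
  by_contra! hlt
  rw [show #(A x) = 2 by omega, show μ = 5 by omega] at hdvd
  exact absurd hdvd (by decide)

theorem exists_twin_blocks_of_separator (hconn : G.Connected) (hvt : VertexTransitive G)
    (hreg : G.IsRegularOfDegree 5) {X S : Finset V} (hX : X.Nonempty)
    (hS : ∀ x ∈ X, ∀ y, G.Adj x y → y ∈ X ∪ S) (hXS : X ∪ S ≠ univ) (hcard : #S ≤ 4) :
    ∃ A, IsBlockMap (G ≃g G) A ∧ (∀ x, #(A x) = 2) ∧
      ∀ x, ∀ y ∈ A x, closedNbhd G y = closedNbhd G x := by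
  obtain ⟨μ, A, hμ, hA, hatom⟩ := exists_vertexAtom_blocks_of_separator hvt hX hS hXS
  have hsize (x : V) : #(A x) = 2 ∧ μ = 4 := by
    have := two_mul_card_block_le_excess hconn hA hatom x
    have := (hatom x).add_one_le_card_add_excess hreg
    omega
  have hclosed (x y : V) (hy : y ∈ A x) : closedNbhd G y = (A x).biUnion (closedNbhd G) := by
    refine eq_of_subset_of_card_le (subset_biUnion_of_mem _ hy) ?_
    rw [(hatom x).card_biUnion, card_closedNbhd hreg, (hsize x).1, (hsize x).2]
  exact ⟨A, hA, fun x => (hsize x).1, fun x y hy =>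
    (hclosed x y hy).trans (hclosed x x (hA.mem_self x)).symm⟩

end VertexConnectivity

section Components

variable {V : Type*} {G : SimpleGraph V}

/-- `X` is a union of (vertex sets of) connected components of `G - S`. -/
structure IsComponentUnion (G : SimpleGraph V) (S X : Finset V) : Prop where
  notMem : ∀ x ∈ X, x ∉ S
  mem_of_adj : ∀ x ∈ X, ∀ y, G.Adj x y → y ∉ S → y ∈ X

theorem IsComponentUnion.inter [DecidableEq V] {S X Y : Finset V} (hX : IsComponentUnion G S X)
    (hY : IsComponentUnion G S Y) : IsComponentUnion G S (X ∩ Y) where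
  notMem x hx := hX.notMem x (mem_inter.1 hx).1
  mem_of_adj x hx y hxy hy := mem_inter.2
    ⟨hX.mem_of_adj x (mem_inter.1 hx).1 y hxy hy, hY.mem_of_adj x (mem_inter.1 hx).2 y hxy hy⟩

theorem IsComponentUnion.sdiff [DecidableEq V] {S X Y : Finset V} (hX : IsComponentUnion G S X)
    (hY : IsComponentUnion G S Y) : IsComponentUnion G S (X \ Y) where
  notMem x hx := hX.notMem x (mem_sdiff.1 hx).1
  mem_of_adj x hx y hxy hy := mem_sdiff.2 ⟨hX.mem_of_adj x (mem_sdiff.1 hx).1 y hxy hy,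
    fun hyY => (mem_sdiff.1 hx).2
      (hY.mem_of_adj y hyY x hxy.symm (hX.notMem x (mem_sdiff.1 hx).1))⟩

variable [Fintype V]

open scoped Classical in
/-- The vertex sets of the connected components of `G - S`, as the minimal nonempty sets of
vertices closed under adjacency in `G - S`. -/
noncomputable def components (G : SimpleGraph V) (S : Finset V) : Finset (Finset V) :=
  {C | Minimal (fun X => X.Nonempty ∧ IsComponentUnion G S X) C}

variable {S C D : Finset V}

theorem mem_components :
    C ∈ components G S ↔ Minimal (fun X => X.Nonempty ∧ IsComponentUnion G S X) C := by
  simp [components]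

theorem nonempty_of_mem_components (hC : C ∈ components G S) : C.Nonempty :=
  (mem_components.1 hC).prop.1

theorem isComponentUnion_of_mem_components (hC : C ∈ components G S) : IsComponentUnion G S C :=
  (mem_components.1 hC).prop.2

theorem notMem_of_mem_component (hC : C ∈ components G S) {x : V} (hx : x ∈ C) : x ∉ S :=
  (isComponentUnion_of_mem_components hC).notMem x hx

theorem mem_or_mem_of_adj (hC : C ∈ components G S) {x y : V} (hx : x ∈ C) (hxy : G.Adj x y) :
    y ∈ C ∨ y ∈ S :=
  or_iff_not_imp_right.2 ((isComponentUnion_of_mem_components hC).mem_of_adj x hx y hxy)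

theorem component_ne_univ (hC : C ∈ components G S) (hS : S.Nonempty) : C ≠ univ := by
  rintro rfl
  obtain ⟨s, hs⟩ := hS
  exact notMem_of_mem_component hC (mem_univ s) hs

theorem mem_components_of_boundary_subset {U : Finset V} (hC : C ∈ components G S)
    (hCU : ∀ x ∈ C, x ∉ U) (hbdry : ∀ x ∈ C, ∀ y, G.Adj x y → y ∉ C → y ∈ U) :
    C ∈ components G U := by
  refine mem_components.2 ⟨⟨nonempty_of_mem_components hC, hCU, fun x hx y hxy => ?_⟩,
    fun Y hY hYC => (mem_components.1 hC).le_of_le ⟨hY.1, ?_, fun x hx y hxy hy => ?_⟩ hYC⟩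
  · exact not_imp_comm.1 (hbdry x hx y hxy)
  · exact fun x hx => notMem_of_mem_component hC (hYC hx)
  · have hyC := (mem_or_mem_of_adj hC (hYC hx) hxy).resolve_right hy
    exact hY.2.mem_of_adj x hx y hxy (hCU y hyC)

theorem component_subset_of_mem (hC : C ∈ components G S) {X : Finset V}
    (hX : IsComponentUnion G S X) {v : V} (hvC : v ∈ C) (hvX : v ∈ X) : C ⊆ X := by
  classical
  exact ((mem_components.1 hC).le_of_le ⟨⟨v, mem_inter.2 ⟨hvC, hvX⟩⟩,
    (isComponentUnion_of_mem_components hC).inter hX⟩ inter_subset_left).trans inter_subset_right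

theorem component_eq_of_mem (hC : C ∈ components G S) (hD : D ∈ components G S) {v : V}
    (hvC : v ∈ C) (hvD : v ∈ D) : C = D :=
  (component_subset_of_mem hC (isComponentUnion_of_mem_components hD) hvC hvD).antisymm
    (component_subset_of_mem hD (isComponentUnion_of_mem_components hC) hvD hvC)

theorem exists_mem_component {v : V} (hv : v ∉ S) : ∃ C ∈ components G S, v ∈ C := by
  classical
  obtain ⟨C, -, hC⟩ := exists_minimal_le_of_wellFoundedLT
    (fun X => v ∈ X ∧ IsComponentUnion G S X) Sᶜ
    ⟨mem_compl.2 hv, fun x hx => mem_compl.1 hx, fun x _ y _ hy => mem_compl.2 hy⟩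
  refine ⟨C, mem_components.2 ⟨⟨⟨v, hC.prop.1⟩, hC.prop.2⟩, fun Y hY hYC => ?_⟩, hC.prop.1⟩
  by_cases hvY : v ∈ Y
  · exact hC.le_of_le ⟨hvY, hY.2⟩ hYC
  · obtain ⟨y, hy⟩ := hY.1
    have hsub := hC.le_of_le ⟨mem_sdiff.2 ⟨hC.prop.1, hvY⟩, hC.prop.2.sdiff hY.2⟩ sdiff_subset
    exact absurd hy (mem_sdiff.1 (hsub (hYC hy))).2

theorem pairwiseDisjoint_components (G : SimpleGraph V) (S : Finset V) :
    (components G S : Set (Finset V)).PairwiseDisjoint id := fun _ hC _ hD hne =>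
  disjoint_left.2 fun _ hvC hvD => hne (component_eq_of_mem hC hD hvC hvD)

theorem biUnion_components [DecidableEq V] (G : SimpleGraph V) (S : Finset V) :
    (components G S).biUnion id = Sᶜ := by
  ext v
  simp only [mem_biUnion, id, mem_compl]
  exact ⟨fun ⟨C, hC, hv⟩ => notMem_of_mem_component hC hv, exists_mem_component⟩

variable (G) in
/-- The components of odd order of `G - S`. -/
noncomputable def oddComponents (S : Finset V) : Finset (Finset V) :=
  {C ∈ components G S | Odd #C}

theorem even_card_oddComponents_add_card (heven : Even (Fintype.card V)) (S : Finset V) :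
    Even (#(oddComponents G S) + #S) := by
  classical
  have hodd := odd_sum_iff_odd_card_odd (s := components G S) fun C => #C
  rw [← card_compl_add_card S, ← biUnion_components G S,
    card_biUnion (pairwiseDisjoint_components G S), Nat.even_add] at heven
  rw [Nat.even_add, ← heven, ← Nat.not_odd_iff_even, ← Nat.not_odd_iff_even]
  exact not_congr hodd.symm

variable [DecidableEq V]

theorem subset_compl_of_mem_components (hC : C ∈ components G S) : S ⊆ Cᶜ := fun _ hx =>
  mem_compl.2 fun hxC => notMem_of_mem_component hC hxC hx

theorem union_ne_univ_of_mem_components (hC : C ∈ components G S) (hD : D ∈ components G S)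
    (hne : C ≠ D) : C ∪ S ≠ univ := fun huniv => by
  obtain ⟨x, hx⟩ := nonempty_of_mem_components hD
  exact (mem_union.1 (huniv ▸ mem_univ x)).elim
    (fun hxC => hne (component_eq_of_mem hC hD hxC hx)) (notMem_of_mem_component hD hx)

variable [DecidableRel G.Adj] {k : ℕ}

theorem cutSize_of_mem_components (hC : C ∈ components G S) :
    cutSize G C = #(G.interedges C S) := by
  rw [cutSize, ← union_sdiff_of_subset (subset_compl_of_mem_components hC),
    card_interedges_union_right disjoint_sdiff, Nat.add_eq_left, card_interedges_eq_zero_iff]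
  intro x hx y hy hxy
  rw [mem_sdiff, mem_compl] at hy
  exact (mem_or_mem_of_adj hC hx hxy).elim hy.1 hy.2

theorem sum_cutSize_components (hreg : G.IsRegularOfDegree k) (S : Finset V) :
    ∑ C ∈ components G S, cutSize G C + #(G.interedges S S) = k * #S := by
  rw [← cutSize_add_card_interedges_self hreg, cutSize, ← biUnion_components G S,
    card_interedges_biUnion_right (pairwiseDisjoint_components G S)]
  congr 1
  exact sum_congr rfl fun C hC => by rw [cutSize_of_mem_components hC, card_interedges_comm, id]

theorem cutSize_mod_two (hreg : G.IsRegularOfDegree k) {X : Finset V} (hX : Odd #X) :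
    cutSize G X % 2 = k % 2 := by
  obtain ⟨r, hr⟩ := even_card_interedges_self (G := G) X
  obtain ⟨t, ht⟩ := hX
  have := cutSize_add_card_interedges_self hreg X
  rw [hr, ht, mul_add, mul_left_comm] at this
  omega

variable (G) in
/-- The isolated vertices of `G - S`. -/
def isolatedVerts (S : Finset V) : Finset V := {v ∈ Sᶜ | G.neighborFinset v ⊆ S}

theorem mem_isolatedVerts {v : V} : v ∈ isolatedVerts G S ↔ v ∉ S ∧ ∀ w, G.Adj v w → w ∈ S := by
  simp [isolatedVerts, subset_iff]

theorem mem_isolatedVerts_iff_singleton_mem {v : V} :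
    v ∈ isolatedVerts G S ↔ {v} ∈ components G S := by
  rw [mem_isolatedVerts]
  constructor
  · rintro ⟨hvS, hadj⟩
    refine mem_components.2 ⟨⟨singleton_nonempty v, by simpa using hvS, fun x hx y hxy hy => ?_⟩,
      fun Y hY hYv => ((hY.1.subset_singleton_iff).1 hYv).ge⟩
    rw [mem_singleton.1 hx] at hxy
    exact absurd (hadj y hxy) hy
  · refine fun hv => ⟨notMem_of_mem_component hv (mem_singleton_self v), fun w hw => ?_⟩
    exact (mem_or_mem_of_adj hv (mem_singleton_self v) hw).resolve_left
      fun hwv => hw.ne (mem_singleton.1 hwv).symm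

theorem biUnion_isolatedVerts_subset (G : SimpleGraph V) [DecidableRel G.Adj] (S : Finset V) :
    (isolatedVerts G S).biUnion (G.neighborFinset ·) ⊆ S :=
  biUnion_subset.2 fun _ hv => (mem_filter.1 hv).2

variable (G k) in
/-- The nontrivial components of `G - S` joined to `S` by fewer than `2k - 2` edges. -/
noncomputable def thinComponents (S : Finset V) : Finset (Finset V) :=
  {C ∈ components G S | 2 ≤ #C ∧ cutSize G C < 2 * k - 2}

variable (G k) in
/-- The nontrivial components of `G - S` joined to `S` by at least `2k - 2` edges. -/
noncomputable def thickComponents (S : Finset V) : Finset (Finset V) :=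
  {C ∈ components G S | 2 ≤ #C ∧ 2 * k - 2 ≤ cutSize G C}

theorem card_components (G : SimpleGraph V) [DecidableRel G.Adj] (k : ℕ) (S : Finset V) :
    #(components G S) =
      #(isolatedVerts G S) + #(thinComponents G k S) + #(thickComponents G k S) := by
  have hiso : #(isolatedVerts G S) = #{C ∈ components G S | ¬ 2 ≤ #C} := by
    refine card_nbij (fun v => {v}) (fun v hv => ?_) (fun v _ w _ h => singleton_injective h)
      fun C hC => ?_
    · exact mem_filter.2 ⟨mem_isolatedVerts_iff_singleton_mem.1 hv, by simp⟩
    · obtain ⟨hC, hcard⟩ := mem_filter.1 hC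
      have := (nonempty_of_mem_components hC).card_pos
      obtain ⟨v, rfl⟩ := card_eq_one.1 (by omega : #C = 1)
      exact ⟨v, mem_isolatedVerts_iff_singleton_mem.2 hC, rfl⟩
  have hnontriv := card_filter_add_card_filter_not (s := {C ∈ components G S | 2 ≤ #C})
    fun C => cutSize G C < 2 * k - 2
  simp only [filter_filter, not_lt] at hnontriv
  rw [← card_filter_add_card_filter_not (s := components G S) fun C => 2 ≤ #C, ← hnontriv, hiso,
    thinComponents, thickComponents, add_comm, add_assoc]

theorem mul_card_components_add_le (hconn : G.Connected) (hvt : VertexTransitive G)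
    (hreg : G.IsRegularOfDegree k) (hk : 2 ≤ k) (hS : S.Nonempty) (e : ℕ)
    (he : ∀ C ∈ thickComponents G k S, k + e ≤ cutSize G C) :
    k * #(components G S) + e * #(thickComponents G k S) + #(G.interedges S S) ≤ k * #S := by
  have hsum : k * #(components G S) + e * #(thickComponents G k S) = ∑ C ∈ components G S,
      (k + if 2 ≤ #C ∧ 2 * k - 2 ≤ cutSize G C then e else 0) := by
    rw [sum_add_distrib, sum_const, ← sum_filter, sum_const, smul_eq_mul, smul_eq_mul, mul_comm,
      mul_comm e, thickComponents]
  rw [← sum_cutSize_components hreg S, hsum]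
  refine Nat.add_le_add_right (sum_le_sum fun C hC => ?_) _
  split_ifs with hthick
  · exact he C (mem_filter.2 ⟨hC, hthick⟩)
  · exact le_cutSize_of_connected hconn hvt hreg hk (nonempty_of_mem_components hC)
      (component_ne_univ hC hS)

theorem mul_card_components_add_mul_card_thickComponents_le (hconn : G.Connected)
    (hvt : VertexTransitive G) (hreg : G.IsRegularOfDegree k) (hk : 2 ≤ k) (hS : S.Nonempty) :
    k * #(components G S) + (k - 2) * #(thickComponents G k S) + #(G.interedges S S) ≤
      k * #S := by
  refine mul_card_components_add_le hconn hvt hreg hk hS (k - 2) fun C hC => ?_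
  have := (mem_filter.1 hC).2.2
  omega

end Components

namespace MatchedBlocks

variable {V : Type*} [Fintype V] [DecidableEq V] {G : SimpleGraph V} [DecidableRel G.Adj]
  {k a : ℕ} {A : V → Finset V} {m : V → V} {S C : Finset V}

theorem adj_match (h : MatchedBlocks G k a A m) (x : V) : G.Adj x (m x) := by
  have := h.neighborFinset_sdiff x ▸ mem_singleton_self (m x)
  exact (mem_neighborFinset ..).1 (mem_sdiff.1 this).1

theorem match_notMem_block (h : MatchedBlocks G k a A m) (x : V) : m x ∉ A x := by
  have := h.neighborFinset_sdiff x ▸ mem_singleton_self (m x)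
  exact (mem_sdiff.1 this).2

theorem match_match (h : MatchedBlocks G k a A m) (x : V) : m (m x) = x := by
  have : x ∈ G.neighborFinset (m x) \ A (m x) := mem_sdiff.2
    ⟨(mem_neighborFinset ..).2 (h.adj_match x).symm,
      fun hx => h.match_notMem_block x (h.isBlockMap.mem_comm.1 hx)⟩
  rw [h.neighborFinset_sdiff, mem_singleton] at this
  exact this.symm

theorem card_interedges_eq (h : MatchedBlocks G k a A m) {X Y : Finset V}
    (hX : ∀ x ∈ X, A x ⊆ X) (hXY : Disjoint X Y) :
    #(G.interedges X Y) = #{x ∈ X | m x ∈ Y} := by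
  rw [card_interedges_eq_sum, card_filter]
  refine sum_congr rfl fun x hx => ?_
  have hinter : G.neighborFinset x ∩ Y = {m x} ∩ Y := by
    rw [← h.neighborFinset_sdiff]
    ext y
    have : y ∈ Y → y ∉ A x := fun hy hyA => disjoint_left.1 hXY (hX x hx hyA) hy
    simp only [mem_inter, mem_sdiff]
    tauto
  rw [hinter]
  split_ifs with hm
  · rw [singleton_inter_of_mem hm, card_singleton]
  · rw [singleton_inter_of_notMem hm, card_empty]

theorem block_subset_of_mem_thinComponents (h : MatchedBlocks G k a A m)
    (hreg : G.IsRegularOfDegree k) (hk : 5 ≤ k) (hS : 2 ≤ #S) (hC : C ∈ thinComponents G k S)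
    {x : V} (hx : x ∈ C) : A x ⊆ C := by
  obtain ⟨hC, hcard, hcut⟩ := mem_filter.1 hC
  have hcompl := hS.trans (card_le_card (subset_compl_of_mem_components hC))
  by_contra hAC
  exact hcut.not_ge (h.two_mul_sub_two_le_cutSize hreg hk hcard hcompl hx hAC)

theorem le_card_filter_match_mem (h : MatchedBlocks G k a A m) (hreg : G.IsRegularOfDegree k)
    (hk : 5 ≤ k) (hS : 2 ≤ #S) (hC : C ∈ thinComponents G k S) : a ≤ #{c ∈ C | m c ∈ S} := by
  obtain ⟨hC', hcard, -⟩ := mem_filter.1 hC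
  have hdisj : Disjoint C S := disjoint_left.2 fun _ => notMem_of_mem_component hC'
  rw [← h.card_interedges_eq (fun x => h.block_subset_of_mem_thinComponents hreg hk hS hC) hdisj,
    ← cutSize_of_mem_components hC']
  exact h.le_cutSize C hcard (hS.trans (card_le_card (subset_compl_of_mem_components hC')))

theorem card_isolatedVerts_add_le (h : MatchedBlocks G k a A m) (hreg : G.IsRegularOfDegree k)
    (hk : 5 ≤ k) (hS : 2 ≤ #S) :
    #(isolatedVerts G S) + a * #(thinComponents G k S) ≤
      #{s ∈ S | m s ∈ isolatedVerts G S ∪ (thinComponents G k S).biUnion id} := by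
  set U := (thinComponents G k S).biUnion fun C => {c ∈ C | m c ∈ S} with hU
  have hcardU : a * #(thinComponents G k S) ≤ #U := by
    rw [hU, card_biUnion fun C hC D hD hne => ?_, mul_comm, ← smul_eq_mul, ← sum_const]
    · exact sum_le_sum fun C hC => h.le_card_filter_match_mem hreg hk hS hC
    · exact ((pairwiseDisjoint_components G S) (mem_filter.1 hC).1 (mem_filter.1 hD).1 hne).mono
        (filter_subset _ _) (filter_subset _ _)
  have hdisj : Disjoint (isolatedVerts G S) U := disjoint_left.2 fun v hv hvU => by
    obtain ⟨C, hC, hvC⟩ := mem_biUnion.1 hvU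
    obtain ⟨hC, hcard, -⟩ := mem_filter.1 hC
    rw [← component_eq_of_mem (mem_isolatedVerts_iff_singleton_mem.1 hv) hC
      (mem_singleton_self v) (mem_filter.1 hvC).1, card_singleton] at hcard
    omega
  calc #(isolatedVerts G S) + a * #(thinComponents G k S)
      ≤ #(isolatedVerts G S ∪ U) := by rw [card_union_of_disjoint hdisj]; omega
    _ ≤ _ := card_le_card_of_injOn m (fun u hu => ?_)
        (Function.LeftInverse.injective h.match_match).injOn
  simp only [hU, coe_union, coe_biUnion, Set.mem_union, Set.mem_iUnion, mem_coe, mem_filter,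
    mem_union, mem_biUnion, id, h.match_match] at hu ⊢
  rcases hu with hu | ⟨C, hC, hu, hmS⟩
  · exact ⟨(mem_isolatedVerts.1 hu).2 _ (h.adj_match u), Or.inl hu⟩
  · exact ⟨hmS, Or.inr ⟨C, hC, hu⟩⟩

end MatchedBlocks

section NearBarriers

variable {V : Type*} [Fintype V] {G : SimpleGraph V} [DecidableRel G.Adj] {k : ℕ}
  {S C : Finset V}

variable (G k) in
/-- The hypotheses under which `G` is to be shown 4-factor-critical. -/
structure IsAdmissible : Prop where
  connected : G.Connected
  vertexTransitive : VertexTransitive G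
  regular : G.IsRegularOfDegree k
  five_le : 5 ≤ k
  not_colorable : ¬ G.Colorable 2
  even_card : Even (Fintype.card V)

variable (G) in
/-- A set of at least three vertices whose deletion leaves exactly two odd components fewer than it
has vertices, one parity step short of a barrier. -/
structure IsNearBarrier (S : Finset V) : Prop where
  three_le_card : 3 ≤ #S
  card_oddComponents : #(oddComponents G S) + 2 = #S

section Counting

variable [DecidableEq V]

theorem mem_thinComponents_or_mem_thickComponents (hC : C ∈ components G S) (hcard : 2 ≤ #C) :
    C ∈ thinComponents G k S ∨ C ∈ thickComponents G k S :=
  (Nat.lt_or_ge (cutSize G C) (2 * k - 2)).imp (fun hlt => mem_filter.2 ⟨hC, hcard, hlt⟩)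
    fun hge => mem_filter.2 ⟨hC, hcard, hge⟩

theorem isolatedVerts_eq_compl (hthin : thinComponents G k S = ∅)
    (hthick : thickComponents G k S = ∅) : isolatedVerts G S = Sᶜ := by
  refine (filter_subset _ _).antisymm fun x hx => ?_
  obtain ⟨C, hC, hxC⟩ := exists_mem_component (G := G) (mem_compl.1 hx)
  have hcard : #C ≤ 1 := by
    by_contra! hcard
    have := mem_thinComponents_or_mem_thickComponents (k := k) hC hcard
    simp only [hthin, hthick, notMem_empty, or_self] at this
  have hCx : C = {x} := eq_singleton_iff_unique_mem.2
    ⟨hxC, fun y hy => card_le_one.1 hcard y hy x hxC⟩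
  exact mem_isolatedVerts_iff_singleton_mem.2 (hCx ▸ hC)

theorem colorable_two_of_isolatedVerts_eq_compl (hiso : isolatedVerts G S = Sᶜ)
    (hS : #(G.interedges S S) = 0) : G.Colorable 2 := by
  refine colorable_two_of_forall_adj S fun x y hxy => ⟨fun hx hy => ?_, fun hy => ?_⟩
  · exact card_interedges_eq_zero_iff.1 hS x hx y hy hxy
  · exact (mem_isolatedVerts.1 (hiso ▸ mem_compl.2 hy)).2 x hxy.symm

namespace IsAdmissible

theorem exists_matchedBlocks (h : IsAdmissible G k) (hS : 2 ≤ #S)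
    (hthin : (thinComponents G k S).Nonempty) : ∃ a A m, MatchedBlocks G k a A m := by
  refine (forall_le_cutSize_or_exists_matchedBlocks h.connected h.vertexTransitive
    h.regular).resolve_left fun hcut => ?_
  obtain ⟨C, hC⟩ := hthin
  obtain ⟨hC, hcard, hlt⟩ := mem_filter.1 hC
  exact hlt.not_ge (hcut C hcard (hS.trans (card_le_card (subset_compl_of_mem_components hC))))

theorem card_isolatedVerts_add_mul_le (h : IsAdmissible G k) (hS : 2 ≤ #S)
    (hthin : (thinComponents G k S).Nonempty) :
    #(isolatedVerts G S) + k * #(thinComponents G k S) ≤ #S := by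
  obtain ⟨a, A, m, hA⟩ := h.exists_matchedBlocks hS hthin
  have := hA.card_isolatedVerts_add_le h.regular h.five_le hS
  have := card_filter_le S fun s => m s ∈ isolatedVerts G S ∪ (thinComponents G k S).biUnion id
  have := Nat.mul_le_mul_right #(thinComponents G k S) hA.le_block
  omega

theorem thinComponents_eq_empty_of_card_lt (h : IsAdmissible G k) (hS : 2 ≤ #S)
    (hlt : #S + #(thickComponents G k S) < #(components G S) + 4) :
    thinComponents G k S = ∅ := by
  by_contra hthin
  have hthin := nonempty_iff_ne_empty.2 hthin
  have hiso := h.card_isolatedVerts_add_mul_le hS hthin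
  have hpos := hthin.card_pos
  have := Nat.mul_le_mul_right #(thinComponents G k S) h.five_le
  have := card_components G k S
  omega

theorem mul_card_components_add_le (h : IsAdmissible G k) (hS : S.Nonempty) :
    k * #(components G S) + (k - 2) * #(thickComponents G k S) + #(G.interedges S S) ≤ k * #S :=
  mul_card_components_add_mul_card_thickComponents_le h.connected h.vertexTransitive h.regular
    (by have := h.five_le; omega) hS

theorem card_isolatedVerts_add_three_le_card_biUnion (h : IsAdmissible G k)
    (hiso : (isolatedVerts G S).Nonempty) :
    #(isolatedVerts G S) + 3 ≤ #((isolatedVerts G S).biUnion (G.neighborFinset ·)) := by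
  refine card_add_three_le_card_biUnion_neighborFinset h.connected h.vertexTransitive h.regular
    h.five_le h.not_colorable hiso fun huniv => ?_
  obtain ⟨v, hv⟩ := hiso
  exact (mem_isolatedVerts.1 hv).1 (biUnion_isolatedVerts_subset G S (huniv ▸ mem_univ v))

theorem card_isolatedVerts_add_three_le (h : IsAdmissible G k)
    (hiso : (isolatedVerts G S).Nonempty) : #(isolatedVerts G S) + 3 ≤ #S :=
  (h.card_isolatedVerts_add_three_le_card_biUnion hiso).trans
    (card_le_card (biUnion_isolatedVerts_subset G S))

end IsAdmissible

end Counting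

theorem IsAdmissible.card_oddComponents_add_two_le (h : IsAdmissible G k) (hS : 2 ≤ #S) :
    #(oddComponents G S) + 2 ≤ #S := by
  classical
  by_contra! hlt
  obtain ⟨r, hr⟩ := even_card_oddComponents_add_card (G := G) h.even_card S
  have hodd : #(oddComponents G S) ≤ #(components G S) := card_filter_le _ _
  have hcard : #S ≤ #(components G S) := by omega
  have hcount := h.mul_card_components_add_le (card_pos.1 (by omega : 0 < #S))
  have hmul := Nat.mul_le_mul_left k hcard
  have hk : k - 2 ≠ 0 := by have := h.five_le; omega
  have hthick : #(thickComponents G k S) = 0 :=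
    (Nat.mul_eq_zero.1 (by omega : (k - 2) * #(thickComponents G k S) = 0)).resolve_left hk
  have hthin := h.thinComponents_eq_empty_of_card_lt (S := S) hS (by omega)
  exact h.not_colorable (colorable_two_of_isolatedVerts_eq_compl
    (isolatedVerts_eq_compl hthin (card_eq_zero.1 hthick)) (by omega))

theorem IsNearBarrier.odd_card (hS : IsNearBarrier G S) (h : IsAdmissible G k)
    (hC : C ∈ components G S) : Odd #C := by
  classical
  by_contra hCeven
  have hle := hS.three_le_card
  have hoddS := hS.card_oddComponents
  have hk := h.five_le
  have hsplit := card_filter_add_card_filter_not (s := components G S) fun C => Odd #C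
  rw [← oddComponents] at hsplit
  have heven : 0 < #{C ∈ components G S | ¬ Odd #C} := card_pos.2 ⟨C, mem_filter.2 ⟨hC, hCeven⟩⟩
  have hthick : #(thickComponents G k S) ≤ 1 := by
    have hcount := h.mul_card_components_add_le (card_pos.1 (by omega : 0 < #S))
    by_contra! hthick
    have := Nat.mul_le_mul_left k (by omega : #S + 1 ≤ #(components G S) + 2)
    have := Nat.mul_le_mul_left (k - 2) hthick
    lia
  have hthin := h.thinComponents_eq_empty_of_card_lt (S := S) (by omega) (by omega)
  have heven_le : #{C ∈ components G S | ¬ Odd #C} ≤ #(thickComponents G k S) := by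
    refine card_le_card fun D hD => ?_
    obtain ⟨hD, hDeven⟩ := mem_filter.1 hD
    have hDcard : #D ≠ 1 := fun h1 => hDeven (h1 ▸ odd_one)
    have := (nonempty_of_mem_components hD).card_pos
    exact (mem_thinComponents_or_mem_thickComponents hD (by omega)).resolve_left
      (hthin ▸ notMem_empty D)
  have hcomps := card_components G k S
  rw [hthin, card_empty] at hcomps
  have := h.card_isolatedVerts_add_three_le (S := S) (card_pos.1 (by omega))
  omega

theorem IsNearBarrier.card_components_add_two (hS : IsNearBarrier G S) (h : IsAdmissible G k) :
    #(components G S) + 2 = #S := by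
  rw [← hS.card_oddComponents, oddComponents, filter_true_of_mem fun C => hS.odd_card h]

theorem exists_adj_component_of_card_le_four (h : IsAdmissible G k) (hC : C ∈ components G S)
    (hD : D ∈ components G S) (hne : C ≠ D) (hcard : #S ≤ 4) {s : V} (hs : s ∈ S) :
    ∃ x ∈ C, G.Adj s x := by
  classical
  by_contra! hno
  have hsep := two_mul_add_two_le_three_mul_card_separator h.connected h.vertexTransitive h.regular
    (X := C) (S := S.erase s) (nonempty_of_mem_components hC) (fun x hx y hxy => mem_union.2 <|
      (mem_or_mem_of_adj hC hx hxy).imp_right fun hyS => mem_erase.2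
        ⟨fun hys => hno x hx (hys ▸ hxy.symm), hyS⟩)
    fun huniv => union_ne_univ_of_mem_components hC hD hne <| univ_subset_iff.1 <|
      huniv ▸ union_subset_union_right (erase_subset _ _)
  rw [card_erase_of_mem hs] at hsep
  have := h.five_le
  omega

variable [DecidableEq V]

namespace MatchedBlocks

variable {A : V → Finset V} {m : V → V}

theorem adj_of_mem_block (h : MatchedBlocks G k k A m) {x y : V} (hy : y ∈ A x) (hne : y ≠ x) :
    G.Adj x y := by
  have hsub : G.neighborFinset x ∩ A x ⊆ (A x).erase x := fun z hz => by
    rw [mem_inter, mem_neighborFinset] at hz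
    exact mem_erase.2 ⟨hz.1.ne', hz.2⟩
  have hinter : G.neighborFinset x ∩ A x = (A x).erase x := eq_of_subset_of_card_le hsub (by
    have := h.card_neighborFinset_inter x
    rw [card_erase_of_mem (h.isBlockMap.mem_self x), h.card_block]
    omega)
  have hyN : y ∈ G.neighborFinset x ∩ A x := hinter ▸ mem_erase.2 ⟨hne, hy⟩
  exact (mem_neighborFinset ..).1 (mem_inter.1 hyN).1

theorem isolatedVerts_eq_empty (h : MatchedBlocks G k k A m)
    (hlt : #(G.interedges S S) < (k - 1) * (k - 2)) : isolatedVerts G S = ∅ := by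
  refine eq_empty_of_forall_notMem fun v hv => hlt.not_ge ?_
  have hsub : (A v).erase v ⊆ S := fun y hy =>
    (mem_isolatedVerts.1 hv).2 y (h.adj_of_mem_block (mem_of_mem_erase hy) (ne_of_mem_erase hy))
  have hcard : #((A v).erase v) = k - 1 := by
    rw [card_erase_of_mem (h.isBlockMap.mem_self v), h.card_block]
  refine le_trans ?_ (card_interedges_mono hsub hsub)
  rw [card_interedges_eq_sum, ← hcard, ← smul_eq_mul, ← sum_const]
  refine sum_le_sum fun x hx => ?_
  have hx' : #(((A v).erase v).erase x) = k - 2 := by rw [card_erase_of_mem hx]; omega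
  rw [← hx']
  refine card_le_card fun y hy => mem_inter.2 ⟨(mem_neighborFinset ..).2 ?_, mem_of_mem_erase hy⟩
  refine h.adj_of_mem_block ?_ (ne_of_mem_erase hy)
  rw [h.isBlockMap.eq_of_mem (mem_of_mem_erase hx)]
  exact mem_of_mem_erase (mem_of_mem_erase hy)

theorem subset_biUnion_block (h : MatchedBlocks G k k A m) (hG : IsAdmissible G k)
    (hC : C ∈ components G S) (hcard : #S ≤ k) (hm : ∀ s ∈ S, m s ∉ C) (hCS : C ∪ S ≠ univ) :
    S ⊆ C.biUnion A := by
  set W := C.biUnion A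
  have hCW : C ⊆ W := fun x hx => mem_biUnion.2 ⟨x, hx, h.isBlockMap.mem_self x⟩
  have hWCS : W ⊆ C ∪ S := biUnion_subset.2 fun x hx w hw => mem_union.2 <| by
    obtain rfl | hne := eq_or_ne w x
    · exact Or.inl hx
    · exact mem_or_mem_of_adj hC hx (h.adj_of_mem_block hw hne)
  have hAW : ∀ w ∈ W, A w ⊆ W := fun w hw => by
    obtain ⟨x, hx, hwx⟩ := mem_biUnion.1 hw
    rw [h.isBlockMap.eq_of_mem hwx]
    exact subset_biUnion_of_mem A hx
  have hcut : cutSize G W ≤ #(W ∩ S) := by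
    rw [cutSize, h.card_interedges_eq hAW disjoint_compl_right, ← filter_mem_eq_inter]
    refine card_le_card fun w hw => ?_
    obtain ⟨hwW, hmw⟩ := mem_filter.1 hw
    refine mem_filter.2 ⟨hwW, ?_⟩
    by_contra hwS
    have hwC := (mem_union.1 (hWCS hwW)).resolve_right hwS
    rcases mem_or_mem_of_adj hC hwC (h.adj_match w) with hmC | hmS
    · exact mem_compl.1 hmw (hCW hmC)
    · exact hm _ hmS ((h.match_match w).symm ▸ hwC)
  have hk : k ≤ cutSize G W := le_cutSize_of_connected hG.connected hG.vertexTransitive hG.regular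
    (by have := hG.five_le; omega) ((nonempty_of_mem_components hC).mono hCW)
    fun huniv => hCS (univ_subset_iff.1 (huniv ▸ hWCS))
  exact inter_eq_right.1 (eq_of_subset_of_card_le inter_subset_right (by omega))

theorem component_eq_of_mem_biUnion_block (h : MatchedBlocks G k k A m) {D : Finset V}
    (hC : C ∈ components G S) (hD : D ∈ components G S) {s : V} (hsC : s ∈ C.biUnion A)
    (hsD : s ∈ D.biUnion A) : C = D := by
  obtain ⟨x, hxC, hsx⟩ := mem_biUnion.1 hsC
  obtain ⟨y, hyD, hsy⟩ := mem_biUnion.1 hsD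
  obtain rfl | hne := eq_or_ne y x
  · exact component_eq_of_mem hC hD hxC hyD
  have hyx : y ∈ A x := by
    rw [← h.isBlockMap.eq_of_mem hsx, h.isBlockMap.eq_of_mem hsy]
    exact h.isBlockMap.mem_self y
  have hyC := (mem_or_mem_of_adj hC hxC (h.adj_of_mem_block hyx hne)).resolve_right
    (notMem_of_mem_component hD hyD)
  exact component_eq_of_mem hC hD hyC hyD

end MatchedBlocks

namespace IsNearBarrier

theorem mul_card_thickComponents_add_le (hS : IsNearBarrier G S) (h : IsAdmissible G k) :
    (k - 2) * #(thickComponents G k S) + #(G.interedges S S) ≤ 2 * k := by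
  have hcount := h.mul_card_components_add_le
    (card_pos.1 (by have := hS.three_le_card; omega : 0 < #S))
  rw [← hS.card_components_add_two h, mul_add] at hcount
  omega

theorem card_thickComponents_le (hS : IsNearBarrier G S) (h : IsAdmissible G k) :
    #(thickComponents G k S) ≤ 3 := by
  by_contra! hlt
  have := hS.mul_card_thickComponents_add_le h
  have := Nat.mul_le_mul_left (k - 2) hlt
  have := h.five_le
  omega

theorem eq_six_of_card_thickComponents_eq_three (hS : IsNearBarrier G S) (h : IsAdmissible G k)
    (hthick : #(thickComponents G k S) = 3) : k = 6 := by
  have hk := h.five_le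
  obtain rfl | hk6 : k = 5 ∨ 6 ≤ k := by omega
  · have hcount := mul_card_components_add_le h.connected h.vertexTransitive h.regular (by omega)
      (card_pos.1 (by have := hS.three_le_card; omega : 0 < #S)) 4 fun C hC => by
        obtain ⟨hC, -, hcut⟩ := mem_filter.1 hC
        have := cutSize_mod_two h.regular (hS.odd_card h hC)
        omega
    have := hS.card_components_add_two h
    omega
  · have := hS.mul_card_thickComponents_add_le h
    rw [hthick] at this
    omega

theorem matchedBlocks_tight (hS : IsNearBarrier G S) (h : IsAdmissible G k)
    (hthin : (thinComponents G k S).Nonempty) {a : ℕ} {A : V → Finset V} {m : V → V}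
    (hA : MatchedBlocks G k a A m) :
    a = k ∧ k ≤ 6 ∧ #(isolatedVerts G S) + k = #S ∧ #(thinComponents G k S) = 1 ∧
      2 ≤ #(thickComponents G k S) ∧
      ∀ s ∈ S, m s ∈ isolatedVerts G S ∪ (thinComponents G k S).biUnion id := by
  have hcomps := hS.card_components_add_two h
  rw [card_components G k S] at hcomps
  have hS2 : 2 ≤ #S := by omega
  have hk := h.five_le
  have hka := hA.le_block
  have hcount := hA.card_isolatedVerts_add_le h.regular hk hS2
  have hfilter := card_filter_le S
    fun s => m s ∈ isolatedVerts G S ∪ (thinComponents G k S).biUnion id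
  have hpos := hthin.card_pos
  have hthick := hS.card_thickComponents_le h
  have hsix := hS.eq_six_of_card_thickComponents_eq_three h
  have hone : #(thinComponents G k S) = 1 := by
    by_contra hne
    have := Nat.mul_le_mul_right #(thinComponents G k S) (hk.trans hka)
    omega
  rw [hone, mul_one] at hcount
  exact ⟨by omega, by omega, by omega, hone, by omega, card_filter_eq_iff.1 (by omega)⟩

theorem thinComponents_eq_empty (hS : IsNearBarrier G S) (h : IsAdmissible G k) :
    thinComponents G k S = ∅ := by
  by_contra hthin
  have hthin := nonempty_iff_ne_empty.2 hthin
  have hk := h.five_le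
  obtain ⟨a, A, m, hA⟩ := h.exists_matchedBlocks (by have := hS.three_le_card; omega) hthin
  obtain ⟨rfl, hk6, hcard, hone, hthick, hm⟩ := hS.matchedBlocks_tight h hthin hA
  have hiso : isolatedVerts G S = ∅ := hA.isolatedVerts_eq_empty <| by
    have := hS.mul_card_thickComponents_add_le h
    have := Nat.mul_le_mul_left (a - 2) hthick
    have : 4 * 3 ≤ (a - 1) * (a - 2) := Nat.mul_le_mul (by omega) (by omega)
    omega
  obtain ⟨C₀, hC₀⟩ := card_eq_one.1 hone
  simp only [hiso, hC₀, singleton_biUnion, id, empty_union] at hm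
  rw [hiso, card_empty, zero_add] at hcard
  have hC₀thin : C₀ ∈ thinComponents G a S := hC₀ ▸ mem_singleton_self C₀
  obtain ⟨hC₀comp, -, hC₀cut⟩ := mem_filter.1 hC₀thin
  have hsub : ∀ C ∈ thickComponents G a S, S ⊆ C.biUnion A := fun C hC => by
    obtain ⟨hC, -, hcut⟩ := mem_filter.1 hC
    have hdisj : ∀ x ∈ C₀, x ∉ C := fun x hx₀ hx =>
      absurd (component_eq_of_mem hC hC₀comp hx hx₀ ▸ hcut) hC₀cut.not_ge
    refine hA.subset_biUnion_block h hC hcard.ge (fun s hs => hdisj _ (hm s hs)) fun huniv => ?_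
    obtain ⟨x, hx⟩ := nonempty_of_mem_components hC₀comp
    exact (mem_union.1 (huniv ▸ mem_univ x)).elim (hdisj x hx)
      (notMem_of_mem_component hC₀comp hx)
  obtain ⟨C, hC, D, hD, hCD⟩ := one_lt_card.1 hthick
  obtain ⟨s, hs⟩ : S.Nonempty := card_pos.1 (by omega)
  exact hCD (hA.component_eq_of_mem_biUnion_block (mem_filter.1 hC).1 (mem_filter.1 hD).1
    (hsub C hC hs) (hsub D hD hs))

theorem card_isolatedVerts_add_card_thickComponents (hS : IsNearBarrier G S)
    (h : IsAdmissible G k) : #(isolatedVerts G S) + #(thickComponents G k S) + 2 = #S := by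
  have := card_components G k S
  rw [hS.thinComponents_eq_empty h, card_empty] at this
  have := hS.card_components_add_two h
  omega

end IsNearBarrier

end NearBarriers

section Uncrossing

variable {V : Type*} [Fintype V] {G : SimpleGraph V} {S T C D : Finset V}

theorem component_subset_of_disjoint (hC : C ∈ components G S) (hD : D ∈ components G T)
    (hDS : Disjoint D S) {v : V} (hvC : v ∈ C) (hvD : v ∈ D) : D ⊆ C := by
  classical
  have hDC : IsComponentUnion G T (D ∩ C) := by
    refine ⟨fun x hx => notMem_of_mem_component hD (mem_inter.1 hx).1, fun x hx y hxy hy => ?_⟩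
    obtain ⟨hxD, hxC⟩ := mem_inter.1 hx
    have hyD := (mem_or_mem_of_adj hD hxD hxy).resolve_right hy
    exact mem_inter.2
      ⟨hyD, (mem_or_mem_of_adj hC hxC hxy).resolve_right (disjoint_left.1 hDS hyD)⟩
  exact (component_subset_of_mem hD hDC hvD (mem_inter.2 ⟨hvD, hvC⟩)).trans inter_subset_right

variable [DecidableEq V]

/-- The components of `G - S` containing a vertex of `T`. -/
noncomputable def componentsMeeting (G : SimpleGraph V) (S T : Finset V) : Finset (Finset V) :=
  {C ∈ components G S | ¬ Disjoint C T}

theorem sum_card_inter_componentsMeeting_le :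
    ∑ C ∈ componentsMeeting G S T, #(C ∩ T) ≤ #(T \ S) := by
  rw [← card_biUnion fun C hC D hD hne => ?_]
  · refine card_le_card (biUnion_subset.2 fun C hC x hx => mem_sdiff.2 ⟨(mem_inter.1 hx).2, ?_⟩)
    exact notMem_of_mem_component (mem_filter.1 hC).1 (mem_inter.1 hx).1
  · exact ((pairwiseDisjoint_components G S) (mem_filter.1 hC).1 (mem_filter.1 hD).1 hne).mono
      inter_subset_left inter_subset_left

theorem components_subset_of_componentsMeeting :
    components G T ⊆ (componentsMeeting G T S ∪ (components G S ∩ components G T)) ∪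
      (componentsMeeting G S T).biUnion fun C => {D ∈ components G T | D ⊆ C} := by
  intro D hD
  rw [mem_union, mem_union]
  by_cases hDS : Disjoint D S
  · obtain ⟨v, hvD⟩ := nonempty_of_mem_components hD
    obtain ⟨C, hC, hvC⟩ := exists_mem_component (G := G) (disjoint_left.1 hDS hvD)
    have hDC := component_subset_of_disjoint hC hD hDS hvC hvD
    by_cases hCT : Disjoint C T
    · obtain rfl := (component_subset_of_disjoint hD hC hCT hvD hvC).antisymm hDC
      exact Or.inl (Or.inr (mem_inter.2 ⟨hC, hD⟩))
    · exact Or.inr (mem_biUnion.2 ⟨C, mem_filter.2 ⟨hC, hCT⟩, mem_filter.2 ⟨hD, hDC⟩⟩)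
  · exact Or.inl (Or.inl (mem_filter.2 ⟨hD, hDS⟩))

theorem erase_union_subset_components_union (hC : C ∈ components G S) :
    (components G S).erase C ∪ {D ∈ components G T | D ⊆ C} ⊆
      components G (S ∪ C ∩ T) := by
  intro D hD
  rw [mem_union, mem_erase, mem_filter] at hD
  rcases hD with ⟨hDC, hD⟩ | ⟨hD, hDC⟩
  · refine mem_components_of_boundary_subset hD (fun x hx hxU => ?_) fun x hx y hxy hy =>
      mem_union_left _ ((mem_or_mem_of_adj hD hx hxy).resolve_left hy)
    rcases mem_union.1 hxU with hxS | hxC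
    · exact notMem_of_mem_component hD hx hxS
    · exact hDC (component_eq_of_mem hD hC hx (mem_inter.1 hxC).1)
  · refine mem_components_of_boundary_subset hD (fun x hx hxU => ?_) fun x hx y hxy hy => ?_
    · rcases mem_union.1 hxU with hxS | hxT
      · exact notMem_of_mem_component hC (hDC hx) hxS
      · exact notMem_of_mem_component hD hx (mem_inter.1 hxT).2
    · have hyT := (mem_or_mem_of_adj hD hx hxy).resolve_left hy
      rcases mem_or_mem_of_adj hC (hDC hx) hxy with hyC | hyS
      · exact mem_union_right _ (mem_inter.2 ⟨hyC, hyT⟩)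
      · exact mem_union_left _ hyS

variable [DecidableRel G.Adj] {k : ℕ}

/-- Deleting `C ∩ T` in addition to `S` must lose at least four odd components by the maximality of
`S`, whereas all components of `G - T` inside `C` survive. -/
theorem card_components_subset_lt (h : IsAdmissible G k) (hS : Maximal (IsNearBarrier G) S)
    (hT : IsNearBarrier G T) (hC : C ∈ componentsMeeting G S T) :
    #{D ∈ components G T | D ⊆ C} + 1 ≤ #(C ∩ T) := by
  obtain ⟨hC, hCT⟩ := mem_filter.1 hC
  have hpos : 0 < #(C ∩ T) := card_pos.2 (not_disjoint_iff_nonempty_inter.1 hCT)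
  have hU : #(S ∪ C ∩ T) = #S + #(C ∩ T) := card_union_of_disjoint <| disjoint_left.2
    fun x hx hxC => notMem_of_mem_component hC (mem_inter.1 hxC).1 hx
  have hS3 := hS.prop.three_le_card
  have hodd : #(oddComponents G (S ∪ C ∩ T)) + 4 ≤ #(S ∪ C ∩ T) := by
    have hle := h.card_oddComponents_add_two_le (S := S ∪ C ∩ T) (by omega)
    have hne : #(oddComponents G (S ∪ C ∩ T)) + 2 ≠ #(S ∪ C ∩ T) := fun heq => by
      have := card_le_card (hS.le_of_ge ⟨by omega, heq⟩ subset_union_left)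
      omega
    obtain ⟨r, hr⟩ := even_card_oddComponents_add_card (G := G) h.even_card (S ∪ C ∩ T)
    omega
  have hcard : #((components G S).erase C ∪ {D ∈ components G T | D ⊆ C}) ≤
      #(oddComponents G (S ∪ C ∩ T)) := card_le_card fun D hD =>
    mem_filter.2 ⟨erase_union_subset_components_union hC hD, (mem_union.1 hD).elim
      (fun hD => hS.prop.odd_card h (mem_of_mem_erase hD))
      fun hD => hT.odd_card h (mem_filter.1 hD).1⟩
  rw [card_union_of_disjoint, card_erase_of_mem hC] at hcard
  · have := hS.prop.card_components_add_two h
    omega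
  · refine disjoint_left.2 fun D hD hDC => ne_of_mem_erase hD ?_
    obtain ⟨x, hx⟩ := nonempty_of_mem_components (mem_of_mem_erase hD)
    exact component_eq_of_mem (mem_of_mem_erase hD) hC hx ((mem_filter.1 hDC).2 hx)

theorem card_inter_add_card_componentsMeeting_le (h : IsAdmissible G k)
    (hS : Maximal (IsNearBarrier G) S) (hT : IsNearBarrier G T) :
    #(S ∩ T) + #(componentsMeeting G S T) ≤
      #(componentsMeeting G T S) + #(components G S ∩ components G T) + 2 := by
  have hcover := card_le_card (components_subset_of_componentsMeeting (G := G) (S := S) (T := T))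
  have hinner : ∑ C ∈ componentsMeeting G S T, (#{D ∈ components G T | D ⊆ C} + 1) ≤ #(T \ S) :=
    (sum_le_sum fun C hC => card_components_subset_lt h hS hT hC).trans
      sum_card_inter_componentsMeeting_le
  rw [sum_add_distrib, sum_const, smul_eq_mul, mul_one] at hinner
  have hbiUnion := card_biUnion_le (s := componentsMeeting G S T)
    (t := fun C => {D ∈ components G T | D ⊆ C})
  have hcomps := hT.card_components_add_two h
  have hTS := card_sdiff_add_card_inter T S
  rw [inter_comm] at hTS
  have hunion := card_union_le (componentsMeeting G T S) (components G S ∩ components G T)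
  have := hcover.trans (card_union_le _ _)
  omega

theorem components_inter_subset (h : IsAdmissible G k) (hS : IsNearBarrier G S) :
    components G S ∩ components G T ⊆ oddComponents G (S ∩ T) := fun D hD => by
  obtain ⟨hDS, hDT⟩ := mem_inter.1 hD
  refine mem_filter.2 ⟨mem_components_of_boundary_subset hDS (fun x hx hxST => ?_)
    fun x hx y hxy hy => mem_inter.2 ⟨?_, ?_⟩, hS.odd_card h hDS⟩
  · exact notMem_of_mem_component hDS hx (mem_inter.1 hxST).1
  · exact (mem_or_mem_of_adj hDS hx hxy).resolve_left hy
  · exact (mem_or_mem_of_adj hDT hx hxy).resolve_left hy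

theorem card_inter_le_two (h : IsAdmissible G k) (hS : Maximal (IsNearBarrier G) S)
    (hT : Maximal (IsNearBarrier G) T) (hne : S ≠ T) : #(S ∩ T) ≤ 2 := by
  by_contra! hcard
  have hST := card_inter_add_card_componentsMeeting_le h hS hT.prop
  have hTS := card_inter_add_card_componentsMeeting_le h hT hS.prop
  rw [inter_comm T S, inter_comm (components G T)] at hTS
  have hsub := components_inter_subset (T := T) h hS.prop
  have hodd := h.card_oddComponents_add_two_le (S := S ∩ T) (by omega)
  have hle := card_le_card hsub
  have hnear : IsNearBarrier G (S ∩ T) := ⟨hcard, by omega⟩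
  have hall := eq_of_subset_of_card_le hsub (by omega)
  obtain ⟨s, hsS, hsT⟩ := not_subset.1 fun hsub => hne (hS.eq_of_le hT.prop hsub)
  obtain ⟨D, hD, hsD⟩ := exists_mem_component (G := G) (S := S ∩ T)
    fun hs => hsT (mem_inter.1 hs).2
  have hDS : D ∈ components G S ∩ components G T :=
    hall ▸ mem_filter.2 ⟨hD, hnear.odd_card h hD⟩
  exact notMem_of_mem_component (mem_inter.1 hDS).1 hsD hsS

theorem card_componentsMeeting_comm (h : IsAdmissible G k) (hS : Maximal (IsNearBarrier G) S)
    (hT : Maximal (IsNearBarrier G) T) (hcard : #(S ∩ T) = 2) :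
    #(componentsMeeting G S T) = #(componentsMeeting G T S) := by
  have hST := card_inter_add_card_componentsMeeting_le h hS hT.prop
  have hTS := card_inter_add_card_componentsMeeting_le h hT hS.prop
  rw [inter_comm T S, inter_comm (components G T)] at hTS
  have hle := card_le_card (components_inter_subset (T := T) h hS.prop)
  have hodd := h.card_oddComponents_add_two_le hcard.ge
  omega

/-- Two components cannot be separated by fewer than four vertices, and if four suffice then `G`
splits into pairs of twins, one of which would connect the two components. -/
theorem IsNearBarrier.isolatedVerts_nonempty (hS : IsNearBarrier G S) (h : IsAdmissible G k)
    (hcard : 4 ≤ #S) : (isolatedVerts G S).Nonempty := by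
  by_contra hiso
  rw [not_nonempty_iff_eq_empty] at hiso
  have hcount := hS.card_isolatedVerts_add_card_thickComponents h
  rw [hiso, card_empty] at hcount
  have hsix := hS.eq_six_of_card_thickComponents_eq_three h
  have hthree := hS.card_thickComponents_le h
  obtain ⟨C, hC, D, hD, hne⟩ := one_lt_card.1 (by omega : 1 < #(thickComponents G k S))
  replace hC := (mem_filter.1 hC).1
  replace hD := (mem_filter.1 hD).1
  have hsep : ∀ x ∈ C, ∀ y, G.Adj x y → y ∈ C ∪ S := fun x hx y hxy =>
    mem_union.2 (mem_or_mem_of_adj hC hx hxy)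
  have hCS := union_ne_univ_of_mem_components hC hD hne
  have hlt : k < 6 := by
    by_contra! hk
    have := six_le_card_separator h.connected h.vertexTransitive h.regular hk
      (nonempty_of_mem_components hC) hsep hCS
    omega
  obtain rfl : k = 5 := by have := h.five_le; omega
  obtain ⟨A, hA, hA2, htwin⟩ := exists_twin_blocks_of_separator h.connected h.vertexTransitive
    h.regular (nonempty_of_mem_components hC) hsep hCS (by omega)
  obtain ⟨c, hc, hcA⟩ : ∃ c ∈ C, ¬ A c ⊆ C := by
    by_contra! hAC
    exact Nat.not_even_iff_odd.2 (hS.odd_card h hC) (even_iff_two_dvd.2 (hA.dvd_card hAC hA2))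
  obtain ⟨s, hsA, hsC⟩ := not_subset.1 hcA
  have hcs : s = c ∨ G.Adj c s := by
    rw [← mem_closedNbhd, ← htwin c s hsA, mem_closedNbhd]
    exact Or.inl rfl
  have hsS := (mem_or_mem_of_adj hC hc (hcs.resolve_left fun hsc => hsC (hsc ▸ hc))).resolve_left
    hsC
  obtain ⟨y, hyD, hsy⟩ := exists_adj_component_of_card_le_four h hD hC hne.symm (by omega) hsS
  have hcy : y = c ∨ G.Adj c y := by
    rw [← mem_closedNbhd, ← htwin c s hsA, mem_closedNbhd]
    exact Or.inr hsy
  refine hne (component_eq_of_mem hC hD ?_ hyD)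
  exact hcy.elim (fun hyc => hyc ▸ hc)
    fun hcy => (mem_or_mem_of_adj hC hc hcy).resolve_right (notMem_of_mem_component hD hyD)

end Uncrossing

section Transport

variable {V : Type*} [DecidableEq V] {G : SimpleGraph V} {S C : Finset V}

theorem IsComponentUnion.smul (φ : G ≃g G) {X : Finset V} (hX : IsComponentUnion G S X) :
    IsComponentUnion G (φ • S) (φ • X) where
  notMem _ hx hxS := hX.notMem _ (inv_smul_mem_iff.2 hx) (inv_smul_mem_iff.2 hxS)
  mem_of_adj _ hx _ hxy hy := inv_smul_mem_iff.1 <| hX.mem_of_adj _ (inv_smul_mem_iff.2 hx) _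
    ((smul_adj_smul_iff φ⁻¹).2 hxy) fun hyS => hy (inv_smul_mem_iff.1 hyS)

variable [Fintype V]

theorem smul_mem_components (φ : G ≃g G) (hC : C ∈ components G S) :
    φ • C ∈ components G (φ • S) := by
  refine mem_components.2 ⟨⟨(nonempty_of_mem_components hC).smul_finset,
    (isComponentUnion_of_mem_components hC).smul φ⟩, fun Y hY hYC => ?_⟩
  have hY' := hY.2.smul φ⁻¹
  rw [inv_smul_smul] at hY'
  exact smul_finset_subset_iff.2 <| (mem_components.1 hC).le_of_le ⟨hY.1.smul_finset, hY'⟩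
    (smul_finset_subset_iff.2 (by rwa [inv_inv]))

theorem card_filter_components_smul (φ : G ≃g G) {P : Finset V → Prop} [DecidablePred P]
    (hP : ∀ (ψ : G ≃g G) C, P C → P (ψ • C)) (S : Finset V) :
    #{C ∈ components G (φ • S) | P C} = #{C ∈ components G S | P C} := by
  refine card_nbij' (φ⁻¹ • ·) (φ • ·) (fun C hC => ?_) (fun C hC => ?_)
    (fun C _ => smul_inv_smul φ C) fun C _ => inv_smul_smul φ C
  · obtain ⟨hC, hPC⟩ := mem_filter.1 hC
    have := smul_mem_components φ⁻¹ hC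
    rw [inv_smul_smul] at this
    exact mem_filter.2 ⟨this, hP _ _ hPC⟩
  · obtain ⟨hC, hPC⟩ := mem_filter.1 hC
    exact mem_filter.2 ⟨smul_mem_components φ hC, hP _ _ hPC⟩

theorem IsNearBarrier.smul (φ : G ≃g G) (hS : IsNearBarrier G S) : IsNearBarrier G (φ • S) where
  three_le_card := (card_smul_finset φ S).symm ▸ hS.three_le_card
  card_oddComponents := by
    rw [oddComponents, card_filter_components_smul φ (fun ψ C => (card_smul_finset ψ C).symm ▸ id),
      card_smul_finset]
    exact hS.card_oddComponents

theorem maximal_isNearBarrier_smul (φ : G ≃g G) (hS : Maximal (IsNearBarrier G) S) :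
    Maximal (IsNearBarrier G) (φ • S) := by
  refine ⟨hS.prop.smul φ, fun T hT hST => ?_⟩
  have := hS.le_of_ge (hT.smul φ⁻¹) (subset_smul_finset_iff.2 (by rwa [inv_inv]))
  have := smul_finset_subset_iff.1 this
  rwa [inv_inv] at this

variable [DecidableRel G.Adj] {k : ℕ}

theorem isolatedVerts_smul (φ : G ≃g G) (S : Finset V) :
    isolatedVerts G (φ • S) = φ • isolatedVerts G S := by
  ext v
  rw [← inv_smul_mem_iff, mem_isolatedVerts_iff_singleton_mem, mem_isolatedVerts_iff_singleton_mem,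
    ← smul_finset_singleton]
  refine ⟨fun hv => ?_, fun hv => ?_⟩
  · have := smul_mem_components φ⁻¹ hv
    rwa [inv_smul_smul] at this
  · have := smul_mem_components φ hv
    rwa [smul_inv_smul] at this

theorem card_thickComponents_smul (φ : G ≃g G) (S : Finset V) :
    #(thickComponents G k (φ • S)) = #(thickComponents G k S) :=
  card_filter_components_smul φ (fun ψ C hC => by rwa [card_smul_finset, cutSize_smul]) S

end Transport

section NearBarrierSystems

variable {V : Type*} [Fintype V] [DecidableEq V] {G : SimpleGraph V} [DecidableRel G.Adj] {k : ℕ}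

variable (G k) in
/-- An equivariant assignment of a maximal near barrier `S x` to every vertex `x`, for which the
sets `A x` of isolated vertices of `G - S x` are blocks with `b` elements and `G - S x` has `q`
nontrivial components. -/
structure NearBarrierSystem (A S : V → Finset V) (b q : ℕ) : Prop extends IsAdmissible G k where
  isBlockMap : IsBlockMap (G ≃g G) A
  maximal : ∀ x, Maximal (IsNearBarrier G) (S x)
  isolatedVerts_eq : ∀ x, isolatedVerts G (S x) = A x
  biUnion_neighborFinset : ∀ x, (A x).biUnion (G.neighborFinset ·) = S x
  card_block : ∀ x, #(A x) = b
  card_thickComponents : ∀ x, #(thickComponents G k (S x)) = q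

theorem eq_of_mem_isolatedVerts (h : IsAdmissible G k) {S T : Finset V}
    (hS : Maximal (IsNearBarrier G) S) (hT : Maximal (IsNearBarrier G) T) {v : V}
    (hvS : v ∈ isolatedVerts G S) (hvT : v ∈ isolatedVerts G T) : S = T := by
  by_contra hne
  have hcard := card_inter_le_two h hS hT hne
  have hsub : G.neighborFinset v ⊆ S ∩ T :=
    subset_inter (mem_filter.1 hvS).2 (mem_filter.1 hvT).2
  have := card_le_card hsub
  rw [card_neighborFinset_eq_degree, h.regular v] at this
  have := h.five_le
  omega

theorem exists_equivariant_maximal_isNearBarrier (h : IsAdmissible G k) {M : Finset V}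
    (hM : Maximal (IsNearBarrier G) M) (hiso : (isolatedVerts G M).Nonempty) :
    ∃ S : V → Finset V, (∀ x, ∃ φ : G ≃g G, S x = φ • M) ∧ (∀ (φ : G ≃g G) x, S (φ • x) = φ • S x) ∧
      (∀ x, Maximal (IsNearBarrier G) (S x)) ∧ ∀ x, x ∈ isolatedVerts G (S x) := by
  obtain ⟨v, hv⟩ := hiso
  choose φ hφ using h.vertexTransitive v
  have hmax (x : V) : Maximal (IsNearBarrier G) (φ x • M) := maximal_isNearBarrier_smul _ hM
  have hmem (x : V) : x ∈ isolatedVerts G (φ x • M) := by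
    rw [isolatedVerts_smul]
    simpa only [show φ x • v = x from hφ x] using smul_mem_smul_finset (a := φ x) hv
  refine ⟨fun x => φ x • M, fun x => ⟨φ x, rfl⟩, fun ψ x => ?_, hmax, hmem⟩
  refine eq_of_mem_isolatedVerts h (hmax _) (maximal_isNearBarrier_smul ψ (hmax x)) (hmem _) ?_
  rw [isolatedVerts_smul]
  exact smul_mem_smul_finset (hmem x)

theorem isBlockMap_isolatedVerts (h : IsAdmissible G k) {S : V → Finset V}
    (hequiv : ∀ (φ : G ≃g G) x, S (φ • x) = φ • S x) (hmax : ∀ x, Maximal (IsNearBarrier G) (S x))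
    (hmem : ∀ x, x ∈ isolatedVerts G (S x)) :
    IsBlockMap (G ≃g G) fun x => isolatedVerts G (S x) where
  mem_self := hmem
  eq_of_mem hy := by rw [eq_of_mem_isolatedVerts h (hmax _) (hmax _) (hmem _) hy]
  smul φ x := by rw [hequiv, isolatedVerts_smul]

theorem biUnion_isolatedVerts_eq_of_dvd (h : IsAdmissible G k) {T : Finset V}
    (hT : IsNearBarrier G T) {b : ℕ} (hb : #(isolatedVerts G T) = b) (hpos : 0 < b) (hdvdT : b ∣ #T)
    (hdvd : b ∣ #((isolatedVerts G T).biUnion (G.neighborFinset ·))) :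
    (isolatedVerts G T).biUnion (G.neighborFinset ·) = T := by
  have hsub := biUnion_isolatedVerts_subset G T
  refine eq_of_subset_of_card_le hsub ?_
  obtain ⟨v, hv⟩ := card_pos.1 (hb ▸ hpos)
  have hk : k ≤ #((isolatedVerts G T).biUnion (G.neighborFinset ·)) := by
    rw [← h.regular v, ← card_neighborFinset_eq_degree]
    exact card_le_card (subset_biUnion_of_mem (G.neighborFinset ·) hv)
  have hthree := h.card_isolatedVerts_add_three_le_card_biUnion ⟨v, hv⟩
  have hcard := hT.card_isolatedVerts_add_card_thickComponents h
  have hq := hT.card_thickComponents_le h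
  have hsix := hT.eq_six_of_card_thickComponents_eq_three h
  have hfive := h.five_le
  set t := #((isolatedVerts G T).biUnion (G.neighborFinset ·))
  by_contra! hlt
  obtain ⟨c, hc⟩ := Nat.dvd_sub hdvdT hdvd
  have hle : b ≤ 2 := (Nat.le_of_dvd (by omega) ⟨c, hc⟩).trans (by omega)
  obtain ⟨d, hd⟩ := hdvdT
  interval_cases b <;> omega

theorem exists_nearBarrierSystem (h : IsAdmissible G k) {M : Finset V}
    (hM : Maximal (IsNearBarrier G) M) (hiso : (isolatedVerts G M).Nonempty) :
    ∃ A S b q, NearBarrierSystem G k A S b q := by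
  have : MulAction.IsPretransitive (G ≃g G) V := ⟨h.vertexTransitive⟩
  obtain ⟨S, horbit, hequiv, hmax, hmem⟩ := exists_equivariant_maximal_isNearBarrier h hM hiso
  have hblock := isBlockMap_isolatedVerts h hequiv hmax hmem
  have hcard (x : V) : #(isolatedVerts G (S x)) = #(isolatedVerts G M) := by
    obtain ⟨φ, hφ⟩ := horbit x
    rw [hφ, isolatedVerts_smul, card_smul_finset]
  have hthick (x : V) : #(thickComponents G k (S x)) = #(thickComponents G k M) := by
    obtain ⟨φ, hφ⟩ := horbit x
    rw [hφ, card_thickComponents_smul]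
  have hS {x y : V} (hy : y ∈ isolatedVerts G (S x)) : S y = S x :=
    eq_of_mem_isolatedVerts h (hmax y) (hmax x) (hmem y) hy
  refine ⟨_, S, _, _, h, hblock, hmax, fun _ => rfl, fun x => ?_, hcard, hthick⟩
  refine biUnion_isolatedVerts_eq_of_dvd h (hmax x).prop (hcard x) (card_pos.2 hiso)
    (hblock.dvd_card_of_equivariant hequiv (fun y z hz => hS hz) hcard x)
    (hblock.dvd_card_of_equivariant (F := fun x => (isolatedVerts G (S x)).biUnion _)
      (fun φ y => ?_) (fun y z hz => by simp only [hS hz]) hcard x)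
  simp only [hequiv, isolatedVerts_smul, biUnion_neighborFinset_smul]

end NearBarrierSystems

namespace NearBarrierSystem

section Basic

variable {V : Type*} [Fintype V] [DecidableEq V] {G : SimpleGraph V} [DecidableRel G.Adj] {k : ℕ}
  {A S : V → Finset V} {b q : ℕ} {u v w x y : V}

theorem mem_iff (h : NearBarrierSystem G k A S b q) : w ∈ S x ↔ ∃ y ∈ A x, G.Adj y w := by
  simp only [← h.biUnion_neighborFinset x, mem_biUnion, mem_neighborFinset]

theorem eq_of_mem (h : NearBarrierSystem G k A S b q) (hy : y ∈ A x) : S y = S x := by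
  rw [← h.biUnion_neighborFinset, h.isBlockMap.eq_of_mem hy, h.biUnion_neighborFinset]

theorem neighborFinset_subset (h : NearBarrierSystem G k A S b q) (hy : y ∈ A x) :
    G.neighborFinset y ⊆ S x :=
  h.biUnion_neighborFinset x ▸ subset_biUnion_of_mem (G.neighborFinset ·) hy

theorem mem_of_adj (h : NearBarrierSystem G k A S b q) (hxw : G.Adj x w) : w ∈ S x :=
  h.mem_iff.2 ⟨x, h.isBlockMap.mem_self x, hxw⟩

theorem notMem_of_mem_block (h : NearBarrierSystem G k A S b q) (hy : y ∈ A x) : y ∉ S x := by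
  rw [← h.isolatedVerts_eq] at hy
  exact (mem_isolatedVerts.1 hy).1

theorem block_pos (h : NearBarrierSystem G k A S b q) (x : V) : 0 < b :=
  h.card_block x ▸ card_pos.2 ⟨x, h.isBlockMap.mem_self x⟩

theorem card_eq (h : NearBarrierSystem G k A S b q) (x : V) : #(S x) = b + q + 2 := by
  rw [← (h.maximal x).prop.card_isolatedVerts_add_card_thickComponents h.toIsAdmissible,
    h.isolatedVerts_eq, h.card_block, h.card_thickComponents]

theorem ne_of_notMem_block (h : NearBarrierSystem G k A S b q) (hy : y ∉ A x) : S x ≠ S y := by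
  rintro heq
  rw [← h.isolatedVerts_eq, heq, h.isolatedVerts_eq] at hy
  exact hy (h.isBlockMap.mem_self y)

theorem card_inter_le_two (h : NearBarrierSystem G k A S b q) (hy : y ∉ A x) :
    #(S x ∩ S y) ≤ 2 :=
  FactorCritical.card_inter_le_two h.toIsAdmissible (h.maximal x) (h.maximal y)
    (h.ne_of_notMem_block hy)

theorem card_neighborFinset_inter_le_two (h : NearBarrierSystem G k A S b q) (hu : u ∉ A v) :
    #(G.neighborFinset u ∩ S v) ≤ 2 := by
  refine (card_le_card ?_).trans (h.card_inter_le_two hu)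
  rw [inter_comm]
  exact inter_subset_inter_left (h.neighborFinset_subset (h.isBlockMap.mem_self u))

theorem two_mul_le_card_common_add (h : NearBarrierSystem G k A S b q) (hu : u ∈ A v) :
    2 * k ≤ #(G.neighborFinset u ∩ G.neighborFinset v) + (b + q + 2) := by
  have hunion : G.neighborFinset u ∪ G.neighborFinset v ⊆ S v :=
    union_subset (h.neighborFinset_subset hu)
      (h.neighborFinset_subset (h.isBlockMap.mem_self v))
  have hcard := card_le_card hunion
  have hsum := card_union_add_card_inter (G.neighborFinset u) (G.neighborFinset v)
  simp only [card_neighborFinset_eq_degree, h.regular.degree_eq] at hsum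
  rw [h.card_eq] at hcard
  omega

theorem smul (h : NearBarrierSystem G k A S b q) (φ : G ≃g G) (x : V) : S (φ • x) = φ • S x := by
  rw [← h.biUnion_neighborFinset, h.isBlockMap.smul, biUnion_neighborFinset_smul,
    h.biUnion_neighborFinset]

/-- Double counting: `w` lies in `S x` for exactly `b + q + 2` vertices `x`, which are those in
the blocks of the neighbours of `w`. -/
theorem card_image_neighborFinset_mul (h : NearBarrierSystem G k A S b q) (w : V) :
    #((G.neighborFinset w).image A) * b = b + q + 2 := by
  have : MulAction.IsPretransitive (G ≃g G) V := ⟨h.vertexTransitive⟩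
  have himage : (G.neighborFinset w).image A = ({x | w ∈ S x} : Finset V).image A := by
    ext B
    simp only [mem_image, mem_neighborFinset, mem_filter_univ]
    constructor
    · rintro ⟨x, hwx, rfl⟩
      exact ⟨x, h.mem_of_adj hwx.symm, rfl⟩
    · rintro ⟨x, hw, rfl⟩
      obtain ⟨y, hy, hyw⟩ := h.mem_iff.1 hw
      exact ⟨y, hyw.symm, h.isBlockMap.eq_of_mem hy⟩
  rw [himage, h.isBlockMap.card_image_mul (fun x hx y hy => ?_) h.card_block,
    card_filter_mem_eq_card h.smul w w, h.card_eq]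
  rw [mem_filter_univ] at hx ⊢
  rwa [h.eq_of_mem hy]

theorem degree_le (h : NearBarrierSystem G k A S b q) (v : V) : k ≤ b + q + 2 := by
  rw [← h.card_eq v, ← h.regular v, ← card_neighborFinset_eq_degree]
  exact card_le_card (h.neighborFinset_subset (h.isBlockMap.mem_self v))

theorem le_three (h : NearBarrierSystem G k A S b q) (v : V) : q ≤ 3 :=
  h.card_thickComponents v ▸ (h.maximal v).prop.card_thickComponents_le h.toIsAdmissible

theorem degree_eq_six (h : NearBarrierSystem G k A S b q) (v : V) (hq : q = 3) : k = 6 :=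
  (h.maximal v).prop.eq_six_of_card_thickComponents_eq_three h.toIsAdmissible
    ((h.card_thickComponents v).trans hq)

theorem one_le (h : NearBarrierSystem G k A S b q) (v : V) : 1 ≤ q := by
  have := h.toIsAdmissible.card_isolatedVerts_add_three_le (S := S v)
    ⟨v, h.isolatedVerts_eq v ▸ h.isBlockMap.mem_self v⟩
  rw [h.isolatedVerts_eq, h.card_block, h.card_eq] at this
  omega

theorem block_cases (h : NearBarrierSystem G k A S b q) (v : V) :
    (b = 1 ∨ b = 2 ∨ b = q + 2) ∧ (b = 3 ∨ 2 ≤ q) ∧ (b = 2 → q = 2) := by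
  have hdvd : b ∣ q + 2 := by
    have := Dvd.intro_left _ (h.card_image_neighborFinset_mul v)
    rwa [add_assoc, Nat.dvd_add_right (dvd_refl b)] at this
  have hle := Nat.le_of_dvd (by omega) hdvd
  obtain ⟨c, hc⟩ := hdvd
  have := h.le_three v
  have := h.one_le v
  have := h.degree_le v
  have := h.five_le
  have := h.block_pos v
  have : b ≤ 5 := by omega
  interval_cases b <;> omega

end Basic

section BlocksOfThree

variable {V : Type*} [Fintype V] [DecidableEq V] {G : SimpleGraph V} [DecidableRel G.Adj] {k : ℕ}
  {A S : V → Finset V} {v w : V}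

theorem image_neighborFinset_eq_of_mem_block (h : NearBarrierSystem G k A S 3 1) (hw : w ∈ A v) :
    (G.neighborFinset w).image A = (G.neighborFinset v).image A := by
  set common := G.neighborFinset w ∩ G.neighborFinset v
  have hcard (x : V) : #((G.neighborFinset x).image A) = 2 := by
    have := h.card_image_neighborFinset_mul x
    omega
  have htwo : 2 ≤ #(common.image A) := by
    by_contra! hlt
    have hfour : 2 * k ≤ #common + 6 := h.two_mul_le_card_common_add hw
    obtain ⟨x, hx⟩ : common.Nonempty := card_pos.1 (by have := h.five_le; omega)
    have hsub : common ⊆ A x := fun y hy => by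
      rw [card_le_one.1 (Nat.le_of_lt_succ hlt) _ (mem_image_of_mem A hx) _ (mem_image_of_mem A hy)]
      exact h.isBlockMap.mem_self y
    have := card_le_card hsub
    rw [h.card_block] at this
    have := h.five_le
    omega
  rw [← eq_of_subset_of_card_le (image_subset_image (inter_subset_left : common ⊆ _))
    ((hcard w).trans_le htwo)]
  exact eq_of_subset_of_card_le (image_subset_image (inter_subset_right : common ⊆ _))
    ((hcard v).trans_le htwo)

theorem not_three_one (v : V) : ¬ NearBarrierSystem G k A S 3 1 := fun h => by
  have hcard : 1 < #((G.neighborFinset v).image A) := by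
    have := h.card_image_neighborFinset_mul v
    omega
  obtain ⟨_, hP, _, hQ, hne⟩ := one_lt_card.1 hcard
  obtain ⟨x, -, rfl⟩ := mem_image.1 hP
  obtain ⟨y, -, rfl⟩ := mem_image.1 hQ
  have hsub {z : V} (hz : A z ∈ (G.neighborFinset v).image A) : A v ⊆ S z := fun w hw => by
    rw [← h.image_neighborFinset_eq_of_mem_block hw] at hz
    obtain ⟨z', hz', heq⟩ := mem_image.1 hz
    exact h.mem_iff.2 ⟨z', heq ▸ h.isBlockMap.mem_self z', ((G.mem_neighborFinset ..).1 hz').symm⟩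
  have hle := (card_le_card (subset_inter (hsub hP) (hsub hQ))).trans
    (h.card_inter_le_two fun hyx => hne (h.isBlockMap.eq_of_mem hyx).symm)
  rw [h.card_block] at hle
  omega

end BlocksOfThree

end NearBarrierSystem

section Components

variable {V : Type*} [Fintype V] [DecidableEq V] {G : SimpleGraph V} {S T C : Finset V}

theorem componentsMeeting_subset_singleton (hC : C ∈ components G S) (hT : T ⊆ C ∪ S) :
    componentsMeeting G S T ⊆ {C} := fun D hD => by
  obtain ⟨hD, hDT⟩ := mem_filter.1 hD
  obtain ⟨w, hwD, hwT⟩ := not_disjoint_iff.1 hDT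
  exact mem_singleton.2 <| component_eq_of_mem hD hC hwD <|
    (mem_union.1 (hT hwT)).resolve_right (notMem_of_mem_component hD hwD)

theorem neighborFinset_inter_subset_of_mem_component [DecidableRel G.Adj]
    (hC : C ∈ components G S) {x y : V} (hx : x ∈ C) (hyC : y ∉ C) (hyS : y ∉ S) :
    G.neighborFinset x ∩ G.neighborFinset y ⊆ S := fun w hw => by
  rw [mem_inter, mem_neighborFinset, mem_neighborFinset] at hw
  exact (mem_or_mem_of_adj hC hx hw.1).resolve_left fun hwC =>
    (mem_or_mem_of_adj hC hwC hw.2.symm).elim hyC hyS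

end Components

namespace NearBarrierSystem

section SmallestComponents

variable {V : Type*} [Fintype V] [DecidableEq V] {G : SimpleGraph V} [DecidableRel G.Adj] {k : ℕ}
  {A S : V → Finset V} {b q : ℕ} {u v w : V} {C X : Finset V}

theorem notMem_block_of_mem_component (h : NearBarrierSystem G k A S b q)
    (hC : C ∈ components G (S v)) (hcard : 2 ≤ #C) (hu : u ∈ C) : u ∉ A v := fun huA => by
  rw [← h.isolatedVerts_eq, mem_isolatedVerts_iff_singleton_mem] at huA
  rw [component_eq_of_mem hC huA hu (mem_singleton_self u), card_singleton] at hcard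
  omega

theorem le_card_neighborFinset_inter_component (h : NearBarrierSystem G k A S b q)
    (hC : C ∈ components G (S v)) (hcard : 2 ≤ #C) (hu : u ∈ C) :
    k ≤ #(G.neighborFinset u ∩ C) + 2 := by
  have hsub : G.neighborFinset u ⊆ (G.neighborFinset u ∩ C) ∪ (G.neighborFinset u ∩ S v) := by
    rw [← inter_union_distrib_left]
    exact fun w hw => mem_inter.2
      ⟨hw, mem_union.2 (mem_or_mem_of_adj hC hu ((G.mem_neighborFinset ..).1 hw))⟩
  have hle := (card_le_card hsub).trans (card_union_le _ _)
  rw [card_neighborFinset_eq_degree, h.regular u] at hle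
  have := h.card_neighborFinset_inter_le_two (h.notMem_block_of_mem_component hC hcard hu)
  omega

theorem neighborFinset_inter_subset_erase (u : V) (X : Finset V) :
    G.neighborFinset u ∩ X ⊆ X.erase u := fun w hw => by
  rw [mem_inter, mem_neighborFinset] at hw
  exact mem_erase.2 ⟨hw.1.ne', hw.2⟩

theorem odd_card_component (h : NearBarrierSystem G k A S b q) (hC : C ∈ components G (S v)) :
    Odd #C :=
  (h.maximal v).prop.odd_card h.toIsAdmissible hC

theorem five_le_card_component (h : NearBarrierSystem G k A S b q)
    (hC : C ∈ components G (S v)) (hcard : 2 ≤ #C) : 5 ≤ #C := by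
  obtain ⟨u, hu⟩ := nonempty_of_mem_components hC
  have hle := h.le_card_neighborFinset_inter_component hC hcard hu
  have herase := card_le_card (neighborFinset_inter_subset_erase (G := G) u C)
  rw [card_erase_of_mem hu] at herase
  have := h.five_le
  obtain ⟨m, hm⟩ := h.odd_card_component hC
  omega

theorem subset_union_of_block_subset (h : NearBarrierSystem G k A S b q)
    (hC : C ∈ components G X) (hA : A u ⊆ C) : S u ⊆ C ∪ X := fun w hw => by
  obtain ⟨y, hy, hyw⟩ := h.mem_iff.1 hw
  exact mem_union.2 (mem_or_mem_of_adj hC (hA hy) hyw)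

variable (G) in
/-- `C` is smallest among the nontrivial components of all the graphs `G - S x`, and it is a
component of `G - S v`. -/
structure IsSmallestComponent (S : V → Finset V) (v : V) (C : Finset V) : Prop where
  mem_components : C ∈ components G (S v)
  two_le_card : 2 ≤ #C
  card_le : ∀ x, ∀ D ∈ components G (S x), 2 ≤ #D → #C ≤ #D

theorem exists_isSmallestComponent (h : NearBarrierSystem G k A S b q) (x : V) :
    ∃ v C, IsSmallestComponent G S v C := by
  obtain ⟨D, hD⟩ : (thickComponents G k (S x)).Nonempty :=
    card_pos.1 (by rw [h.card_thickComponents]; exact h.one_le x)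
  obtain ⟨hD, hcard, -⟩ := mem_filter.1 hD
  obtain ⟨⟨v, C⟩, hC, hmin⟩ := Set.exists_min_image
    {p : V × Finset V | p.2 ∈ components G (S p.1) ∧ 2 ≤ #p.2} (fun p => #p.2) (Set.toFinite _)
    ⟨(x, D), hD, hcard⟩
  exact ⟨v, C, hC.1, hC.2, fun y E hE hE2 => hmin (y, E) ⟨hE, hE2⟩⟩

theorem disjoint_block_of_block_subset (h : NearBarrierSystem G k A S b q)
    (hC : C ∈ components G (S v)) (hcard : 2 ≤ #C) (hA : A u ⊆ C) : Disjoint (A v) (S u) :=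
  disjoint_left.2 fun _ hw hwS =>
    (mem_union.1 (h.subset_union_of_block_subset hC hA hwS)).elim
      (fun hwC => h.notMem_block_of_mem_component hC hcard hwC hw) (h.notMem_of_mem_block hw)

theorem block_subset_component_of_card_inter_lt_two (h : NearBarrierSystem G k A S b q)
    (hb : b = 1 ∨ b + q + 4 ≤ 2 * k) (hdisj : Disjoint (A v) (S u)) (hlt : #(S v ∩ S u) < 2)
    (hX : X ∈ components G (S u)) (hv : v ∈ X) : A v ⊆ X := fun w hw => by
  obtain rfl | hwv := eq_or_ne w v
  · exact hv
  have hb1 : b ≠ 1 := fun hb1 => hwv <|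
    card_le_one.1 ((h.card_block v).trans hb1).le w hw v (h.isBlockMap.mem_self v)
  by_contra hwX
  have hcommon := h.two_mul_le_card_common_add hw
  have hsub : G.neighborFinset w ∩ G.neighborFinset v ⊆ S v ∩ S u :=
    subset_inter (inter_subset_left.trans (h.neighborFinset_subset hw)) <| by
      rw [inter_comm]
      exact neighborFinset_inter_subset_of_mem_component hX hv hwX (disjoint_left.1 hdisj hw)
  have := card_le_card hsub
  omega

theorem card_componentsMeeting_le_one (h : NearBarrierSystem G k A S b q)
    (hb : b = 1 ∨ b + q + 4 ≤ 2 * k) (hC : C ∈ components G (S v)) (hcard : 2 ≤ #C) (hu : u ∈ C)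
    (hA : A u ⊆ C) : #(componentsMeeting G (S u) (S v)) ≤ 1 := by
  have huv := h.notMem_block_of_mem_component hC hcard hu
  obtain heq | hlt := (h.card_inter_le_two huv).eq_or_lt
  · rw [← card_componentsMeeting_comm h.toIsAdmissible (h.maximal v) (h.maximal u) heq]
    exact card_le_card
      (componentsMeeting_subset_singleton hC (h.subset_union_of_block_subset hC hA))
  · have hdisj := h.disjoint_block_of_block_subset hC hcard hA
    obtain ⟨K, hK, hvK⟩ := exists_mem_component (G := G)
      (disjoint_left.1 hdisj (h.isBlockMap.mem_self v))
    have hAK := h.block_subset_component_of_card_inter_lt_two hb hdisj hlt hK hvK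
    exact card_le_card
      (componentsMeeting_subset_singleton hK (h.subset_union_of_block_subset hK hAK))

/-- Otherwise a nontrivial component of `G - S u` would avoid `S v`, and being no smaller than `C`
it would be cut off by the at most two vertices of `S v ∩ S u`. -/
theorem IsSmallestComponent.not_block_subset (hC : IsSmallestComponent G S v C)
    (h : NearBarrierSystem G k A S b q) (hq : 2 ≤ q) (hb : b = 1 ∨ b + q + 4 ≤ 2 * k)
    (hu : u ∈ C) : ¬ A u ⊆ C := fun hA => by
  have hmeet := h.card_componentsMeeting_le_one hb hC.mem_components hC.two_le_card hu hA
  obtain ⟨K, hKthick, hKmeet⟩ := exists_mem_notMem_of_card_lt_card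
    (hmeet.trans_lt (hq.trans_eq (h.card_thickComponents u).symm))
  obtain ⟨hK, hK2, -⟩ := mem_filter.1 hKthick
  have hKS : Disjoint K (S v) := not_not.1 fun hK' => hKmeet (mem_filter.2 ⟨hK, hK'⟩)
  have huK : u ∉ K := fun huK =>
    h.notMem_block_of_mem_component hK hK2 huK (h.isBlockMap.mem_self u)
  obtain ⟨x, hx⟩ := nonempty_of_mem_components hK
  obtain ⟨D, hD, hxD⟩ := exists_mem_component (G := G) (disjoint_left.1 hKS hx)
  have hKD := component_subset_of_disjoint hD hK hKS hxD hx
  have hDC : D ≠ C := by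
    rintro rfl
    exact huK (eq_of_subset_of_card_le hKD (hC.card_le u K hK hK2) ▸ hu)
  have hsep : 2 * k + 2 ≤ 3 * #(S v ∩ S u) := by
    refine two_mul_add_two_le_three_mul_card_separator h.connected h.vertexTransitive h.regular
      (X := K) ⟨x, hx⟩ (fun y hy z hyz => ?_) fun huniv => ?_
    · rw [mem_union, mem_inter]
      refine (mem_or_mem_of_adj hK hy hyz).imp_right fun hzu => ⟨?_, hzu⟩
      refine (mem_or_mem_of_adj hD (hKD hy) hyz).elim (fun hzD => ?_) id
      exact (mem_union.1 (h.subset_union_of_block_subset hC.mem_components hA hzu)).resolve_left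
        fun hzC => hDC (component_eq_of_mem hD hC.mem_components hzD hzC)
    · exact (mem_union.1 (huniv ▸ mem_univ u)).elim huK fun hu' =>
        notMem_of_mem_component hC.mem_components hu (mem_inter.1 hu').1
  have := h.card_inter_le_two (h.notMem_block_of_mem_component hC.mem_components hC.two_le_card hu)
  have := h.five_le
  omega

theorem not_one_of_two_le (hq : 2 ≤ q) (v : V) : ¬ NearBarrierSystem G k A S 1 q := fun h => by
  obtain ⟨v, C, hC⟩ := h.exists_isSmallestComponent v
  obtain ⟨u, hu⟩ := nonempty_of_mem_components hC.mem_components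
  refine hC.not_block_subset h hq (Or.inl rfl) hu fun w hw => ?_
  rwa [card_le_one.1 (h.card_block u).le w hw u (h.isBlockMap.mem_self u)]

end SmallestComponents

end NearBarrierSystem

namespace NearBarrierSystem

section BlocksOfTwo

variable {V : Type*} [Fintype V] [DecidableEq V] {G : SimpleGraph V} [DecidableRel G.Adj] {k : ℕ}
  {A S : V → Finset V} {b q : ℕ} {u v p : V} {C : Finset V}

theorem IsSmallestComponent.exists_mem_block_mem_of_two (hC : IsSmallestComponent G S v C)
    (h : NearBarrierSystem G k A S 2 2) (hu : u ∈ C) : ∃ p ∈ A u, p ∈ S v := by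
  have hfive := h.five_le
  obtain ⟨p, hp, hpC⟩ := not_subset.1 (hC.not_block_subset h le_rfl (Or.inr (by omega)) hu)
  refine ⟨p, hp, by_contra fun hpS => ?_⟩
  have hsub : G.neighborFinset p ∩ G.neighborFinset u ⊆ G.neighborFinset u ∩ S v := by
    rw [inter_comm]
    exact subset_inter inter_subset_left
      (neighborFinset_inter_subset_of_mem_component hC.mem_components hu hpC hpS)
  have := card_le_card hsub
  have := h.two_mul_le_card_common_add hp
  have := h.card_neighborFinset_inter_le_two
    (h.notMem_block_of_mem_component hC.mem_components hC.two_le_card hu)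
  omega

theorem two_mul_le_card_neighborFinset_inter_add (h : NearBarrierSystem G k A S 2 2)
    (hC : C ∈ components G (S v)) (hcard : 2 ≤ #C) (hu : u ∈ C) (hp : p ∈ A u) :
    2 * k ≤ #(G.neighborFinset p ∩ C) + 8 := by
  have hsub : G.neighborFinset p ∩ G.neighborFinset u ⊆
      (G.neighborFinset p ∩ C) ∪ (G.neighborFinset u ∩ S v) := fun w hw => by
    obtain ⟨hwp, hwu⟩ := mem_inter.1 hw
    exact mem_union.2 <| (mem_or_mem_of_adj hC hu ((G.mem_neighborFinset ..).1 hwu)).imp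
      (fun hwC => mem_inter.2 ⟨hwp, hwC⟩) fun hwS => mem_inter.2 ⟨hwu, hwS⟩
  have := (card_le_card hsub).trans (card_union_le _ _)
  have := h.two_mul_le_card_common_add hp
  have := h.card_neighborFinset_inter_le_two (h.notMem_block_of_mem_component hC hcard hu)
  omega

theorem injOn_of_mem_block_of_mem (h : NearBarrierSystem G k A S 2 2)
    (hC : C ∈ components G (S v)) {p : V → V} (hpA : ∀ u ∈ C, p u ∈ A u)
    (hpS : ∀ u ∈ C, p u ∈ S v) : Set.InjOn p C := fun x hx y hy hxy => by
  have hne {u : V} (hu : u ∈ C) : u ≠ p x := fun hup =>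
    notMem_of_mem_component hC hu (hup ▸ hpS x hx)
  have hyA : y ∈ A x := by
    rw [← h.isBlockMap.eq_of_mem (hpA x hx), hxy, h.isBlockMap.eq_of_mem (hpA y hy)]
    exact h.isBlockMap.mem_self y
  have herase : #((A x).erase (p x)) = 1 := by
    rw [card_erase_of_mem (hpA x hx), h.card_block]
  exact card_le_one.1 herase.le _ (mem_erase.2 ⟨hne hx, h.isBlockMap.mem_self x⟩) _
    (mem_erase.2 ⟨hne hy, hyA⟩)

theorem cutSize_component_le (h : NearBarrierSystem G k A S b q) (hC : C ∈ components G (S v))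
    (hcard : 2 ≤ #C) : cutSize G C ≤ #C * 2 := by
  rw [cutSize_of_mem_components hC, card_interedges_eq_sum]
  exact sum_le_card_nsmul _ _ _ fun x hx =>
    h.card_neighborFinset_inter_le_two (h.notMem_block_of_mem_component hC hcard hx)

/-- Every vertex of a smallest component `C` has its block partner in `S v`. Hence `#C = 5`, and
counting the edges between the partners and `C` gives `5 * (2 * k - 8) ≤ cutSize G C ≤ 10`,
which forces `k = 5` and an even cut around an odd set. -/
theorem not_two_two (v : V) : ¬ NearBarrierSystem G k A S 2 2 := fun h => by
  obtain ⟨v, C, hC⟩ := h.exists_isSmallestComponent v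
  choose! p hpA hpS using fun u hu => hC.exists_mem_block_mem_of_two h (u := u) hu
  obtain ⟨hC, hcard, -⟩ := hC
  have hinj := h.injOn_of_mem_block_of_mem hC hpA hpS
  have hsub : C.image p ⊆ S v := image_subset_iff.2 hpS
  have hodd := h.odd_card_component hC
  have hfive : #C = 5 := by
    have hle := card_le_card hsub
    rw [card_image_of_injOn hinj, h.card_eq] at hle
    have := h.five_le_card_component hC hcard
    obtain ⟨m, hm⟩ := hodd
    omega
  have hlower : 5 * (2 * k - 8) ≤ cutSize G C := by
    calc 5 * (2 * k - 8) ≤ ∑ u ∈ C, #(G.neighborFinset (p u) ∩ C) := by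
          rw [← hfive]
          refine card_nsmul_le_sum _ _ _ fun u hu => ?_
          have := h.two_mul_le_card_neighborFinset_inter_add hC hcard hu (hpA u hu)
          omega
      _ = #(G.interedges (C.image p) C) := by
          rw [card_interedges_eq_sum, sum_image hinj]
      _ ≤ cutSize G C := by
          rw [cutSize_of_mem_components hC, card_interedges_comm]
          exact card_interedges_mono Subset.rfl hsub
  have hupper := h.cutSize_component_le hC hcard
  have hparity := cutSize_mod_two h.regular hodd
  have := h.five_le
  omega

end BlocksOfTwo

end NearBarrierSystem

namespace NearBarrierSystem

section FullBlocks

variable {V : Type*} [Fintype V] [DecidableEq V] {G : SimpleGraph V} [DecidableRel G.Adj] {k : ℕ}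
  {A S : V → Finset V} {b q m : ℕ} {u v w x y z : V} {C : Finset V}

theorem exists_block_subset_neighborFinset_of_subset (h : NearBarrierSystem G k A S b q)
    (hz : A z ⊆ G.neighborFinset w) (y : V) : ∃ x, A x ⊆ G.neighborFinset y := by
  obtain ⟨φ, rfl⟩ := h.vertexTransitive w y
  refine ⟨φ • z, ?_⟩
  rw [h.isBlockMap.smul, ← RelIso.smul_def, neighborFinset_smul]
  exact smul_finset_subset_smul_finset hz

theorem block_eq_or_card_eq_one (h : NearBarrierSystem G k A S b q) (hk : k = b + 1)
    (hz : A z ⊆ G.neighborFinset w) (hy : G.Adj w y) :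
    A y = A z ∨ #(G.neighborFinset w ∩ A y) = 1 := by
  by_cases hyz : y ∈ A z
  · exact Or.inl (h.isBlockMap.eq_of_mem hyz)
  · right
    have hcard := card_le_card (union_subset (inter_subset_left (s₂ := A y)) hz)
    rw [card_union_of_disjoint ((h.isBlockMap.disjoint_of_notMem hyz).symm.mono_left
      inter_subset_right), card_neighborFinset_eq_degree, h.regular w, h.card_block] at hcard
    have : 0 < #(G.neighborFinset w ∩ A y) := card_pos.2
      ⟨y, mem_inter.2 ⟨(G.mem_neighborFinset ..).2 hy, h.isBlockMap.mem_self y⟩⟩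
    omega

theorem card_le_one_of_forall_inter_eq_of_forall_union_eq (h : NearBarrierSystem G k A S b q)
    (hk : k = b + 1) (hfull : ∀ w, ∃ z, A z ⊆ G.neighborFinset w) {I O J T : Finset V}
    (hI : I ⊆ A u) (hO : O ⊆ A u) (hO' : O.Nonempty) (hJ : #J < k)
    (hinter : ∀ x ∈ I, ∀ y ∈ O, G.neighborFinset x ∩ G.neighborFinset y = J)
    (hunion : ∀ x ∈ I, ∀ y ∈ O, G.neighborFinset x ∪ G.neighborFinset y = T) : #I ≤ 1 := by
  obtain rfl | ⟨x, hx⟩ := I.eq_empty_or_nonempty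
  · simp only [card_empty, zero_le]
  obtain ⟨p, hp⟩ := hO'
  obtain ⟨y, hy, hyJ⟩ := exists_mem_notMem_of_card_lt_card
    (hJ.trans_eq ((h.regular x).symm.trans (G.card_neighborFinset_eq_degree x).symm))
  have hyp : y ∉ G.neighborFinset p := fun hyp => hyJ (hinter x hx p hp ▸ mem_inter.2 ⟨hy, hyp⟩)
  have hadj : I ⊆ G.neighborFinset y := fun i hi => by
    have hyT : y ∈ G.neighborFinset i ∪ G.neighborFinset p := by
      rw [hunion i hi p hp, ← hunion x hx p hp]
      exact mem_union_left _ hy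
    have := (mem_union.1 hyT).resolve_right hyp
    rwa [mem_neighborFinset, adj_comm, ← mem_neighborFinset] at this
  obtain ⟨z, hz⟩ := hfull y
  have hxu := h.isBlockMap.eq_of_mem (hI hx)
  obtain hxz | hone := h.block_eq_or_card_eq_one hk hz ((G.mem_neighborFinset ..).1 (hadj hx))
  · have := hz (hxz ▸ hxu ▸ hO hp)
    rw [mem_neighborFinset, adj_comm, ← mem_neighborFinset] at this
    exact absurd this hyp
  · exact (card_le_card (subset_inter hadj (hxu ▸ hI))).trans hone.le

theorem exists_block_subset_neighborFinset_of_card_inter_eq_one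
    (h : NearBarrierSystem G k A S b q) (hk : b + 1 ≤ k)
    (hpair : k ≤ #(A x ∩ S v) + #(A y ∩ S v))
    (hsub : G.neighborFinset w ⊆ (A x ∩ S v) ∪ (A y ∩ S v)) (hone : #(A x ∩ S v) = 1) :
    k = b + 1 ∧ A y ⊆ G.neighborFinset w := by
  have hle : #(A y ∩ S v) ≤ b := (card_le_card inter_subset_left).trans (h.card_block y).le
  have hy : A y ∩ S v = A y :=
    eq_of_subset_of_card_le inter_subset_left (by rw [h.card_block]; omega)
  refine ⟨by omega, ?_⟩
  rw [eq_of_subset_of_card_le hsub ((card_union_le _ _).trans ?_), hy]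
  · exact subset_union_right
  · rw [card_neighborFinset_eq_degree, h.regular w]
    omega

end FullBlocks

section LargeBlocks

variable {V : Type*} [Fintype V] [DecidableEq V] {G : SimpleGraph V} [DecidableRel G.Adj] {k : ℕ}
  {A S : V → Finset V} {b q m : ℕ} {u v w x y z : V} {C : Finset V}

theorem add_three_le_degree (h : NearBarrierSystem G k A S (q + 2) q) (v : V) (hq : 2 ≤ q) :
    q + 3 ≤ k := by
  have := h.five_le
  have := h.le_three v
  have := h.degree_eq_six v
  omega

theorem neighborFinset_inter_eq_of_notMem (h : NearBarrierSystem G k A S (q + 2) q) (hq : 2 ≤ q)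
    (hC : C ∈ components G (S v)) (hcard : 2 ≤ #C) (hx : x ∈ C) (hy : y ∈ A x) (hyC : y ∉ C)
    (hyS : y ∉ S v) : G.neighborFinset x ∩ G.neighborFinset y = S v ∩ S x ∧
      k = q + 3 ∧ #(S v ∩ S x) = 2 := by
  have hsub : G.neighborFinset x ∩ G.neighborFinset y ⊆ S v ∩ S x :=
    subset_inter (neighborFinset_inter_subset_of_mem_component hC hx hyC hyS)
      (inter_subset_left.trans (h.neighborFinset_subset (h.isBlockMap.mem_self x)))
  have hle := h.card_inter_le_two (h.notMem_block_of_mem_component hC hcard hx)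
  have hcommon := h.two_mul_le_card_common_add hy
  rw [inter_comm] at hcommon
  have := card_le_card hsub
  have := h.add_three_le_degree v hq
  exact ⟨eq_of_subset_of_card_le hsub (by omega), by omega, by omega⟩

theorem neighborFinset_union_eq_of_card_inter_eq_two (h : NearBarrierSystem G k A S (q + 2) q)
    (hk : k = q + 3) (hy : y ∈ A x) (htwo : #(G.neighborFinset x ∩ G.neighborFinset y) = 2) :
    G.neighborFinset x ∪ G.neighborFinset y = S x := by
  refine eq_of_subset_of_card_le (union_subset
    (h.neighborFinset_subset (h.isBlockMap.mem_self x)) (h.neighborFinset_subset hy)) ?_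
  have := card_union_add_card_inter (G.neighborFinset x) (G.neighborFinset y)
  simp only [card_neighborFinset_eq_degree, h.regular.degree_eq] at this
  rw [h.card_eq]
  omega

theorem IsSmallestComponent.exists_mem_block_mem (hC : IsSmallestComponent G S v C)
    (h : NearBarrierSystem G k A S (q + 2) q) (hq : 2 ≤ q) (hu : u ∈ C) :
    ∃ x ∈ A u, x ∈ S v := by
  by_contra! hS
  have hle := h.add_three_le_degree v hq
  obtain ⟨p, hp, hpC⟩ := not_subset.1 (hC.not_block_subset h hq (Or.inr (by omega)) hu)
  obtain ⟨hC, hcard, -⟩ := hC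
  have hmem {x y : V} (hx : x ∈ A u ∩ C) (hy : y ∈ A u \ C) :=
    h.neighborFinset_inter_eq_of_notMem (y := y) hq hC hcard (mem_inter.1 hx).2
      ((h.isBlockMap.eq_of_mem (mem_inter.1 hx).1).symm ▸ (mem_sdiff.1 hy).1) (mem_sdiff.1 hy).2
      (hS y (mem_sdiff.1 hy).1)
  have huI : u ∈ A u ∩ C := mem_inter.2 ⟨h.isBlockMap.mem_self u, hu⟩
  have hpO : p ∈ A u \ C := mem_sdiff.2 ⟨hp, hpC⟩
  obtain ⟨-, hk, htwo⟩ := hmem huI hpO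
  have hinter : ∀ x ∈ A u ∩ C, ∀ y ∈ A u \ C,
      G.neighborFinset x ∩ G.neighborFinset y = S v ∩ S u := fun x hx y hy => by
    rw [(hmem hx hy).1, h.eq_of_mem (mem_inter.1 hx).1]
  have hunion : ∀ x ∈ A u ∩ C, ∀ y ∈ A u \ C,
      G.neighborFinset x ∪ G.neighborFinset y = S u := fun x hx y hy => by
    have hxu := (mem_inter.1 hx).1
    rw [← h.eq_of_mem hxu, h.neighborFinset_union_eq_of_card_inter_eq_two hk
      ((h.isBlockMap.eq_of_mem hxu).symm ▸ (mem_sdiff.1 hy).1) (hinter x hx y hy ▸ htwo)]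
  obtain ⟨j, hj⟩ : (S v ∩ S u).Nonempty := card_pos.1 (by omega)
  have hfull : A u ⊆ G.neighborFinset j := fun x hx => by
    rw [mem_neighborFinset, adj_comm, ← mem_neighborFinset]
    by_cases hxC : x ∈ C
    · rw [← hinter x (mem_inter.2 ⟨hx, hxC⟩) p hpO] at hj
      exact (mem_inter.1 hj).1
    · rw [← hinter u huI x (mem_sdiff.2 ⟨hx, hxC⟩)] at hj
      exact (mem_inter.1 hj).2
  have hfull' := h.exists_block_subset_neighborFinset_of_subset hfull
  have hin := h.card_le_one_of_forall_inter_eq_of_forall_union_eq hk hfull' inter_subset_left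
    sdiff_subset ⟨p, hpO⟩ (by omega) hinter hunion
  have hout := h.card_le_one_of_forall_inter_eq_of_forall_union_eq hk hfull' sdiff_subset
    inter_subset_left ⟨u, huI⟩ (by omega)
    (fun x hx y hy => (inter_comm _ _).trans (hinter y hy x hx))
    fun x hx y hy => (union_comm _ _).trans (hunion y hy x hx)
  have := card_inter_add_card_sdiff (A u) C
  rw [h.card_block] at this
  omega

theorem card_neighborFinset_inter_le_two_of_adj (h : NearBarrierSystem G k A S b q)
    (huw : G.Adj u w) : #(G.neighborFinset u ∩ G.neighborFinset w) ≤ 2 :=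
  (card_le_card (inter_subset_inter (h.neighborFinset_subset (h.isBlockMap.mem_self u))
    (h.neighborFinset_subset (h.isBlockMap.mem_self w)))).trans
    (h.card_inter_le_two fun hw => h.notMem_of_mem_block hw (h.mem_of_adj huw))

theorem two_mul_le_card_component_add_six (h : NearBarrierSystem G k A S b q)
    (hC : C ∈ components G (S v)) (hcard : 2 ≤ #C) : 2 * k ≤ #C + 6 := by
  obtain ⟨u, hu⟩ := nonempty_of_mem_components hC
  have hCu := h.le_card_neighborFinset_inter_component hC hcard hu
  obtain ⟨w, hw⟩ : (G.neighborFinset u ∩ C).Nonempty :=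
    card_pos.1 (by have := h.five_le; omega)
  obtain ⟨huw, hwC⟩ := mem_inter.1 hw
  have hCw := h.le_card_neighborFinset_inter_component hC hcard hwC
  have hunion := card_le_card (union_subset (inter_subset_right (s₁ := G.neighborFinset u))
    (inter_subset_right (s₁ := G.neighborFinset w) (s₂ := C)))
  have hinter := (card_le_card (inter_subset_inter (inter_subset_left (s₂ := C))
    (inter_subset_left (s₂ := C)))).trans
    (h.card_neighborFinset_inter_le_two_of_adj ((G.mem_neighborFinset u w).1 huw))
  have := card_union_add_card_inter (G.neighborFinset u ∩ C) (G.neighborFinset w ∩ C)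
  omega

theorem card_add_card_le_card_image_mul (h : NearBarrierSystem G k A S b q)
    (hdisj : Disjoint C (S v)) (hmeet : ∀ u ∈ C, ∃ x ∈ A u, x ∈ S v) :
    #C + #(S v) ≤ #((S v).image A) * b := by
  rw [← card_union_of_disjoint hdisj]
  refine (card_le_card (t := ((S v).image A).biUnion id) fun u hu => mem_biUnion.2 ?_).trans
    (card_biUnion_le_card_mul _ _ _ (forall_mem_image.2 fun x _ => (h.card_block x).le))
  obtain huC | huS := mem_union.1 hu
  · obtain ⟨x, hx, hxS⟩ := hmeet u huC
    exact ⟨A x, mem_image_of_mem A hxS, h.isBlockMap.mem_comm.1 hx⟩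
  · exact ⟨A u, mem_image_of_mem A huS, h.isBlockMap.mem_self u⟩

theorem exists_four_le_card_image (h : NearBarrierSystem G k A S (q + 2) q) (hq : 2 ≤ q) (x : V) :
    ∃ v, 4 ≤ #((S v).image A) := by
  obtain ⟨v, C, hC⟩ := h.exists_isSmallestComponent x
  refine ⟨v, ?_⟩
  have hmul := h.card_add_card_le_card_image_mul
    (disjoint_left.2 fun u hu => notMem_of_mem_component hC.mem_components hu)
    fun u hu => hC.exists_mem_block_mem h hq hu
  rw [h.card_eq] at hmul
  have := h.five_le_card_component hC.mem_components hC.two_le_card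
  have := h.two_mul_le_card_component_add_six hC.mem_components hC.two_le_card
  have := h.degree_eq_six v
  obtain rfl | rfl : q = 2 ∨ q = 3 := by have := h.le_three v; omega
  all_goals omega

theorem exists_neighborFinset_subset_union (h : NearBarrierSystem G k A S (q + 2) q)
    (hw : w ∈ A v) (hx : G.Adj w x) : ∃ y ∈ S v, A x ≠ A y ∧
      G.neighborFinset w ⊆ (A x ∩ S v) ∪ (A y ∩ S v) ∧
      k ≤ #(A x ∩ S v) + #(A y ∩ S v) := by
  have hcard : #((G.neighborFinset w).image A) = 2 := by
    refine Nat.eq_of_mul_eq_mul_right (h.block_pos w) ?_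
    rw [h.card_image_neighborFinset_mul]
    omega
  have hxmem : A x ∈ (G.neighborFinset w).image A :=
    mem_image_of_mem A ((G.mem_neighborFinset ..).2 hx)
  obtain ⟨P, hP, hne⟩ := exists_mem_ne (by omega : 1 < #((G.neighborFinset w).image A)) (A x)
  obtain ⟨y, hy, rfl⟩ := mem_image.1 hP
  have himage : ({A x, A y} : Finset (Finset V)) = (G.neighborFinset w).image A :=
    eq_of_subset_of_card_le (insert_subset hxmem (singleton_subset_iff.2 hP))
      (by rw [hcard, card_pair hne.symm])
  have hsub : G.neighborFinset w ⊆ (A x ∩ S v) ∪ (A y ∩ S v) := fun t ht => by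
    rw [← union_inter_distrib_right, mem_inter, mem_union]
    refine ⟨?_, h.neighborFinset_subset hw ht⟩
    have hAt := mem_image_of_mem A ht
    rw [← himage, mem_insert, mem_singleton] at hAt
    obtain heq | heq := hAt
    · exact Or.inl (heq ▸ h.isBlockMap.mem_self t)
    · exact Or.inr (heq ▸ h.isBlockMap.mem_self t)
  refine ⟨y, h.neighborFinset_subset hw hy, hne.symm, hsub, ?_⟩
  rw [← h.regular w, ← card_neighborFinset_eq_degree]
  exact (card_le_card hsub).trans (card_union_le _ _)

theorem card_inter_add_card_inter_add_le (h : NearBarrierSystem G k A S b q)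
    (hfour : 4 ≤ #((S v).image A)) (hm : ∀ x ∈ S v, m ≤ #(A x ∩ S v)) (hx : x ∈ S v) (hy : y ∈ S v)
    (hxy : A x ≠ A y) : #(A x ∩ S v) + #(A y ∩ S v) + 2 * m ≤ #(S v) := by
  have hpair : ({A x, A y} : Finset (Finset V)) ⊆ (S v).image A :=
    insert_subset (mem_image_of_mem A hx) (singleton_subset_iff.2 (mem_image_of_mem A hy))
  have hrest : 2 * m ≤ ∑ P ∈ (S v).image A \ {A x, A y}, #(P ∩ S v) := by
    refine le_trans ?_ (card_nsmul_le_sum _ _ m fun P hP => ?_)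
    · rw [card_sdiff_of_subset hpair, card_pair hxy, smul_eq_mul]
      exact Nat.mul_le_mul_right m (by omega)
    · obtain ⟨t, ht, rfl⟩ := mem_image.1 (mem_sdiff.1 hP).1
      exact hm t ht
  rw [← h.isBlockMap.sum_card_inter_image (S v), ← sum_sdiff hpair, sum_pair hxy]
  omega

/-- The eight or ten vertices of `S v` are spread over four blocks `A x`, the two meeting the
neighbourhood of a given vertex of `A v` covering at least `k` of them. Some block meets `S v` in
one vertex, or the intersections have sizes `4, 2, 2, 2`. In the latter case all vertices of `A v`
see the four vertices of the largest one. -/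
theorem exists_block_subset_neighborFinset_of_four_le (h : NearBarrierSystem G k A S (q + 2) q)
    (hq : 2 ≤ q) (hfour : 4 ≤ #((S v).image A)) :
    k = q + 3 ∧ ∃ w z, A z ⊆ G.neighborFinset w := by
  have hk := h.add_three_le_degree v hq
  have hneighbor {w : V} (hw : w ∈ A v) {x : V} (hx : G.Adj w x) : x ∈ S v :=
    h.neighborFinset_subset hw ((G.mem_neighborFinset ..).2 hx)
  obtain ⟨x, hx, hmin⟩ := exists_min_image (S v) (fun x => #(A x ∩ S v))
    (card_pos.1 (by rw [h.card_eq]; omega))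
  have hpos : 0 < #(A x ∩ S v) := card_pos.2 ⟨x, mem_inter.2 ⟨h.isBlockMap.mem_self x, hx⟩⟩
  have hpair {y z : V} (hy : y ∈ S v) (hz : z ∈ S v) (hyz : A y ≠ A z) :=
    h.card_inter_add_card_inter_add_le hfour hmin hy hz hyz
  simp only [h.card_eq] at hpair
  obtain ⟨w, hw, hwx⟩ := h.mem_iff.1 hx
  obtain ⟨y, hy, hxy, hsub, hle⟩ := h.exists_neighborFinset_subset_union hw hwx
  have hxy' := hpair hx hy hxy
  by_cases hone : #(A x ∩ S v) = 1
  · obtain ⟨hk, hfull⟩ :=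
      h.exists_block_subset_neighborFinset_of_card_inter_eq_one hk hle hsub hone
    exact ⟨hk, w, y, hfull⟩
  have hq3 : q = 3 := by have := h.le_three v; omega
  have hk6 := h.degree_eq_six v hq3
  refine ⟨by omega, y, v, fun w' hw' => ?_⟩
  rw [mem_neighborFinset, adj_comm, ← mem_neighborFinset]
  obtain ⟨x', hx'⟩ := (G.degree_pos_iff_exists_adj w').1 (by rw [h.regular w']; omega)
  obtain ⟨y', hy', hxy'', hsub', hle'⟩ := h.exists_neighborFinset_subset_union hw' hx'
  have hx'S := hneighbor hw' hx'
  have heq : G.neighborFinset w' = (A x' ∩ S v) ∪ (A y' ∩ S v) := by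
    refine eq_of_subset_of_card_le hsub' ((card_union_le _ _).trans ?_)
    rw [card_neighborFinset_eq_degree, h.regular w']
    have := hpair hx'S hy' hxy''
    omega
  have hyy : y ∈ A y ∩ S v := mem_inter.2 ⟨h.isBlockMap.mem_self y, hy⟩
  rw [heq, mem_union]
  by_cases hx'y : A x' = A y
  · exact Or.inl (hx'y ▸ hyy)
  by_cases hy'y : A y' = A y
  · exact Or.inr (hy'y ▸ hyy)
  have := hpair hx'S hy hx'y
  have := hpair hy' hy hy'y
  omega

end LargeBlocks

end NearBarrierSystem

section BlockPairings

variable {V : Type*} [Fintype V] {G : SimpleGraph V} [DecidableRel G.Adj] {k : ℕ}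
  {A S : V → Finset V} {z : V → V} {b q : ℕ} {u v w x y : V} {C : Finset V}

variable (G) in
/-- The blocks `A u` are matched in pairs `{A u, A (z u)}`, the two blocks of a pair being
completely joined to each other. -/
structure IsBlockPairing (A : V → Finset V) (z : V → V) : Prop where
  block_subset : ∀ u, A (z u) ⊆ G.neighborFinset u
  eq_of_mem : ∀ u, ∀ w ∈ A u, A (z w) = A (z u)
  eq_of_mem_partner : ∀ u, ∀ w ∈ A (z u), A (z w) = A u

theorem IsBlockPairing.adj_of_mem (hp : IsBlockPairing G A z) (hy : y ∈ A (z x)) : G.Adj x y :=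
  (G.mem_neighborFinset ..).1 (hp.block_subset x hy)

variable [DecidableEq V]

/-- The union of a block and its partner in a block pairing. -/
def pairedBlock (A : V → Finset V) (z : V → V) (u : V) : Finset V := A u ∪ A (z u)

namespace NearBarrierSystem

theorem eq_of_block_subset_neighborFinset (h : NearBarrierSystem G k A S b q) (hk : k < 2 * b)
    (hx : A x ⊆ G.neighborFinset w) (hy : A y ⊆ G.neighborFinset w) : A x = A y := by
  by_contra hne
  have hdisj := h.isBlockMap.disjoint_of_notMem fun hxy => hne (h.isBlockMap.eq_of_mem hxy)
  have := card_le_card (union_subset hy hx)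
  rw [card_union_of_disjoint hdisj, h.card_block, h.card_block, card_neighborFinset_eq_degree,
    h.regular w] at this
  omega

theorem card_image_le_two_of_block_subset (h : NearBarrierSystem G k A S b q) (hb : b = q + 2)
    (hx : A x ⊆ S v) (hy : A y ⊆ S v) (hne : A x ≠ A y) : #((S v).image A) ≤ 2 := by
  have hdisj := h.isBlockMap.disjoint_of_notMem fun hyx => hne (h.isBlockMap.eq_of_mem hyx).symm
  have heq : A x ∪ A y = S v := eq_of_subset_of_card_le (union_subset hx hy) (by
    rw [card_union_of_disjoint hdisj, h.card_block, h.card_block, h.card_eq]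
    omega)
  refine (card_le_card (image_subset_iff.2 fun t ht => ?_)).trans
    (card_le_two (a := A x) (b := A y))
  rw [← heq, mem_union] at ht
  rw [mem_insert, mem_singleton]
  exact ht.imp h.isBlockMap.eq_of_mem h.isBlockMap.eq_of_mem

theorem isBlockPairing (h : NearBarrierSystem G k A S (q + 2) q) (hk : k = q + 3)
    (hv : 4 ≤ #((S v).image A)) (hz : ∀ w, A (z w) ⊆ G.neighborFinset w) :
    IsBlockPairing G A z := by
  have hunique {x w : V} (hx : A x ⊆ G.neighborFinset w) : A x = A (z w) :=
    h.eq_of_block_subset_neighborFinset (by have := h.one_le v; omega) hx (hz w)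
  have hconst_v {w : V} (hw : w ∈ A v) : A (z w) = A (z v) := by
    by_contra hne
    have := h.card_image_le_two_of_block_subset rfl ((hz w).trans (h.neighborFinset_subset hw))
      ((hz v).trans (h.neighborFinset_subset (h.isBlockMap.mem_self v))) hne
    omega
  have hsmul (φ : G ≃g G) (x : V) : A (z (φ • x)) = φ • A (z x) := by
    rw [← h.isBlockMap.smul]
    refine (hunique ?_).symm
    rw [h.isBlockMap.smul, neighborFinset_smul]
    exact smul_finset_subset_smul_finset (hz x)
  have hconst (u w : V) (hw : w ∈ A u) : A (z w) = A (z u) := by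
    obtain ⟨φ, rfl⟩ := h.vertexTransitive v u
    rw [← RelIso.smul_def, h.isBlockMap.smul, ← inv_smul_mem_iff] at hw
    rw [← smul_inv_smul φ w, hsmul φ (φ⁻¹ • w), ← RelIso.smul_def, hsmul φ v, hconst_v hw]
  refine ⟨hz, hconst, fun u y hy => (hunique fun w hw => ?_).symm⟩
  rw [← hconst u w hw] at hy
  rw [mem_neighborFinset, adj_comm, ← mem_neighborFinset]
  exact hz w hy

theorem exists_isBlockPairing (h : NearBarrierSystem G k A S (q + 2) q) (hq : 2 ≤ q) (v : V) :
    k = q + 3 ∧ ∃ z, IsBlockPairing G A z := by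
  obtain ⟨v, hv⟩ := h.exists_four_le_card_image hq v
  obtain ⟨hk, w, z, hz⟩ := h.exists_block_subset_neighborFinset_of_four_le hq hv
  choose z hz using h.exists_block_subset_neighborFinset_of_subset hz
  exact ⟨hk, z, h.isBlockPairing hk hv hz⟩

end NearBarrierSystem

namespace IsBlockPairing

theorem mem_pairedBlock_self (h : NearBarrierSystem G k A S b q) (u : V) :
    u ∈ pairedBlock A z u :=
  mem_union_left _ (h.isBlockMap.mem_self u)

theorem pairedBlock_eq_of_mem (hp : IsBlockPairing G A z) (h : NearBarrierSystem G k A S b q)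
    (hy : y ∈ pairedBlock A z u) : pairedBlock A z y = pairedBlock A z u := by
  rw [pairedBlock, pairedBlock]
  obtain hy | hy := mem_union.1 hy
  · rw [h.isBlockMap.eq_of_mem hy, hp.eq_of_mem u y hy]
  · rw [h.isBlockMap.eq_of_mem hy, hp.eq_of_mem_partner u y hy, union_comm]

theorem mem_pairedBlock_comm (hp : IsBlockPairing G A z) (h : NearBarrierSystem G k A S b q) :
    y ∈ pairedBlock A z x ↔ x ∈ pairedBlock A z y :=
  ⟨fun hy => hp.pairedBlock_eq_of_mem h hy ▸ mem_pairedBlock_self h x,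
    fun hx => hp.pairedBlock_eq_of_mem h hx ▸ mem_pairedBlock_self h y⟩

theorem card_pairedBlock (hp : IsBlockPairing G A z) (h : NearBarrierSystem G k A S b q) (u : V) :
    #(pairedBlock A z u) = 2 * b := by
  have hnotMem : z u ∉ A u := fun hzu => h.notMem_of_mem_block hzu
    (h.mem_of_adj (hp.adj_of_mem (h.isBlockMap.mem_self (z u))))
  rw [pairedBlock, card_union_of_disjoint (h.isBlockMap.disjoint_of_notMem hnotMem), h.card_block,
    h.card_block, two_mul]

theorem cutSize_pairedBlock_le (hp : IsBlockPairing G A z) (h : NearBarrierSystem G k A S b q)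
    (hk : k = b + 1) (u : V) : cutSize G (pairedBlock A z u) ≤ 2 * b := by
  have hcut := cutSize_add_card_interedges_self h.regular (pairedBlock A z u)
  have hself : 2 * b * b ≤ #(G.interedges (pairedBlock A z u) (pairedBlock A z u)) := by
    rw [card_interedges_eq_sum, ← hp.card_pairedBlock h u]
    refine card_nsmul_le_sum _ _ _ fun x hx => ?_
    rw [← h.card_block (z x), ← hp.pairedBlock_eq_of_mem h hx]
    exact card_le_card (subset_inter (hp.block_subset x) subset_union_right)
  rw [hp.card_pairedBlock h, hk] at hcut
  linarith

theorem eq_of_adj_of_notMem_pairedBlock (hp : IsBlockPairing G A z)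
    (h : NearBarrierSystem G k A S b q) (hk : k = b + 1) (hx : G.Adj w x) (hy : G.Adj w y)
    (hxD : x ∉ A (z w)) (hyD : y ∉ A (z w)) : x = y := by
  have hcard := card_sdiff_add_card_eq_card (hp.block_subset w)
  rw [h.card_block, card_neighborFinset_eq_degree, h.regular w, hk, add_comm,
    add_right_inj] at hcard
  simp only [← mem_neighborFinset] at hx hy
  exact card_le_one.1 hcard.le _ (mem_sdiff.2 ⟨hx, hxD⟩) _ (mem_sdiff.2 ⟨hy, hyD⟩)

theorem mem_pairedBlock_or_mem_pairedBlock_of_adj (hp : IsBlockPairing G A z)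
    (h : NearBarrierSystem G k A S b q) (hk : k = b + 1) (hx : x ∈ S v)
    (hxv : x ∉ pairedBlock A z v) (hxy : G.Adj x y) :
    y ∈ pairedBlock A z x ∨ y ∈ pairedBlock A z v := by
  obtain ⟨w, hw, hwx⟩ := h.mem_iff.1 hx
  by_cases hy : y ∈ A (z x)
  · exact Or.inl (mem_union_right _ hy)
  · have hwz : w ∉ A (z x) := fun hwz => hxv <| by
      rw [← hp.pairedBlock_eq_of_mem h (u := v) (mem_union_left _ hw),
        hp.pairedBlock_eq_of_mem h (u := x) (mem_union_right _ hwz)]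
      exact mem_pairedBlock_self h x
    rw [hp.eq_of_adj_of_notMem_pairedBlock h hk hxy hwx.symm hy hwz]
    exact Or.inr (mem_union_left _ hw)

theorem notMem_pairedBlock_of_mem_component (hp : IsBlockPairing G A z)
    (h : NearBarrierSystem G k A S b q) (hC : C ∈ components G (S v)) (hcard : 2 ≤ #C)
    (hu : u ∈ C) : u ∉ pairedBlock A z v := fun huv =>
  (mem_union.1 huv).elim (h.notMem_block_of_mem_component hC hcard hu) fun huz =>
    notMem_of_mem_component hC hu (h.mem_of_adj (hp.adj_of_mem huz))

theorem pairedBlock_subset_union (hp : IsBlockPairing G A z)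
    (h : NearBarrierSystem G k A S b q) (hb : 3 ≤ b) (hC : C ∈ components G (S v)) (hcard : 2 ≤ #C)
    (hu : u ∈ C) : pairedBlock A z u ⊆ C ∪ S v := fun x hx => by
  rw [mem_union]
  obtain hx | hx := mem_union.1 hx
  · obtain ⟨t, ht, htS⟩ : ∃ t ∈ A (z u), t ∉ S v := by
      by_contra! hsub
      have := card_le_card (subset_inter (hp.block_subset u) hsub)
      rw [h.card_block] at this
      have := h.card_neighborFinset_inter_le_two (h.notMem_block_of_mem_component hC hcard hu)
      omega
    have htC := (mem_or_mem_of_adj hC hu (hp.adj_of_mem ht)).resolve_right htS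
    rw [← hp.eq_of_mem u x hx] at ht
    exact mem_or_mem_of_adj hC htC (hp.adj_of_mem ht).symm
  · exact mem_or_mem_of_adj hC hu (hp.adj_of_mem hx)

theorem mem_biUnion_pairedBlock_or_mem_of_adj (hp : IsBlockPairing G A z)
    (h : NearBarrierSystem G k A S b q) (hb : 3 ≤ b) (hk : k = b + 1)
    (hC : C ∈ components G (S v)) (hcard : 2 ≤ #C) (hx : x ∈ C.biUnion (pairedBlock A z))
    (hxy : G.Adj x y) : y ∈ C.biUnion (pairedBlock A z) ∨ y ∈ pairedBlock A z v := by
  obtain ⟨c, hc, hxc⟩ := mem_biUnion.1 hx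
  have hself {u : V} (hu : u ∈ C) : u ∈ C.biUnion (pairedBlock A z) :=
    mem_biUnion.2 ⟨u, hu, mem_pairedBlock_self h u⟩
  by_cases hyv : y ∈ pairedBlock A z v
  · exact Or.inr hyv
  left
  obtain hxC | hxS := mem_union.1 (hp.pairedBlock_subset_union h hb hC hcard hc hxc)
  · obtain hyC | hyS := mem_or_mem_of_adj hC hxC hxy
    · exact hself hyC
    · refine mem_biUnion.2 ⟨x, hxC, (hp.mem_pairedBlock_comm h).1 ?_⟩
      exact (hp.mem_pairedBlock_or_mem_pairedBlock_of_adj h hk hyS hyv hxy.symm).resolve_right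
        (hp.notMem_pairedBlock_of_mem_component h hC hcard hxC)
  · have hxv : x ∉ pairedBlock A z v := fun hxv =>
      hp.notMem_pairedBlock_of_mem_component h hC hcard hc <| by
        rw [← hp.pairedBlock_eq_of_mem h hxv, hp.pairedBlock_eq_of_mem h hxc]
        exact mem_pairedBlock_self h c
    have hyx := (hp.mem_pairedBlock_or_mem_pairedBlock_of_adj h hk hxS hxv hxy).resolve_right hyv
    exact mem_biUnion.2 ⟨c, hc, hp.pairedBlock_eq_of_mem h hxc ▸ hyx⟩

theorem disjoint_biUnion_pairedBlock (hp : IsBlockPairing G A z)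
    (h : NearBarrierSystem G k A S b q) (hC : C ∈ components G (S v)) (hcard : 2 ≤ #C) :
    Disjoint (C.biUnion (pairedBlock A z)) (pairedBlock A z v) := by
  refine disjoint_left.2 fun x hx hxv => ?_
  obtain ⟨c, hc, hxc⟩ := mem_biUnion.1 hx
  refine hp.notMem_pairedBlock_of_mem_component h hC hcard hc ?_
  rw [← hp.pairedBlock_eq_of_mem h hxv, hp.pairedBlock_eq_of_mem h hxc]
  exact mem_pairedBlock_self h c

theorem le_card_interedges_pairedBlock (hp : IsBlockPairing G A z)
    (h : NearBarrierSystem G k A S b q) (hb : 3 ≤ b) (hk : k = b + 1)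
    (hC : C ∈ components G (S v)) (hcard : 2 ≤ #C) :
    k ≤ #(G.interedges (C.biUnion (pairedBlock A z)) (pairedBlock A z v)) := by
  have hdisj := hp.disjoint_biUnion_pairedBlock h hC hcard
  obtain ⟨u, hu⟩ := nonempty_of_mem_components hC
  have hcut : k ≤ cutSize G (C.biUnion (pairedBlock A z)) :=
    le_cutSize_of_connected h.connected h.vertexTransitive h.regular (by omega)
      ⟨u, mem_biUnion.2 ⟨u, hu, mem_pairedBlock_self h u⟩⟩ fun huniv =>
        disjoint_right.1 hdisj (mem_pairedBlock_self h v) (huniv ▸ mem_univ v)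
  refine hcut.trans ?_
  rw [cutSize, card_interedges_eq_sum, card_interedges_eq_sum]
  refine sum_le_sum fun x hx => card_le_card fun y hy => ?_
  rw [mem_inter, mem_neighborFinset, mem_compl] at hy
  exact mem_inter.2 ⟨(G.mem_neighborFinset ..).2 hy.1,
    (hp.mem_biUnion_pairedBlock_or_mem_of_adj h hb hk hC hcard hx hy.1).resolve_left hy.2⟩

theorem disjoint_biUnion_pairedBlock_biUnion_pairedBlock (hp : IsBlockPairing G A z)
    (h : NearBarrierSystem G k A S b q) (hb : 3 ≤ b) {D : Finset V} (hC : C ∈ components G (S v))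
    (hCcard : 2 ≤ #C) (hD : D ∈ components G (S v)) (hne : C ≠ D) :
    Disjoint (C.biUnion (pairedBlock A z)) (D.biUnion (pairedBlock A z)) := by
  refine disjoint_left.2 fun x hxC hxD => hne ?_
  obtain ⟨c, hc, hxc⟩ := mem_biUnion.1 hxC
  obtain ⟨d, hd, hxd⟩ := mem_biUnion.1 hxD
  have hdc : d ∈ pairedBlock A z c := by
    rw [← hp.pairedBlock_eq_of_mem h hxc, hp.pairedBlock_eq_of_mem h hxd]
    exact mem_pairedBlock_self h d
  exact component_eq_of_mem hC hD ((mem_union.1 (hp.pairedBlock_subset_union h hb hC hCcard hc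
    hdc)).resolve_right (notMem_of_mem_component hD hd)) hd

end IsBlockPairing

namespace NearBarrierSystem

/-- Two nontrivial components of `G - S v`, enlarged to unions of paired blocks, send at least `k`
edges each to the paired block of `v`, which has only `2 * (k - 1)` outgoing edges. -/
theorem not_add_two (hq : 2 ≤ q) (v : V) : ¬ NearBarrierSystem G k A S (q + 2) q := fun h => by
  obtain ⟨hk, z, hp⟩ := h.exists_isBlockPairing hq v
  obtain ⟨C, hC, D, hD, hne⟩ := one_lt_card.1 (hq.trans_eq (h.card_thickComponents v).symm)
  obtain ⟨hC, hCcard, -⟩ := mem_filter.1 hC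
  obtain ⟨hD, hDcard, -⟩ := mem_filter.1 hD
  have hb : 3 ≤ q + 2 := by omega
  have hdisj := hp.disjoint_biUnion_pairedBlock_biUnion_pairedBlock h hb hC hCcard hD hne
  have hCedges := hp.le_card_interedges_pairedBlock h hb hk hC hCcard
  have hDedges := hp.le_card_interedges_pairedBlock h hb hk hD hDcard
  have hupper : #(G.interedges (C.biUnion (pairedBlock A z) ∪ D.biUnion (pairedBlock A z))
      (pairedBlock A z v)) ≤ cutSize G (pairedBlock A z v) := by
    rw [cutSize, card_interedges_comm (pairedBlock A z v)]
    refine card_interedges_mono (subset_compl_iff_disjoint_right.2 ?_) Subset.rfl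
    exact disjoint_union_left.2 ⟨hp.disjoint_biUnion_pairedBlock h hC hCcard,
      hp.disjoint_biUnion_pairedBlock h hD hDcard⟩
  rw [card_interedges_union_left hdisj] at hupper
  have := hp.cutSize_pairedBlock_le h hk v
  omega

end NearBarrierSystem

end BlockPairings

theorem isolatedVerts_eq_empty_of_maximal {V : Type*} [Fintype V] [DecidableEq V]
    {G : SimpleGraph V} [DecidableRel G.Adj] {k : ℕ} (h : IsAdmissible G k) {M : Finset V}
    (hM : Maximal (IsNearBarrier G) M) : isolatedVerts G M = ∅ := by
  by_contra! hne
  obtain ⟨A, S, b, q, hsys⟩ := exists_nearBarrierSystem h hM hne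
  obtain ⟨v, -⟩ := hne
  obtain ⟨hcases, hq, htwo⟩ := hsys.block_cases v
  by_cases hq2 : 2 ≤ q
  · obtain rfl | rfl | rfl := hcases
    · exact NearBarrierSystem.not_one_of_two_le hq2 v hsys
    · obtain rfl := htwo rfl
      exact NearBarrierSystem.not_two_two v hsys
    · exact NearBarrierSystem.not_add_two hq2 v hsys
  · obtain rfl := hq.resolve_right hq2
    obtain rfl : q = 1 := by omega
    exact NearBarrierSystem.not_three_one v hsys

section Tutte

variable {V : Type*} [Fintype V] {G : SimpleGraph V} {k : ℕ}

section Embedding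

variable {W : Type*} {H : SimpleGraph W} {S : Finset V}

theorem toFinset_image_supp_mem_components (f : H ↪g G) (hS : ∀ v, v ∈ S ↔ v ∉ Set.range f)
    (c : H.ConnectedComponent) : (Set.toFinite (f '' c.supp)).toFinset ∈ components G S := by
  refine mem_components.2 ⟨⟨?_, ?_, ?_⟩, fun Y ⟨⟨y, hy⟩, hYS⟩ hYc => ?_⟩
  · simpa using c.nonempty_supp
  · simp only [Set.Finite.mem_toFinset, Set.forall_mem_image, hS, not_not]
    exact fun a _ => Set.mem_range_self a
  · simp only [Set.Finite.mem_toFinset, Set.forall_mem_image, hS, not_not]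
    rintro a ha _ hadj ⟨b, rfl⟩
    exact Set.mem_image_of_mem f (c.mem_supp_of_adj_mem_supp ha (f.map_adj_iff.1 hadj))
  · obtain ⟨a, ha, rfl⟩ := (Set.Finite.mem_toFinset _).1 (hYc hy)
    have hreach (b : W) (hb : H.Reachable a b) : f b ∈ Y := by
      obtain ⟨p⟩ := hb
      induction p with
      | nil => exact hy
      | cons hadj _ ih =>
        refine ih (c.mem_supp_of_adj_mem_supp ha hadj) ?_
        exact hYS.mem_of_adj _ hy _ (f.map_adj_iff.2 hadj) fun hb => (hS _).1 hb ⟨_, rfl⟩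
    intro x hx
    obtain ⟨b, hb, rfl⟩ := (Set.Finite.mem_toFinset _).1 hx
    exact hreach b (ConnectedComponent.exact (ha.trans hb.symm))

theorem ncard_oddComponents_le_card (f : H ↪g G) (hS : ∀ v, v ∈ S ↔ v ∉ Set.range f) :
    H.oddComponents.ncard ≤ #(oddComponents G S) := by
  rw [← Set.ncard_coe_finset]
  refine Set.ncard_le_ncard_of_injOn (fun c => (Set.toFinite (f '' c.supp)).toFinset)
    (fun c hc => mem_filter.2 ⟨toFinset_image_supp_mem_components f hS c, ?_⟩)
    (fun c _ d _ hcd => ?_) (Set.toFinite _)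
  · rw [← Set.ncard_eq_toFinset_card, Set.ncard_image_of_injective _ f.injective]
    exact hc
  · exact ConnectedComponent.supp_injective
      (f.injective.image_injective (Set.Finite.toFinset_inj.1 hcd))

end Embedding

theorem ncard_lt_card_oddComponents_of_isTutteViolator {X : Set V} {u : Set ↥Xᶜ}
    (hu : (G.induce Xᶜ).IsTutteViolator u) {S : Finset V}
    (hS : (S : Set V) = X ∪ Subtype.val '' u) : u.ncard < #(oddComponents G S) := by
  let f : ((⊤ : (G.induce Xᶜ).Subgraph).deleteVerts u).coe ↪g G :=
    (Embedding.induce Xᶜ).comp <| Subgraph.topIso.toEmbedding.comp <|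
      (Embedding.induce _).comp (Subgraph.coeDeleteVertsIso u).toEmbedding
  have hf (a) : f a = a.1.1 := rfl
  refine hu.trans_le (ncard_oddComponents_le_card f fun v => ?_)
  rw [← mem_coe, hS]
  simp only [Set.mem_union, Set.mem_image, Subtype.exists, Set.mem_compl_iff, exists_and_right,
    exists_eq_right, Set.mem_range, hf, Subgraph.induce_verts, Subgraph.verts_top, Set.mem_sdiff,
    Set.mem_univ, true_and, exists_prop, not_exists, not_not]
  grind

variable [DecidableRel G.Adj]

theorem IsNearBarrier.card_lt_four (h : IsAdmissible G k) {S : Finset V} (hS : IsNearBarrier G S) :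
    #S < 4 := by
  classical
  by_contra! hcard
  obtain ⟨M, hSM, hM⟩ := exists_maximal_ge_of_wellFoundedGT (IsNearBarrier G) S hS
  have hM4 := hcard.trans (card_le_card hSM)
  exact (hM.prop.isolatedVerts_nonempty h hM4).ne_empty (isolatedVerts_eq_empty_of_maximal h hM)

theorem IsAdmissible.pFactorCritical_four (h : IsAdmissible G k) : PFactorCritical G 4 := by
  classical
  refine fun X hX => tutte.2 fun u hu => ?_
  have hcard : #(X ∪ Subtype.val '' u).toFinset = 4 + u.ncard := by
    rw [← Set.ncard_eq_toFinset_card', Set.ncard_union_eq, hX,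
      Set.ncard_image_of_injective _ Subtype.val_injective]
    rw [Set.disjoint_left]
    rintro x hx ⟨w, -, rfl⟩
    exact w.2 hx
  have hodd := ncard_lt_card_oddComponents_of_isTutteViolator hu (Set.coe_toFinset _)
  have hle := h.card_oddComponents_add_two_le (S := (X ∪ Subtype.val '' u).toFinset) (by omega)
  obtain ⟨m, hm⟩ := even_card_oddComponents_add_card (G := G) h.even_card
    (X ∪ Subtype.val '' u).toFinset
  have hnear : IsNearBarrier G (X ∪ Subtype.val '' u).toFinset := ⟨by omega, by omega⟩
  have := hnear.card_lt_four h
  omega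

theorem lt_degree_of_pFactorCritical {p : ℕ} (h : PFactorCritical G p) (hp : p < Fintype.card V)
    (v : V) : p < G.degree v := by
  classical
  by_contra! hdeg
  obtain ⟨X, hNX, hXv, hX⟩ := exists_subsuperset_card_eq (s := G.neighborFinset v)
    (t := univ.erase v) (n := p) (fun w hw => mem_erase.2 ⟨((G.mem_neighborFinset ..).1 hw).ne',
      mem_univ w⟩) (by rwa [card_neighborFinset_eq_degree])
    (by rw [card_erase_of_mem (mem_univ v), card_univ]; omega)
  obtain ⟨M, hM⟩ := h X (by rw [Set.ncard_coe_finset, hX])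
  have hv : v ∈ (X : Set V)ᶜ := fun hv => ne_of_mem_erase (hXv hv) rfl
  obtain ⟨w, hw, -⟩ := hM.1 (hM.2 ⟨v, hv⟩)
  exact w.2 (mem_coe.2 (hNX ((G.mem_neighborFinset ..).2 hw.adj_sub)))

end Tutte

end FactorCritical

/-- A connected vertex-transitive non-bipartite simple graph of
even order at least 6 with common degree `k` is 4-factor-critical iff `k ≥ 5`. -/
theorem statement0 {V : Type*} [Fintype V] [DecidableEq V]
    (G : SimpleGraph V) [DecidableRel G.Adj] (k : ℕ)
    (hconn : G.Connected) (hvt : VertexTransitive G) (hnb : ¬ G.Colorable 2)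
    (heven : Even (Fintype.card V)) (hcard : 6 ≤ Fintype.card V)
    (hreg : G.IsRegularOfDegree k) :
    PFactorCritical G 4 ↔ 5 ≤ k := by
  have : Nonempty V := hconn.nonempty
  constructor
  · intro hcrit
    rw [← hreg.degree_eq (Classical.arbitrary V)]
    exact FactorCritical.lt_degree_of_pFactorCritical hcrit (by omega) _
  · intro hk
    exact FactorCritical.IsAdmissible.pFactorCritical_four ⟨hconn, hvt, hreg, hk, hnb, heven⟩
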